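/- Let M = {F = 0} be a germ of an irreducible singular real-analytic Levi-flat hypersurface at 0 ∈ ℂ² such that F(z) = Re(Q(z)) + H(z, z̄), where Q is a quasihomogeneous polynomial of type (a,b) with gcd(a,b) = 1 and of quasihomogeneous degree d, having an isolated singularity at 0 ∈ ℂ², and H is a germ of real-analytic function at 0 ∈ ℂ² whose Taylor series contains only monomials z₁^{μ₁} z₂^{μ₂} z̄₁^{ν₁} z̄₂^{ν₂} of weighted degree a(μ₁+ν₁) + b(μ₂+ν₂) strictly greater than d, and which satisfies H(z, z̄) = conj(H(z̄, z)). Then there exist a germ of biholomorphism φ : (ℂ²,0) → (ℂ²,0), finitely many monomials e₁, …, e_s ∈ ℂ[z₁,z₂] of quasihomogeneous degree strictly greater than d whose residue classes in the local algebra A_Q are ℂ-linearly independent, and constants c₁, …, c_s ∈ ℂ, such that φ(M) = {Re(Q(z) + Σ_{j=1}^s c_j e_j(z)) = 0} as germs of sets at 0. -/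

import Mathlib

/-!
# Normal forms of quasihomogeneous Levi-flat hypersurface germs in `ℂ²`

**Complexification.** The real-analytic germ `2F` is the restriction to the real locus
`w = conj z` of a holomorphic germ `Φ(z, w)` on `ℂ² × ℂ²` with leading form `Q(z) + conj Q(w)`
(`exists_FC`); here `conj Q` has the conjugate coefficients (`Qb`). All germs are filtered by
weighted order (`WOrd`).

**Separation of variables modulo high order.** By induction on `N`, some multiple `V Φ` equals
`f(z) + g(w) + E` with `E` of weighted order greater than `d + N` (`claim`). Levi-flatness says
that the complexified Levi form vanishes at the real zeros of `F` (`levi_eq_zero`). Since separated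
terms do not contribute to mixed derivatives, its leading term is `XY Q` applied to the leading form
of `E`, where `XY Q` composes the Hamiltonian derivations of `Q` in `z` and of `conj Q` in `w`
(`tendsto_levi`); hence this leading term vanishes on `Re Q = 0`. The algebraic core
(`split_of_XY`) then shows that the leading form of `E` is `p(z) + q(w) + U (Q(z) + conj Q(w))`, so
that it can be absorbed. On the fibre product `Q(z) = - conj Q(w)`, whose ring of functions is a
tensor product over `ℂ[t]`, `XY Q` becomes a tensor product of `ℂ[t]`-linear maps; its kernel is
found from flatness over `ℂ[t]` and from the fact that the Hamiltonian derivation of `Q` kills only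
polynomials in `Q` (`Iso.ham_ker`, `mem_ker_map`).

**Exact separation.** No convergence argument is needed: the first integral is the holonomy onto a
transversal. After rescaling by a dilation of parameter `t`, the zero set of `Φ` is transverse to a
line through a point `(0, w₀)` with `conj Q(w₀) = 0`, which assigns to `z` a point of the line, and to
`w`, through an auxiliary point near `z₀` with `Q(z₀) = 0`, another one. For points `(z, w)` of the
zero set these two differ by a quantity flat in `t` (`four_point`, from the separations modulo all
orders), hence are equal (`exists_family`). Comparing leading terms (`leads`) and using the
symmetry of `Φ` under conjugation (`symmetrise`) gives a holomorphic `f = Q + higher order` with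
`{F = 0} = {Re f = 0}` (`exists_holo`).

**Normal form of `f`.** Finitely many monomials of weight greater than `d` span, modulo the Jacobian
ideal, all weighted homogeneous polynomials of such weight, and are independent in the local algebra
(`exists_basis`). Weight-raising coordinate changes bring `f` to `Q + Σ c_j e_j` up to any order
(`prenormal`). The remainder lies in `𝔪 J²`, `J` the ideal of the partial derivatives
(`inSq_of_order`), and is removed by solving an implicit equation (`tougeron`).
-/

open Filter Topology

/-- Wirtinger derivative ∂/∂z_j of a (complex-valued) function at `p`:
`(1/2)(∂F/∂x_j − i ∂F/∂y_j)`. -/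
noncomputable def wirtZ {n : ℕ} (F : (Fin n → ℂ) → ℂ) (j : Fin n) (p : Fin n → ℂ) : ℂ :=
  (fderiv ℝ F p (Pi.single j 1) - Complex.I * fderiv ℝ F p (Pi.single j Complex.I)) / 2

/-- Wirtinger derivative ∂/∂z̄_j of a (complex-valued) function at `p`:
`(1/2)(∂F/∂x_j + i ∂F/∂y_j)`. -/
noncomputable def wirtZbar {n : ℕ} (F : (Fin n → ℂ) → ℂ) (j : Fin n) (p : Fin n → ℂ) : ℂ :=
  (fderiv ℝ F p (Pi.single j 1) + Complex.I * fderiv ℝ F p (Pi.single j Complex.I)) / 2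

/-- The germ `M = {F = 0}` at `0` is Levi-flat: for every point `p` of `M* = M \ Sing(M)`
near `0` and every `v` with `Σ_j F_{z_j}(p) v_j = 0` one has
`Σ_{i,j} F_{z_i z̄_j}(p) v_i conj(v_j) = 0`. -/
def LeviFlatGerm {n : ℕ} (F : (Fin n → ℂ) → ℝ) : Prop :=
  ∀ᶠ p in 𝓝 (0 : Fin n → ℂ), F p = 0 → fderiv ℝ F p ≠ 0 →
    ∀ v : Fin n → ℂ,
      (∑ j, wirtZ (fun z => ((F z : ℝ) : ℂ)) j p * v j) = 0 →
      (∑ i, ∑ j, wirtZbar (wirtZ (fun z => ((F z : ℝ) : ℂ)) i) j p * v i * (starRingEnd ℂ) (v j)) = 0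

/-- `F` is irreducible in the ring of germs at `0` of real-valued real-analytic functions:
in any factorization `F = g·h` one of the factors is a unit (i.e. does not vanish at `0`). -/
def IrreducibleRGerm {n : ℕ} (F : (Fin n → ℂ) → ℝ) : Prop :=
  ∀ g h : (Fin n → ℂ) → ℝ, AnalyticAt ℝ g 0 → AnalyticAt ℝ h 0 →
    (∀ᶠ z in 𝓝 (0 : Fin n → ℂ), F z = g z * h z) → g 0 ≠ 0 ∨ h 0 ≠ 0

/-- `φ` is a germ of biholomorphism `(ℂⁿ,0) → (ℂⁿ,0)` with local inverse `ι`. -/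
def IsGermBiholo {n : ℕ} (φ ι : (Fin n → ℂ) → (Fin n → ℂ)) : Prop :=
  AnalyticAt ℂ φ 0 ∧ AnalyticAt ℂ ι 0 ∧ φ 0 = 0 ∧ ι 0 = 0 ∧
  (∀ᶠ z in 𝓝 (0 : Fin n → ℂ), ι (φ z) = z) ∧ (∀ᶠ z in 𝓝 (0 : Fin n → ℂ), φ (ι z) = z)

/-- `φ` is volume-preserving (isochore): the determinant of its complex Jacobian is
identically `1` near `0`. -/
def IsVolumePreserving {n : ℕ} (φ : (Fin n → ℂ) → (Fin n → ℂ)) : Prop :=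
  ∀ᶠ z in 𝓝 (0 : Fin n → ℂ), LinearMap.det ((fderiv ℂ φ z).toLinearMap) = 1

/-- `ψ` is a germ of automorphism of `(ℂ,0)`. -/
def IsGermAuto (ψ : ℂ → ℂ) : Prop :=
  AnalyticAt ℂ ψ 0 ∧ ψ 0 = 0 ∧ deriv ψ 0 ≠ 0

section

open MvPolynomial

set_option linter.unusedSectionVars false

/-! ### Weighted order of holomorphic germs -/

/-- Weighted dilation `(c · p)_i = c ^ wt i * p i`. -/
def sc {ι : Type*} (wt : ι → ℕ) (c : ℂ) (p : ι → ℂ) : ι → ℂ := fun i => c ^ wt i * p i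

/-- `WOrd wt n Φ`: the germ at `0` of `Φ` is holomorphic of weighted order at least `n`, that is,
it belongs to the ideal generated by the weighted homogeneous polynomials of degree `≥ n`. -/
inductive WOrd {ι : Type*} [Fintype ι] (wt : ι → ℕ) (n : ℕ) : ((ι → ℂ) → ℂ) → Prop
  | term (k : ℕ) (P : MvPolynomial ι ℂ) (Ψ : (ι → ℂ) → ℂ) (hP : IsWeightedHomogeneous wt P k)
      (hk : n ≤ k) (hΨ : AnalyticAt ℂ Ψ 0) : WOrd wt n (fun z => eval z P * Ψ z)
  | add (Φ Ψ : (ι → ℂ) → ℂ) (h1 : WOrd wt n Φ) (h2 : WOrd wt n Ψ) :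
      WOrd wt n (fun z => Φ z + Ψ z)
  | congr (Φ Ψ : (ι → ℂ) → ℂ) (h1 : WOrd wt n Φ) (h : ∀ᶠ z in 𝓝 0, Φ z = Ψ z) : WOrd wt n Ψ

/-- The complex partial derivative `∂Φ/∂z_i`. -/
noncomputable def pd {ι : Type*} [Fintype ι] [DecidableEq ι] (i : ι) (Φ : (ι → ℂ) → ℂ)
    (z : ι → ℂ) : ℂ := fderiv ℂ Φ z (Pi.single i 1)

section basics
variable {ι : Type*} [Fintype ι] {wt : ι → ℕ}

theorem analyticAt_eval (P : MvPolynomial ι ℂ) (p : ι → ℂ) :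
    AnalyticAt ℂ (fun z => eval z P) p :=
  AnalyticOnNhd.eval_mvPolynomial P p (Set.mem_univ _)

theorem analyticAt_coord (i : ι) (p : ι → ℂ) : AnalyticAt ℂ (fun z : ι → ℂ => z i) p := by
  simpa using analyticAt_eval (X i : MvPolynomial ι ℂ) p

theorem eval_sc {P : MvPolynomial ι ℂ} {n : ℕ} (hP : IsWeightedHomogeneous wt P n) (c : ℂ)
    (p : ι → ℂ) : eval (sc wt c p) P = c ^ n * eval p P := by
  rw [eval_eq', eval_eq', Finset.mul_sum]
  refine Finset.sum_congr rfl fun m hm => ?_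
  have h := hP (mem_support_iff.1 hm)
  rw [Finsupp.weight_apply, Finsupp.sum_fintype _ _ (by simp)] at h
  have h2 : ∏ i, sc wt c p i ^ m i = c ^ n * ∏ i, p i ^ m i := by
    simp only [sc, mul_pow, Finset.prod_mul_distrib, ← pow_mul]
    rw [Finset.prod_pow_eq_pow_sum, ← h]
    congr 2
    exact Finset.sum_congr rfl fun i _ => by simp [mul_comm]
  rw [h2]; ring

theorem sc_sc (c e : ℂ) (p : ι → ℂ) : sc wt c (sc wt e p) = sc wt (c * e) p := by
  ext i; simp [sc, mul_pow, mul_assoc]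

@[simp] theorem sc_one (p : ι → ℂ) : sc wt 1 p = p := by ext i; simp [sc]

@[simp] theorem sc_zero_right (c : ℂ) : sc wt c 0 = 0 := by ext i; simp [sc]

theorem sc_zero_left (hwt : ∀ i, 0 < wt i) (p : ι → ℂ) : sc wt 0 p = 0 := by
  ext i; simp [sc, (hwt i).ne']

theorem analyticAt_sc (c : ℂ) (p : ι → ℂ) :
    AnalyticAt ℂ (fun x : ℂ × (ι → ℂ) => sc wt x.1 x.2) (c, p) := by
  rw [analyticAt_pi_iff]
  intro i
  exact (analyticAt_fst.pow _).mul ((analyticAt_coord i _).comp analyticAt_snd)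

theorem analyticAt_sc_right (c : ℂ) (p : ι → ℂ) :
    AnalyticAt ℂ (fun x : ι → ℂ => sc wt c x) p := by
  rw [analyticAt_pi_iff]
  intro i
  exact analyticAt_const.mul (analyticAt_coord i _)

theorem continuous_sc : Continuous (fun x : ℂ × (ι → ℂ) => sc wt x.1 x.2) :=
  continuous_iff_continuousAt.2 fun x => (analyticAt_sc x.1 x.2).continuousAt

theorem tendsto_sc (hwt : ∀ i, 0 < wt i) (p : ι → ℂ) :
    Tendsto (fun x : ℂ × (ι → ℂ) => sc wt x.1 x.2) (𝓝 (0, p)) (𝓝 0) := by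
  have := (continuous_sc (wt := wt)).tendsto (0, p)
  simpa [sc_zero_left hwt] using this

/-- First-order Hadamard lemma for analytic germs on a finite-dimensional coordinate space. -/
theorem hadamard [DecidableEq ι] {Φ : (ι → ℂ) → ℂ} (h : AnalyticAt ℂ Φ 0) :
    ∃ Ψ : ι → (ι → ℂ) → ℂ, (∀ i, AnalyticAt ℂ (Ψ i) 0) ∧
      ∀ᶠ z in 𝓝 0, Φ z = Φ 0 + ∑ i, z i * Ψ i z := by
  obtain ⟨p, r, hp⟩ := h
  have hr : 0 < p.shift.radius := by
    rw [FormalMultilinearSeries.radius_shift]; exact hp.r_pos.trans_le hp.r_le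
  have hs := p.shift.hasFPowerSeriesOnBall hr
  refine ⟨fun i z => p.shift.sum z (Pi.single i 1), fun i => ?_, ?_⟩
  · exact ((ContinuousLinearMap.apply ℂ ℂ (Pi.single i 1 : ι → ℂ)).analyticAt _).comp
      (hs.analyticAt : AnalyticAt ℂ p.shift.sum 0)
  · have hb : Metric.eball (0 : ι → ℂ) r ∈ 𝓝 0 := Metric.eball_mem_nhds _ hp.r_pos
    filter_upwards [hb] with z hz
    have h1 := hp.hasSum hz
    rw [zero_add] at h1
    have hz' : z ∈ Metric.eball (0 : ι → ℂ) p.shift.radius := by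
      rw [FormalMultilinearSeries.radius_shift]
      exact Metric.eball_subset_eball hp.r_le hz
    have h2 := hs.hasSum hz'
    rw [zero_add] at h2
    have h3 := h2.mapL (ContinuousLinearMap.apply ℂ ℂ z)
    have h4 : ∀ n, p.shift n (fun _ => z) z = p (n + 1) fun _ => z := by
      intro n
      simp only [FormalMultilinearSeries.shift, ContinuousMultilinearMap.curryRight_apply]
      congr 1
      ext i : 1
      refine Fin.lastCases ?_ (fun j => ?_) i <;> simp
    have h5 : HasSum (fun n => p (n + 1) fun _ => z) (p.shift.sum z z) := by
      simpa [h4] using h3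
    have h6 := (hasSum_nat_add_iff' 1).2 h1
    have h7 : p.shift.sum z z = ∑ i, z i * p.shift.sum z (Pi.single i 1) := by
      conv_lhs => rw [← Finset.univ_sum_single z, map_sum]
      rw [Finset.univ_sum_single z]
      refine Finset.sum_congr rfl fun i _ => ?_
      have : (Pi.single i (z i) : ι → ℂ) = z i • Pi.single i 1 := by
        rw [← Pi.single_smul]; simp
      rw [this, map_smul, smul_eq_mul]
    have h8 := h6.unique h5
    rw [← h7, ← h8]
    have h0 : p 0 (fun _ => z) = Φ 0 := by
      rw [← hp.coeff_zero (fun _ => 0)]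
      congr 1; ext i; exact i.elim0
    simp [h0]

theorem WOrd.analyticAt {n : ℕ} {Φ : (ι → ℂ) → ℂ} (h : WOrd wt n Φ) : AnalyticAt ℂ Φ 0 := by
  induction h with
  | term k P Ψ hP hk hΨ => exact (analyticAt_eval P 0).mul hΨ
  | add Φ Ψ h1 h2 i1 i2 => exact i1.add i2
  | congr Φ Ψ h1 h i1 => exact i1.congr h

theorem WOrd.mono {n m : ℕ} {Φ : (ι → ℂ) → ℂ} (h : WOrd wt n Φ) (hm : m ≤ n) : WOrd wt m Φ := by
  induction h with
  | term k P Ψ hP hk hΨ => exact .term k P Ψ hP (hm.trans hk) hΨ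
  | add Φ Ψ h1 h2 i1 i2 => exact .add _ _ i1 i2
  | congr Φ Ψ h1 h i1 => exact .congr _ _ i1 h

theorem WOrd.congr' {n : ℕ} {Φ Ψ : (ι → ℂ) → ℂ} (h1 : WOrd wt n Φ) (h : ∀ z, Φ z = Ψ z) :
    WOrd wt n Ψ := .congr _ _ h1 (Eventually.of_forall h)

theorem WOrd.poly {n k : ℕ} {P : MvPolynomial ι ℂ} (hP : IsWeightedHomogeneous wt P k)
    (hk : n ≤ k) : WOrd wt n (fun z => eval z P) :=
  (WOrd.term k P (fun _ => 1) hP hk analyticAt_const).congr' (by simp)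

theorem WOrd.zero {n : ℕ} : WOrd wt n (fun _ => 0) :=
  (WOrd.poly (isWeightedHomogeneous_zero ℂ wt n) le_rfl).congr' (by simp)

theorem WOrd.of_analytic {Φ : (ι → ℂ) → ℂ} (h : AnalyticAt ℂ Φ 0) : WOrd wt 0 Φ :=
  (WOrd.term 0 1 Φ (isWeightedHomogeneous_one ℂ wt) le_rfl h).congr' (by simp)

theorem WOrd.mul {n m : ℕ} {Φ Ψ : (ι → ℂ) → ℂ} (h1 : WOrd wt n Φ) (h2 : WOrd wt m Ψ) :
    WOrd wt (n + m) (fun z => Φ z * Ψ z) := by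
  induction h1 with
  | term k P Φ hP hk hΦ =>
    induction h2 with
    | term l R Ψ hR hl hΨ =>
      exact (WOrd.term (k + l) (P * R) (fun z => Φ z * Ψ z) (hP.mul hR) (by lia)
        (hΦ.mul hΨ)).congr' (fun z => by simp only [map_mul]; ring)
    | add A B h1 h2 i1 i2 => exact (WOrd.add _ _ i1 i2).congr' (fun z => by ring)
    | congr A B h1 h i1 =>
      refine .congr _ _ i1 ?_
      filter_upwards [h] with z hz
      rw [hz]
  | add A B h1 h2 i1 i2 => exact (WOrd.add _ _ i1 i2).congr' (fun z => by ring)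
  | congr A B h1 h i1 =>
    refine .congr _ _ i1 ?_
    filter_upwards [h] with z hz
    rw [hz]

theorem WOrd.mul_analytic {n : ℕ} {Φ Ψ : (ι → ℂ) → ℂ} (h1 : WOrd wt n Φ)
    (h2 : AnalyticAt ℂ Ψ 0) : WOrd wt n (fun z => Φ z * Ψ z) :=
  h1.mul (WOrd.of_analytic h2)

theorem WOrd.const_mul {n : ℕ} {Φ : (ι → ℂ) → ℂ} (h1 : WOrd wt n Φ) (c : ℂ) :
    WOrd wt n (fun z => c * Φ z) :=
  (h1.mul_analytic (Ψ := fun _ => c) analyticAt_const).congr' (fun z => by ring)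

theorem WOrd.neg {n : ℕ} {Φ : (ι → ℂ) → ℂ} (h1 : WOrd wt n Φ) : WOrd wt n (fun z => - Φ z) :=
  (h1.const_mul (-1)).congr' (fun z => by ring)

theorem WOrd.sub {n : ℕ} {Φ Ψ : (ι → ℂ) → ℂ} (h1 : WOrd wt n Φ) (h2 : WOrd wt n Ψ) :
    WOrd wt n (fun z => Φ z - Ψ z) :=
  (h1.add _ _ h2.neg).congr' (fun z => by ring)

theorem WOrd.sum {κ : Type*} {n : ℕ} (s : Finset κ) {Φ : κ → (ι → ℂ) → ℂ}
    (h : ∀ i ∈ s, WOrd wt n (Φ i)) : WOrd wt n (fun z => ∑ i ∈ s, Φ i z) := by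
  classical
  induction s using Finset.induction_on with
  | empty => simpa using WOrd.zero
  | insert a s ha ih =>
    refine ((h a (by simp)).add _ _ (ih fun i hi => h i (by simp [hi]))).congr' fun z => ?_
    rw [Finset.sum_insert ha]

/-- Passing to the leading weighted homogeneous part. -/
theorem WOrd.lead [DecidableEq ι] (hwt : ∀ i, 0 < wt i) {n : ℕ} {Φ : (ι → ℂ) → ℂ}
    (h : WOrd wt n Φ) : ∃ P : MvPolynomial ι ℂ, IsWeightedHomogeneous wt P n ∧
      WOrd wt (n + 1) (fun z => Φ z - eval z P) := by
  induction h with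
  | term k P Ψ hP hk hΨ =>
    rcases hk.lt_or_eq with hk | rfl
    · exact ⟨0, isWeightedHomogeneous_zero _ _ _,
        (WOrd.term k P Ψ hP hk hΨ).congr' (fun z => by simp)⟩
    · obtain ⟨A, hA, hA2⟩ := hadamard hΨ
      refine ⟨C (Ψ 0) * P, hP.C_mul _, ?_⟩
      have : WOrd wt (n + 1) (fun z => ∑ i, eval z (P * X i) * A i z) :=
        WOrd.sum _ fun i _ => WOrd.term (n + wt i) _ _ (hP.mul (isWeightedHomogeneous_X ℂ wt i))
          (by have := hwt i; lia) (hA i)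
      refine .congr _ _ this ?_
      filter_upwards [hA2] with z hz
      rw [hz]
      simp only [map_mul, eval_C, eval_X, mul_add, mul_assoc, ← Finset.mul_sum]
      ring
  | add Φ Ψ h1 h2 i1 i2 =>
    obtain ⟨P, hP, hP2⟩ := i1
    obtain ⟨R, hR, hR2⟩ := i2
    exact ⟨P + R, hP.add hR, (hP2.add _ _ hR2).congr' (fun z => by simp; ring)⟩
  | congr Φ Ψ h1 h i1 =>
    obtain ⟨P, hP, hP2⟩ := i1
    refine ⟨P, hP, .congr _ _ hP2 ?_⟩
    filter_upwards [h] with z hz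
    rw [hz]

/-- Blow-up form of a germ of weighted order `≥ n`: `Φ (λ · q) = λ ^ n * Φ♯ (λ, q)` with `Φ♯`
holomorphic near every point `(0, p)`. -/
theorem WOrd.sharp (hwt : ∀ i, 0 < wt i) {n : ℕ} {Φ : (ι → ℂ) → ℂ} (h : WOrd wt n Φ) :
    ∃ S : ℂ × (ι → ℂ) → ℂ, (∀ p, AnalyticAt ℂ S (0, p)) ∧
      ∀ p, ∀ᶠ x in 𝓝 ((0 : ℂ), p), Φ (sc wt x.1 x.2) = x.1 ^ n * S x := by
  induction h with
  | term k P Ψ hP hk hΨ =>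
    refine ⟨fun x => x.1 ^ (k - n) * eval x.2 P * Ψ (sc wt x.1 x.2), fun p => ?_, fun p => ?_⟩
    · refine ((analyticAt_fst.pow _).mul (AnalyticAt.comp (f := Prod.snd) (analyticAt_eval P _)
        analyticAt_snd)).mul ?_
      refine AnalyticAt.comp (g := Ψ) (f := fun x : ℂ × (ι → ℂ) => sc wt x.1 x.2) ?_
        (analyticAt_sc 0 p)
      simpa [sc_zero_left hwt] using hΨ
    · refine Eventually.of_forall fun x => ?_
      obtain ⟨j, rfl⟩ := Nat.exists_eq_add_of_le hk
      simp only [eval_sc hP, pow_add, Nat.add_sub_cancel_left]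
      ring
  | add Φ Ψ h1 h2 i1 i2 =>
    obtain ⟨P, hP, hP2⟩ := i1
    obtain ⟨R, hR, hR2⟩ := i2
    refine ⟨fun x => P x + R x, fun p => (hP p).add (hR p), fun p => ?_⟩
    filter_upwards [hP2 p, hR2 p] with x h1 h2
    rw [h1, h2]; ring
  | congr Φ Ψ h1 h i1 =>
    obtain ⟨P, hP, hP2⟩ := i1
    refine ⟨P, hP, fun p => ?_⟩
    filter_upwards [hP2 p, (tendsto_sc hwt p).eventually h] with x h1 h2
    rw [← h2, h1]

/-- Pull-back along a coordinate projection compatible with the weights. -/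
theorem WOrd.comp_proj {κ : Type*} [Fintype κ] {wt' : κ → ℕ} (e : ι → κ)
    (he : ∀ i, wt' (e i) = wt i) {n : ℕ} {Φ : (ι → ℂ) → ℂ} (h : WOrd wt n Φ) :
    WOrd wt' n (fun p => Φ (p ∘ e)) := by
  have hc : Tendsto (fun p : κ → ℂ => p ∘ e) (𝓝 0) (𝓝 0) := by
    have : Continuous (fun p : κ → ℂ => p ∘ e) := by fun_prop
    simpa using this.tendsto 0
  induction h with
  | term k P Ψ hP hk hΨ =>
    have hR : IsWeightedHomogeneous wt' (rename e P) k := by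
      classical
      intro m hm
      obtain ⟨u, rfl, hu⟩ := coeff_rename_ne_zero e P m hm
      rw [← hP hu]
      simp only [Finsupp.weight_apply]
      rw [Finsupp.sum_mapDomain_index (by simp) (by intros; simp [add_mul])]
      simp [he]
    refine (WOrd.term k (rename e P) (fun p => Ψ (p ∘ e)) hR hk ?_).congr' fun z => ?_
    · refine AnalyticAt.comp (g := Ψ) (f := fun p : κ → ℂ => p ∘ e) ?_ ?_
      · convert hΨ using 1; ext; rfl
      · rw [analyticAt_pi_iff]; exact fun i => analyticAt_coord (e i) _
    · rw [eval_rename]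
  | add Φ Ψ h1 h2 i1 i2 => exact .add _ _ i1 i2
  | congr Φ Ψ h1 h i1 => exact .congr _ _ i1 (hc.eventually h)

theorem WOrd.comp_sc (c : ℂ) {n : ℕ} {Φ : (ι → ℂ) → ℂ} (h : WOrd wt n Φ) :
    WOrd wt n (fun p => Φ (sc wt c p)) := by
  have hc : Tendsto (fun p : ι → ℂ => sc wt c p) (𝓝 0) (𝓝 0) := by
    simpa using (analyticAt_sc_right (wt := wt) c 0).continuousAt.tendsto
  induction h with
  | term k P Ψ hP hk hΨ =>
    refine (WOrd.term k (C (c ^ k) * P) (fun p => Ψ (sc wt c p)) (hP.C_mul _) hk ?_).congr'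
      fun z => ?_
    · refine AnalyticAt.comp (g := Ψ) (f := fun p : ι → ℂ => sc wt c p) ?_
        (analyticAt_sc_right c 0)
      simpa using hΨ
    · simp [eval_sc hP]
  | add Φ Ψ h1 h2 i1 i2 => exact .add _ _ i1 i2
  | congr Φ Ψ h1 h i1 => exact .congr _ _ i1 (hc.eventually h)

variable [DecidableEq ι]

theorem analyticAt_pd {Φ : (ι → ℂ) → ℂ} {p : ι → ℂ} (h : AnalyticAt ℂ Φ p) (i : ι) :
    AnalyticAt ℂ (pd i Φ) p :=
  ((ContinuousLinearMap.apply ℂ ℂ (Pi.single i 1 : ι → ℂ)).analyticAt _).comp h.fderiv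

theorem pd_congr {Φ Ψ : (ι → ℂ) → ℂ} {p : ι → ℂ} (h : ∀ᶠ z in 𝓝 p, Φ z = Ψ z) (i : ι) :
    ∀ᶠ z in 𝓝 p, pd i Φ z = pd i Ψ z := by
  have h' : Φ =ᶠ[𝓝 p] Ψ := h
  filter_upwards [h'.fderiv (𝕜 := ℂ)] with z hz
  rw [pd, pd, hz]

theorem pd_add {Φ Ψ : (ι → ℂ) → ℂ} {p : ι → ℂ} (h1 : AnalyticAt ℂ Φ p) (h2 : AnalyticAt ℂ Ψ p)
    (i : ι) : pd i (fun z => Φ z + Ψ z) p = pd i Φ p + pd i Ψ p := by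
  simp [pd, fderiv_fun_add h1.differentiableAt h2.differentiableAt]

theorem pd_mul {Φ Ψ : (ι → ℂ) → ℂ} {p : ι → ℂ} (h1 : AnalyticAt ℂ Φ p) (h2 : AnalyticAt ℂ Ψ p)
    (i : ι) : pd i (fun z => Φ z * Ψ z) p = pd i Φ p * Ψ p + Φ p * pd i Ψ p := by
  simp [pd, fderiv_fun_mul h1.differentiableAt h2.differentiableAt]
  ring

theorem pd_coord (i j : ι) (p : ι → ℂ) :
    pd i (fun z => z j) p = (Pi.single i 1 : ι → ℂ) j := by
  have : fderiv ℂ (fun z : ι → ℂ => z j) p = ContinuousLinearMap.proj j :=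
    (ContinuousLinearMap.proj (R := ℂ) (φ := fun _ : ι => ℂ) j).fderiv
  rw [pd, this]; rfl

theorem pd_eval (P : MvPolynomial ι ℂ) (i : ι) (p : ι → ℂ) :
    pd i (fun z => eval z P) p = eval p (pderiv i P) := by
  induction P using MvPolynomial.induction_on with
  | C a => simp [pd]
  | add P R h1 h2 =>
    simp only [map_add]
    rw [pd_add (analyticAt_eval _ _) (analyticAt_eval _ _), h1, h2]
  | mul_X P j h =>
    simp only [map_mul, eval_X]
    rw [pd_mul (analyticAt_eval _ _) (analyticAt_coord _ _), h, pd_coord]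
    simp only [Derivation.leibniz, pderiv_X, smul_eq_mul, map_add, map_mul, eval_X]
    by_cases hij : j = i
    · subst hij; simp; ring
    · rw [Pi.single_eq_of_ne hij, Pi.single_eq_of_ne hij]; simp; ring

theorem WOrd.pd {n : ℕ} {Φ : (ι → ℂ) → ℂ} (h : WOrd wt n Φ) (i : ι) :
    WOrd wt (n - wt i) (pd i Φ) := by
  induction h with
  | term k P Ψ hP hk hΨ =>
    have h1 : WOrd wt (n - wt i) (fun z => eval z (pderiv i P) * Ψ z) := by
      by_cases hki : wt i ≤ k
      · exact WOrd.term (k - wt i) _ _ (hP.pderiv (by lia)) (by lia) hΨ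
      · refine (WOrd.of_analytic ((analyticAt_eval _ 0).mul hΨ)).mono (by lia)
    have h2 : WOrd wt (n - wt i) (fun z => eval z P * _root_.pd i Ψ z) :=
      WOrd.term k _ _ hP (by lia) (analyticAt_pd hΨ i)
    refine .congr _ _ (h1.add _ _ h2) ?_
    filter_upwards [hΨ.eventually_analyticAt] with z hz
    rw [pd_mul (analyticAt_eval _ _) hz, pd_eval]
  | add Φ Ψ h1 h2 i1 i2 =>
    refine .congr _ _ (i1.add _ _ i2) ?_
    filter_upwards [h1.analyticAt.eventually_analyticAt, h2.analyticAt.eventually_analyticAt]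
      with z hz hz2
    rw [pd_add hz hz2]
  | congr Φ Ψ h1 h i1 => exact .congr _ _ i1 (pd_congr h i)

/-- A germ of weighted order `≥ m`, multiplied by `λ ^ s` with `m + s > n`, is negligible with
respect to `λ ^ n` under dilation. -/
theorem WOrd.tendsto_zero (hwt : ∀ i, 0 < wt i) {n m s : ℕ} (hn : n + 1 ≤ m + s)
    {Φ : (ι → ℂ) → ℂ} (h : WOrd wt m Φ) (p : ι → ℂ) :
    Tendsto (fun x : ℂ × (ι → ℂ) => x.1 ^ s * Φ (sc wt x.1 x.2) / x.1 ^ n)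
      (𝓝[{x | x.1 ≠ 0}] (0, p)) (𝓝 0) := by
  obtain ⟨S, hS, hS2⟩ := h.sharp hwt
  obtain ⟨j, hj⟩ := Nat.exists_eq_add_of_le hn
  have h1 : Tendsto (fun x : ℂ × (ι → ℂ) => x.1 ^ (j + 1) * S x) (𝓝 (0, p)) (𝓝 0) := by
    have := ((analyticAt_fst.pow (j + 1)).mul (hS p)).continuousAt.tendsto
    simpa [Pi.mul_def] using this
  refine (h1.mono_left nhdsWithin_le_nhds).congr' ?_
  filter_upwards [nhdsWithin_le_nhds (hS2 p), self_mem_nhdsWithin] with x hx hx0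
  have hx0 : x.1 ≠ 0 := hx0
  rw [hx, eq_div_iff (pow_ne_zero _ hx0), ← mul_assoc, ← pow_add, mul_right_comm, ← pow_add]
  congr 2
  lia

/-- Convergence of a dilated germ to a polynomial `R` of weighted degree `n - s`; the degree
condition is stated without subtraction, so that it also covers vanishing `R`. -/
theorem WOrd.tendsto_lead (hwt : ∀ i, 0 < wt i) {n m s : ℕ} (hn : n + 1 ≤ m + s)
    {Φ : (ι → ℂ) → ℂ} {R : MvPolynomial ι ℂ}
    (hR : ∀ (c : ℂ) (p : ι → ℂ), c ^ s * eval (sc wt c p) R = c ^ n * eval p R)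
    (h : WOrd wt m (fun z => Φ z - eval z R)) (p : ι → ℂ) :
    Tendsto (fun x : ℂ × (ι → ℂ) => x.1 ^ s * Φ (sc wt x.1 x.2) / x.1 ^ n)
      (𝓝[{x | x.1 ≠ 0}] (0, p)) (𝓝 (eval p R)) := by
  have h1 := h.tendsto_zero hwt hn p
  have h2 : Tendsto (fun x : ℂ × (ι → ℂ) => eval x.2 R) (𝓝[{x | x.1 ≠ 0}] (0, p))
      (𝓝 (eval p R)) := by
    have : ContinuousAt (fun x : ℂ × (ι → ℂ) => eval x.2 R) (0, p) :=
      (AnalyticAt.comp (f := Prod.snd) (analyticAt_eval R _) analyticAt_snd).continuousAt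
    exact this.tendsto.mono_left nhdsWithin_le_nhds
  have h3 := h1.add h2
  rw [zero_add] at h3
  refine h3.congr' ?_
  filter_upwards [self_mem_nhdsWithin] with x hx0
  have hx0 : x.1 ≠ 0 := hx0
  rw [mul_sub, hR, sub_div, mul_div_cancel_left₀ _ (pow_ne_zero _ hx0)]; ring

/-- Scaling law of a partial derivative, from that of the function. -/
theorem eval_sc_pderiv {n s : ℕ} {R : MvPolynomial ι ℂ}
    (hR : ∀ (c : ℂ) (p : ι → ℂ), c ^ s * eval (sc wt c p) R = c ^ n * eval p R) (i : ι)
    (c : ℂ) (p : ι → ℂ) :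
    c ^ (s + wt i) * eval (sc wt c p) (pderiv i R) = c ^ n * eval p (pderiv i R) := by
  have hL : HasFDerivAt (fun q : ι → ℂ => sc wt c q)
      (ContinuousLinearMap.pi fun j => (c ^ wt j) • ContinuousLinearMap.proj (R := ℂ) (φ := fun _ : ι => ℂ) j) p := by
    rw [hasFDerivAt_pi]
    intro j
    exact (ContinuousLinearMap.proj (R := ℂ) (φ := fun _ : ι => ℂ) j).hasFDerivAt.const_mul _
  have h1 := ((analyticAt_eval R (sc wt c p)).differentiableAt.hasFDerivAt.comp p hL).const_mul
    (c ^ s)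
  have h2 := (analyticAt_eval R p).differentiableAt.hasFDerivAt.const_mul (c ^ n)
  have h3 : (fun y => c ^ s * ((fun z => eval z R) ∘ fun q => sc wt c q) y) =
      fun y => c ^ n * eval y R := funext fun y => hR c y
  rw [h3] at h1
  have h4 := DFunLike.congr_fun (h1.unique h2) (Pi.single i 1)
  have h5 : (ContinuousLinearMap.pi fun j => (c ^ wt j) • ContinuousLinearMap.proj (R := ℂ) (φ := fun _ : ι => ℂ) j :
      (ι → ℂ) →L[ℂ] (ι → ℂ)) (Pi.single i 1) = c ^ wt i • (Pi.single i 1 : ι → ℂ) := by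
    ext j
    by_cases hj : j = i
    · subst hj; simp
    · simp [hj]
  rw [smul_apply, ContinuousLinearMap.comp_apply, h5, map_smul,
    smul_apply] at h4
  rw [← pd_eval, ← pd_eval, pow_add, mul_assoc]
  exact h4

end basics

/-! ### Zero sets of germs with a given leading form -/

/-- Holomorphic implicit function theorem for one scalar unknown. -/
theorem ift_scalar {E : Type*} [NormedAddCommGroup E] [NormedSpace ℂ E] [CompleteSpace E]
    {G : E × ℂ → ℂ} {e : E} {x : ℂ} (hG : AnalyticAt ℂ G (e, x)) (h0 : G (e, x) = 0)
    {D : ℂ} (hD : HasDerivAt (fun t => G (e, t)) D x) (hD0 : D ≠ 0) :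
    ∃ ψ : E → ℂ, AnalyticAt ℂ ψ e ∧ ψ e = x ∧ ∀ᶠ y in 𝓝 (e, x), G y = 0 ↔ ψ y.1 = y.2 := by
  have cdf : ContDiffAt ℂ ⊤ G (e, x) := hG.contDiffAt
  have pn : (⊤ : WithTop ℕ∞) ≠ 0 := by simp
  have hinr : HasFDerivAt (fun t : ℂ => ((e, t) : E × ℂ)) (.inr ℂ E ℂ) x :=
    hasFDerivAt_prodMk_right e x
  have h1 := (hG.differentiableAt.hasFDerivAt.comp x hinr).unique hD.hasFDerivAt
  have if₂ : (fderiv ℂ G (e, x) ∘L .inr ℂ E ℂ).IsInvertible := by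
    rw [h1]
    refine ⟨ContinuousLinearEquiv.unitsEquivAut ℂ (Units.mk0 D hD0), ?_⟩
    ext
    simp
  refine ⟨cdf.implicitFunction pn if₂, ?_, cdf.implicitFunction_apply_self pn if₂, ?_⟩
  · exact (cdf.contDiffAt_implicitFunction pn if₂).analyticAt
  · have := cdf.eventually_apply_eq_iff_implicitFunction pn if₂
    rwa [h0] at this

section
variable {ι : Type*} [Fintype ι] [DecidableEq ι] {wt : ι → ℕ}

theorem WOrd.apply_zero (hwt : ∀ i, 0 < wt i) {n : ℕ} {Φ : (ι → ℂ) → ℂ}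
    (h : WOrd wt (n + 1) Φ) : Φ 0 = 0 := by
  obtain ⟨S, hS, hS2⟩ := h.sharp hwt
  have := (hS2 0).self_of_nhds
  simpa using this

theorem WOrd.sharp_lead (hwt : ∀ i, 0 < wt i) {n : ℕ} {Φ : (ι → ℂ) → ℂ} {P : MvPolynomial ι ℂ}
    (hP : IsWeightedHomogeneous wt P n) (h : WOrd wt (n + 1) (fun z => Φ z - eval z P)) :
    ∃ S : ℂ × (ι → ℂ) → ℂ, (∀ p, AnalyticAt ℂ S (0, p)) ∧
      (∀ p, ∀ᶠ x in 𝓝 ((0 : ℂ), p), Φ (sc wt x.1 x.2) = x.1 ^ n * S x) ∧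
      ∀ p, S (0, p) = eval p P := by
  obtain ⟨S, hS, hS2⟩ := h.sharp hwt
  refine ⟨fun x => eval x.2 P + x.1 * S x, fun p => ?_, fun p => ?_, fun p => by simp⟩
  · exact (AnalyticAt.comp (f := Prod.snd) (analyticAt_eval P _) analyticAt_snd).add
      (analyticAt_fst.mul (hS p))
  · filter_upwards [hS2 p] with x hx
    rw [eval_sc hP] at hx
    linear_combination hx

theorem hasDerivAt_eval_line (P : MvPolynomial ι ℂ) (q v : ι → ℂ) :
    HasDerivAt (fun t : ℂ => eval (q + t • v) P) (∑ i, v i * eval q (pderiv i P)) 0 := by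
  have h1 : HasDerivAt (fun t : ℂ => q + t • v) v 0 := by
    simpa using ((hasDerivAt_id (0 : ℂ)).smul_const v).const_add q
  have h2 : HasFDerivAt (fun z => eval z P) (fderiv ℂ (fun z => eval z P) q)
      (q + (0 : ℂ) • v) := by
    simpa using (analyticAt_eval P q).differentiableAt.hasFDerivAt
  have h3 := h2.comp_hasDerivAt _ h1
  have hv : v = ∑ i, Pi.single i (v i) := (Finset.univ_sum_single v).symm
  have h4 : fderiv ℂ (fun z => eval z P) q v = ∑ i, v i * eval q (pderiv i P) := by
    have h5 := congrArg (fderiv ℂ (fun z => eval z P) q) hv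
    rw [map_sum] at h5
    rw [h5]
    refine Finset.sum_congr rfl fun i _ => ?_
    rw [← pd_eval, pd, ← smul_eq_mul, ← map_smul]
    congr 1
    rw [← Pi.single_smul]; simp
  rw [h4] at h3
  exact h3

/-- The zero set of a blown-up germ is, near a smooth zero of its leading form, a graph along any
transverse direction. -/
theorem param (S : ℂ × (ι → ℂ) → ℂ) {P : MvPolynomial ι ℂ} (hS : ∀ p, AnalyticAt ℂ S (0, p))
    (hSP : ∀ p, S (0, p) = eval p P) {q v : ι → ℂ} (hq : eval q P = 0)
    (hv : ∑ i, v i * eval q (pderiv i P) ≠ 0) :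
    ∃ ψ : ℂ × (ι → ℂ) → ℂ, AnalyticAt ℂ ψ (0, q) ∧ ψ (0, q) = 0 ∧
      ∀ᶠ y in 𝓝 (((0 : ℂ), q), (0 : ℂ)), S (y.1.1, y.1.2 + y.2 • v) = 0 ↔ ψ y.1 = y.2 := by
  refine ift_scalar (G := fun y : (ℂ × (ι → ℂ)) × ℂ => S (y.1.1, y.1.2 + y.2 • v))
    (e := (0, q)) (x := 0) ?_ ?_ (D := ∑ i, v i * eval q (pderiv i P)) ?_ hv
  · refine AnalyticAt.comp (g := S)
      (f := fun y : (ℂ × (ι → ℂ)) × ℂ => (y.1.1, y.1.2 + y.2 • v)) ?_ ?_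
    · simpa using hS q
    · exact (analyticAt_fst.comp analyticAt_fst).prod ((analyticAt_snd.comp analyticAt_fst).add
        (analyticAt_snd.smul analyticAt_const))
  · simp [hSP, hq]
  · simpa [hSP] using hasDerivAt_eval_line P q v

theorem exists_transverse {P : MvPolynomial ι ℂ} {q : ι → ℂ} (h : ∃ i, eval q (pderiv i P) ≠ 0) :
    ∃ v : ι → ℂ, ∑ i, v i * eval q (pderiv i P) ≠ 0 := by
  obtain ⟨i, hi⟩ := h
  refine ⟨Pi.single i 1, ?_⟩
  rw [Finset.sum_eq_single i]
  · simpa using hi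
  · intro j _ hj; simp [hj]
  · simp

/-- The moving zero `q + ψ v` of a blown-up germ. -/
theorem param_zero (hwt : ∀ i, 0 < wt i) {n : ℕ} {Φ : (ι → ℂ) → ℂ} {P : MvPolynomial ι ℂ}
    (hP : IsWeightedHomogeneous wt P n) (h : WOrd wt (n + 1) (fun z => Φ z - eval z P))
    {q v : ι → ℂ} (hq : eval q P = 0) (hv : ∑ i, v i * eval q (pderiv i P) ≠ 0) :
    ∃ ψ : ℂ × (ι → ℂ) → ℂ, AnalyticAt ℂ ψ (0, q) ∧ ψ (0, q) = 0 ∧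
      (∀ᶠ x in 𝓝 ((0 : ℂ), q), Φ (sc wt x.1 (x.2 + ψ x • v)) = 0) ∧
      (∀ᶠ y in 𝓝 (((0 : ℂ), q), (0 : ℂ)), y.1.1 ≠ 0 →
        Φ (sc wt y.1.1 (y.1.2 + y.2 • v)) = 0 → ψ y.1 = y.2) ∧
      (∀ᶠ x in 𝓝 ((0 : ℂ), q), x.1 = 0 → eval (x.2 + ψ x • v) P = 0) := by
  obtain ⟨S, hS, hS2, hSP⟩ := h.sharp_lead hwt hP
  obtain ⟨ψ, h1, h2, h3⟩ := param S hS hSP hq hv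
  have ht : Tendsto (fun x => (x, ψ x)) (𝓝 ((0 : ℂ), q)) (𝓝 ((0, q), 0)) := by
    have := (continuousAt_id.prodMk h1.continuousAt).tendsto
    simpa [h2] using this
  have ht2 : Tendsto (fun y : (ℂ × (ι → ℂ)) × ℂ => (y.1.1, y.1.2 + y.2 • v))
      (𝓝 ((0, q), 0)) (𝓝 (0, q)) := by
    have : Continuous (fun y : (ℂ × (ι → ℂ)) × ℂ => (y.1.1, y.1.2 + y.2 • v)) := by fun_prop
    simpa using this.tendsto ((0, q), 0)
  have h4 := ht2.eventually (hS2 q)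
  have h5 : ∀ᶠ x in 𝓝 ((0 : ℂ), q), S (x.1, x.2 + ψ x • v) = 0 := by
    filter_upwards [ht.eventually h3] with x hx
    exact hx.2 rfl
  refine ⟨ψ, h1, h2, ?_, ?_, ?_⟩
  · filter_upwards [h5, ht.eventually h4] with x hx hx2
    rw [hx2]; simp [hx]
  · filter_upwards [h3, h4] with y hy hy2 hy0 hy3
    rw [← hy]
    rw [hy2] at hy3
    simpa [hy0] using hy3
  · filter_upwards [h5] with x hx hx0
    rwa [hx0, hSP] at hx

/-- Every nonzero point near `0` is a small weighted dilate of a point of the unit sphere. -/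
theorem polar_core (hwt : ∀ i, 0 < wt i) {R : (ι → ℂ) → Prop}
    (h1 : ∀ᶠ μ in 𝓝 (0 : ℂ), ∀ q ∈ Metric.sphere (0 : ι → ℂ) 1, μ ≠ 0 → R (sc wt μ q)) :
    ∀ᶠ p in 𝓝 0, p ≠ 0 → R p := by
  obtain ⟨δ, hδ, h2⟩ := Metric.eventually_nhds_iff.1 h1
  have h3 : ∀ᶠ p : ι → ℂ in 𝓝 0, ∀ i, ‖p i‖ < δ ^ wt i := by
    rw [eventually_all]
    intro i
    have : Tendsto (fun p : ι → ℂ => ‖p i‖) (𝓝 0) (𝓝 0) := by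
      have : Continuous (fun p : ι → ℂ => ‖p i‖) := by fun_prop
      simpa using this.tendsto 0
    exact this.eventually_lt_const (by positivity)
  filter_upwards [h3] with p hp hp0
  have hne : ∃ i, p i ≠ 0 := by
    by_contra! hcon
    exact hp0 (funext hcon)
  obtain ⟨i0, hi0⟩ := hne
  obtain ⟨k, -, hk⟩ := Finset.exists_max_image Finset.univ
    (fun i => ‖p i‖ ^ ((wt i : ℝ)⁻¹)) ⟨i0, Finset.mem_univ _⟩
  set μ : ℝ := ‖p k‖ ^ ((wt k : ℝ)⁻¹) with hμ
  have hpow : ∀ i, (‖p i‖ ^ ((wt i : ℝ)⁻¹)) ^ wt i = ‖p i‖ := fun i =>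
    Real.rpow_inv_natCast_pow (norm_nonneg _) (hwt i).ne'
  have hμ0 : 0 < μ := by
    refine lt_of_lt_of_le ?_ (hk i0 (Finset.mem_univ _))
    have : 0 < ‖p i0‖ := norm_pos_iff.2 hi0
    positivity
  have hle : ∀ i, ‖p i‖ ≤ μ ^ wt i := fun i => by
    rw [← hpow i]
    exact pow_le_pow_left₀ (by positivity) (hk i (Finset.mem_univ _)) _
  have heq : ‖p k‖ = μ ^ wt k := (hpow k).symm
  have hμδ : μ < δ := by
    have := hp k
    rw [heq] at this
    exact lt_of_pow_lt_pow_left₀ _ hδ.le this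
  set q : ι → ℂ := fun i => p i / (μ : ℂ) ^ wt i with hq
  have hμC : (μ : ℂ) ≠ 0 := by exact_mod_cast hμ0.ne'
  have hsc : sc wt μ q = p := by
    ext i
    simp only [sc, hq]
    field_simp
  have hn : ∀ i, ‖q i‖ = ‖p i‖ / μ ^ wt i := fun i => by
    simp [hq, abs_of_pos hμ0]
  have hqS : q ∈ Metric.sphere (0 : ι → ℂ) 1 := by
    rw [mem_sphere_zero_iff_norm]
    apply le_antisymm
    · rw [pi_norm_le_iff_of_nonneg zero_le_one]
      intro i
      rw [hn, div_le_one (by positivity)]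
      exact hle i
    · calc (1 : ℝ) = ‖q k‖ := by rw [hn, heq, div_self (by positivity)]
        _ ≤ ‖q‖ := norm_le_pi_norm q k
  have := h2 (y := (μ : ℂ)) (by simpa [abs_of_pos hμ0] using hμδ) q hqS hμC
  rwa [hsc] at this

/-- A property holds at all nonzero points near `0` as soon as it holds at the small weighted
dilates of points near any given nonzero point. -/
theorem polar (hwt : ∀ i, 0 < wt i) {R : (ι → ℂ) → Prop}
    (h : ∀ q : ι → ℂ, q ≠ 0 → ∀ᶠ x in 𝓝 ((0 : ℂ), q), x.1 ≠ 0 → R (sc wt x.1 x.2)) :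
    ∀ᶠ p in 𝓝 0, p ≠ 0 → R p := by
  have hc : IsCompact (Metric.sphere (0 : ι → ℂ) 1) := isCompact_sphere 0 1
  refine polar_core hwt ?_
  refine hc.eventually_forall_of_forall_eventually (P := fun μ q => μ ≠ 0 → R (sc wt μ q)) ?_
  intro q hq
  refine h q ?_
  rintro rfl
  simp at hq

/-- Vanishing on the zero set of `F` passes to leading forms. -/
theorem lead_vanish (hwt : ∀ i, 0 < wt i) {n l : ℕ} {F Ψ : (ι → ℂ) → ℂ}
    {P R : MvPolynomial ι ℂ}
    (hP : IsWeightedHomogeneous wt P n) (hF : WOrd wt (n + 1) (fun z => F z - eval z P))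
    (hR : IsWeightedHomogeneous wt R l) (hΨ : WOrd wt (l + 1) (fun z => Ψ z - eval z R))
    (hFΨ : ∀ᶠ p in 𝓝 0, p ≠ 0 → F p = 0 → Ψ p = 0)
    {q : ι → ℂ} (hq : eval q P = 0) (hq0 : q ≠ 0) (hd : ∃ i, eval q (pderiv i P) ≠ 0) :
    eval q R = 0 := by
  obtain ⟨v, hv⟩ := exists_transverse hd
  obtain ⟨ψ, h1, h2, h3, -, -⟩ := param_zero hwt hP hF hq hv
  obtain ⟨S, hS, hS2, hSR⟩ := hΨ.sharp_lead hwt hR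
  have ht : Tendsto (fun t : ℂ => (t, q + ψ (t, q) • v)) (𝓝 0) (𝓝 (0, q)) := by
    have hc : ContinuousAt (fun t : ℂ => (t, q + ψ (t, q) • v)) 0 := by
      have : ContinuousAt (fun t : ℂ => ψ (t, q)) 0 :=
        ContinuousAt.comp (g := ψ) (f := fun t : ℂ => (t, q)) h1.continuousAt (by fun_prop)
      fun_prop
    have := hc.tendsto
    simpa [h2] using this
  have ht0 : Tendsto (fun t : ℂ => (t, q)) (𝓝 0) (𝓝 (0, q)) := by
    have : Continuous (fun t : ℂ => (t, q)) := by fun_prop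
    exact this.tendsto 0
  have h4 : ∀ᶠ t in 𝓝[≠] (0 : ℂ), S (t, q + ψ (t, q) • v) = 0 := by
    have hne : ∀ᶠ x in 𝓝 ((0 : ℂ), q), x.2 ≠ 0 :=
      continuous_snd.continuousAt.eventually_ne hq0
    filter_upwards [nhdsWithin_le_nhds (ht.eventually (hS2 q)),
      nhdsWithin_le_nhds (ht0.eventually h3),
      nhdsWithin_le_nhds (ht.eventually ((tendsto_sc hwt q).eventually hFΨ)),
      nhdsWithin_le_nhds (ht.eventually hne), self_mem_nhdsWithin] with t e1 e2 e3 e4 e5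
    have e5 : t ≠ 0 := e5
    have e6 := e3 (by
      intro hz
      apply e4
      ext i
      have := congrFun hz i
      simpa [sc, e5] using this) e2
    rw [e6] at e1
    simpa [e5] using e1.symm
  have h5 : Tendsto (fun t : ℂ => S (t, q + ψ (t, q) • v)) (𝓝[≠] 0) (𝓝 (eval q R)) := by
    rw [← hSR]
    exact ((hS q).continuousAt.tendsto.comp ht).mono_left nhdsWithin_le_nhds
  have h6 : Tendsto (fun t : ℂ => S (t, q + ψ (t, q) • v)) (𝓝[≠] 0) (𝓝 0) :=
    tendsto_const_nhds.congr' (by filter_upwards [h4] with t ht using ht.symm)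
  exact tendsto_nhds_unique h5 h6

/-- Two hypersurface germs whose leading forms have the same zeros, smooth away from the origin,
coincide as soon as one contains the other. -/
theorem zero_sets_eq (hwt : ∀ i, 0 < wt i) {n : ℕ} {F Ψ : (ι → ℂ) → ℂ} {P R : MvPolynomial ι ℂ}
    (hP : IsWeightedHomogeneous wt P n) (hF : WOrd wt (n + 1) (fun z => F z - eval z P))
    (hR : IsWeightedHomogeneous wt R n) (hΨ : WOrd wt (n + 1) (fun z => Ψ z - eval z R))
    {c : ℂ} (hc : c ≠ 0) (hRP : R = C c * P)
    (hd : ∀ q, q ≠ 0 → eval q P = 0 → ∃ i, eval q (pderiv i P) ≠ 0)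
    (hFΨ : ∀ᶠ p in 𝓝 0, F p = 0 → Ψ p = 0) :
    ∀ᶠ p in 𝓝 0, p ≠ 0 → (F p = 0 ↔ Ψ p = 0) := by
  refine polar hwt fun q hq0 => ?_
  by_cases hq : eval q P = 0
  · obtain ⟨v, hv⟩ := exists_transverse (hd q hq0 hq)
    obtain ⟨ψ, h1, h2, h3, h4, -⟩ := param_zero hwt hP hF hq hv
    obtain ⟨ψ', h1', h2', h3', h4', -⟩ := param_zero hwt hR hΨ (q := q) (v := v)
      (by simp [hRP, hq]) (by
        have : ∑ i, v i * eval q (pderiv i R) = c * ∑ i, v i * eval q (pderiv i P) := by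
          rw [Finset.mul_sum]
          refine Finset.sum_congr rfl fun i _ => ?_
          simp [hRP, Derivation.leibniz]; ring
        rw [this]; exact mul_ne_zero hc hv)
    have ht : Tendsto (fun x => (x, ψ x)) (𝓝 ((0 : ℂ), q)) (𝓝 ((0, q), 0)) := by
      have := (continuousAt_id.prodMk h1.continuousAt).tendsto
      simpa [h2] using this
    have ht0 : Tendsto (fun x : ℂ × (ι → ℂ) => (x, (0 : ℂ))) (𝓝 ((0 : ℂ), q))
        (𝓝 ((0, q), 0)) := by
      have : Continuous (fun x : ℂ × (ι → ℂ) => (x, (0 : ℂ))) := by fun_prop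
      exact this.tendsto _
    have ht1 : Tendsto (fun x : ℂ × (ι → ℂ) => sc wt x.1 (x.2 + ψ x • v)) (𝓝 ((0 : ℂ), q))
        (𝓝 0) := by
      have h5 : Tendsto (fun x : ℂ × (ι → ℂ) => (x.1, x.2 + ψ x • v)) (𝓝 ((0 : ℂ), q))
          (𝓝 (0, q)) := by
        have hc : ContinuousAt (fun x : ℂ × (ι → ℂ) => (x.1, x.2 + ψ x • v)) (0, q) := by
          have := h1.continuousAt
          fun_prop
        have := hc.tendsto
        simpa [h2] using this
      exact (tendsto_sc hwt q).comp h5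
    filter_upwards [h3, ht.eventually h4', ht0.eventually h4, ht0.eventually h4',
      ht1.eventually hFΨ, (tendsto_sc hwt q).eventually hFΨ] with x e1 e2 e3 e4 e5 e6 hx0
    refine ⟨e6, fun hx => ?_⟩
    simp only [zero_smul, add_zero] at e3 e4
    have e7 := e2 hx0 (e5 e1)
    have e8 := e4 hx0 hx
    rw [e7] at e8
    rw [e8] at e1
    simpa using e1
  · obtain ⟨S, hS, hS2, hSP⟩ := hF.sharp_lead hwt hP
    obtain ⟨S', hS', hS2', hSP'⟩ := hΨ.sharp_lead hwt hR
    have e1 : ∀ᶠ x in 𝓝 ((0 : ℂ), q), S x ≠ 0 :=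
      (hS q).continuousAt.eventually_ne (by rwa [hSP])
    have e2 : ∀ᶠ x in 𝓝 ((0 : ℂ), q), S' x ≠ 0 :=
      (hS' q).continuousAt.eventually_ne (by rw [hSP', hRP]; simp [hc, hq])
    filter_upwards [hS2 q, hS2' q, e1, e2] with x e1 e2 e3 e4 e5
    rw [e1, e2]
    simp [e3, e4, e5]

/-- Criterion for the vanishing of the leading form along real dilations. -/
theorem WOrd.succ_of_tendsto (hwt : ∀ i, 0 < wt i) {n : ℕ} {Φ : (ι → ℂ) → ℂ}
    {P : MvPolynomial ι ℂ} (hP : IsWeightedHomogeneous wt P n)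
    (h : WOrd wt (n + 1) (fun z => Φ z - eval z P)) {p : ι → ℂ}
    (ht : Tendsto (fun t : ℝ => Φ (sc wt t p) / (t : ℂ) ^ n) (𝓝[>] 0) (𝓝 0)) :
    eval p P = 0 := by
  have h1 := WOrd.tendsto_lead (s := 0) hwt le_rfl
    (fun c p => by rw [eval_sc hP]; simp) h p
  have h2 : Tendsto (fun t : ℝ => ((t : ℂ), p)) (𝓝[>] 0) (𝓝[{x | x.1 ≠ 0}] (0, p)) := by
    refine tendsto_nhdsWithin_iff.2 ⟨?_, ?_⟩
    · have : Continuous (fun t : ℝ => ((t : ℂ), p)) := by fun_prop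
      exact (by simpa using this.tendsto 0 :
        Tendsto (fun t : ℝ => ((t : ℂ), p)) (𝓝 0) (𝓝 (0, p))).mono_left nhdsWithin_le_nhds
    · filter_upwards [self_mem_nhdsWithin] with t ht
      have : (0 : ℝ) < t := ht
      simpa using this.ne'
  have h3 := h1.comp h2
  simp only [Function.comp_def, pow_zero, one_mul] at h3
  exact tendsto_nhds_unique h3 ht

end

/-! ### Conjugation and complexification of real-analytic germs -/

section conj
variable {ι : Type*} [Fintype ι]

/-- Coordinatewise complex conjugation. -/
noncomputable def cj (z : ι → ℂ) : ι → ℂ := fun i => (starRingEnd ℂ) (z i)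

@[simp] theorem cj_cj (z : ι → ℂ) : cj (cj z) = z := by ext; simp [cj]

@[simp] theorem cj_zero : cj (0 : ι → ℂ) = 0 := by ext; simp [cj]

@[simp] theorem norm_cj (z : ι → ℂ) : ‖cj z‖ = ‖z‖ := by
  simp [Pi.norm_def, cj, nnnorm]

theorem continuous_cj : Continuous (cj : (ι → ℂ) → ι → ℂ) := by
  unfold cj; fun_prop

theorem tendsto_cj : Tendsto (cj : (ι → ℂ) → ι → ℂ) (𝓝 0) (𝓝 0) := by
  simpa using (continuous_cj (ι := ι)).tendsto 0

/-- The conjugate of a complex multilinear form, `(z_k) ↦ conj (f (conj z_k))`. -/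
noncomputable def conjMultilinear {n : ℕ}
    (f : ContinuousMultilinearMap ℂ (fun _ : Fin n => ι → ℂ) ℂ) :
    ContinuousMultilinearMap ℂ (fun _ : Fin n => ι → ℂ) ℂ :=
  MultilinearMap.mkContinuous
    { toFun := fun m => (starRingEnd ℂ) (f fun k => cj (m k))
      map_update_add' := by
        intro _ m k x y
        have hu : ∀ x, (fun l => cj (Function.update m k x l)) =
            Function.update (fun l => cj (m l)) k (cj x) := by
          intro x; ext l : 1
          by_cases h : l = k
          · subst h; simp
          · simp [h]
        have : cj (x + y) = cj x + cj y := by ext; simp [cj]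
        rw [hu, hu, hu, this, f.map_update_add, map_add]
      map_update_smul' := by
        intro _ m k c x
        have hu : ∀ x, (fun l => cj (Function.update m k x l)) =
            Function.update (fun l => cj (m l)) k (cj x) := by
          intro x; ext l : 1
          by_cases h : l = k
          · subst h; simp
          · simp [h]
        have : cj (c • x) = (starRingEnd ℂ c) • cj x := by ext; simp [cj]
        rw [hu, hu, this, f.map_update_smul]
        simp } ‖f‖ (by
      intro m
      have := f.le_opNorm (fun k => cj (m k))
      simpa using this)

theorem conjMultilinear_apply {n : ℕ}
    (f : ContinuousMultilinearMap ℂ (fun _ : Fin n => ι → ℂ) ℂ) (m : Fin n → ι → ℂ) :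
    conjMultilinear f m = (starRingEnd ℂ) (f fun k => cj (m k)) := rfl

/-- Schwarz reflection of a holomorphic germ is holomorphic. -/
theorem analyticAt_conj {Φ : (ι → ℂ) → ℂ} (h : AnalyticAt ℂ Φ 0) :
    AnalyticAt ℂ (fun z => (starRingEnd ℂ) (Φ (cj z))) 0 := by
  obtain ⟨p, r, hp⟩ := h
  refine ⟨fun n => conjMultilinear (p n), r, ⟨?_, hp.r_pos, ?_⟩⟩
  · refine hp.r_le.trans ?_
    refine FormalMultilinearSeries.radius_le_of_le (fun n => ?_)
    exact MultilinearMap.mkContinuous_norm_le _ (norm_nonneg _) _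
  · intro y hy
    have hy' : cj y ∈ Metric.eball (0 : ι → ℂ) r := by
      simpa [edist_zero_right, enorm_eq_iff_norm_eq.2 (norm_cj y)] using hy
    have := hp.hasSum hy'
    have h2 := this.mapL (Complex.conjCLE : ℂ →L[ℝ] ℂ)
    simpa [conjMultilinear_apply] using h2

theorem eval_map_conj (P : MvPolynomial ι ℂ) (z : ι → ℂ) :
    eval z (map (starRingEnd ℂ) P) = (starRingEnd ℂ) (eval (cj z) P) := by
  induction P using MvPolynomial.induction_on with
  | C a => simp
  | add P R h1 h2 => simp [h1, h2]
  | mul_X P j h => simp [h, cj]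

theorem WOrd.conj {wt : ι → ℕ} {n : ℕ} {Φ : (ι → ℂ) → ℂ} (h : WOrd wt n Φ) :
    WOrd wt n (fun z => (starRingEnd ℂ) (Φ (cj z))) := by
  induction h with
  | term k P Ψ hP hk hΨ =>
    refine (WOrd.term k (map (starRingEnd ℂ) P) _ (fun m hm => hP (fun h0 => hm (by
      simp [coeff_map, h0]))) hk (analyticAt_conj hΨ)).congr' fun z => ?_
    rw [eval_map_conj, map_mul]
  | add Φ Ψ h1 h2 i1 i2 => exact (i1.add _ _ i2).congr' (by simp)
  | congr Φ Ψ h1 h i1 =>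
    refine .congr _ _ i1 ?_
    filter_upwards [tendsto_cj.eventually h] with z hz
    rw [hz]
end conj

section complexify
variable {n : ℕ}

/-- The point `(z, conj z)` of the real locus of `ℂⁿ × ℂⁿ`. -/
noncomputable def rp (z : Fin n → ℂ) : Fin n ⊕ Fin n → ℂ := Sum.elim z (cj z)

/-- The real basis `e_i, √-1 e_i` of `ℂⁿ`. -/
noncomputable def rbasis : Fin n ⊕ Fin n → (Fin n → ℂ) :=
  Sum.elim (fun i => Pi.single i 1) (fun i => Pi.single i Complex.I)

/-- The complexified real coordinates `(z + w) / 2`, `(z - w) / 2i`. -/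
noncomputable def rcoord (k : Fin n ⊕ Fin n) : (Fin n ⊕ Fin n → ℂ) →L[ℂ] ℂ :=
  Sum.elim
    (fun i => (1 / 2 : ℂ) • (ContinuousLinearMap.proj (R := ℂ) (φ := fun _ => ℂ) (Sum.inl i) +
      ContinuousLinearMap.proj (R := ℂ) (φ := fun _ => ℂ) (Sum.inr i)))
    (fun i => (1 / (2 * Complex.I) : ℂ) •
      (ContinuousLinearMap.proj (R := ℂ) (φ := fun _ => ℂ) (Sum.inl i) -
      ContinuousLinearMap.proj (R := ℂ) (φ := fun _ => ℂ) (Sum.inr i))) k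

theorem norm_rcoord_le (k : Fin n ⊕ Fin n) : ‖rcoord k‖ ≤ 1 := by
  refine ContinuousLinearMap.opNorm_le_bound _ zero_le_one fun u => ?_
  rcases k with i | i
  · have h1 := norm_le_pi_norm u (Sum.inl i)
    have h2 := norm_le_pi_norm u (Sum.inr i)
    have h3 := norm_add_le (u (Sum.inl i)) (u (Sum.inr i))
    simp only [rcoord, Sum.elim_inl, smul_apply, add_apply, ContinuousLinearMap.proj_apply,
      smul_eq_mul, norm_mul]
    norm_num
    linarith
  · have h1 := norm_le_pi_norm u (Sum.inl i)
    have h2 := norm_le_pi_norm u (Sum.inr i)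
    have h3 := norm_sub_le (u (Sum.inl i)) (u (Sum.inr i))
    simp only [rcoord, Sum.elim_inr, smul_apply, sub_apply, ContinuousLinearMap.proj_apply,
      smul_eq_mul, norm_mul]
    norm_num
    linarith

theorem norm_rbasis_le (k : Fin n ⊕ Fin n) : ‖rbasis k‖ ≤ 1 := by
  rcases k with i | i
  · refine (pi_norm_le_iff_of_nonneg zero_le_one).2 fun j => ?_
    by_cases h : j = i <;> simp [rbasis, Pi.single_apply, h]
  · refine (pi_norm_le_iff_of_nonneg zero_le_one).2 fun j => ?_
    by_cases h : j = i <;> simp [rbasis, Pi.single_apply, h]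

/-- The real coordinates of `z`. -/
noncomputable def rco (z : Fin n → ℂ) (k : Fin n ⊕ Fin n) : ℝ :=
  Sum.elim (fun i => (z i).re) (fun i => (z i).im) k

theorem rcoord_rp (z : Fin n → ℂ) (k : Fin n ⊕ Fin n) : rcoord k (rp z) = rco z k := by
  rcases k with i | i
  · change (1 / 2 : ℂ) * (z i + (starRingEnd ℂ) (z i)) = ((z i).re : ℂ)
    rw [Complex.add_conj]; push_cast; ring
  · change (1 / (2 * Complex.I) : ℂ) * (z i - (starRingEnd ℂ) (z i)) = ((z i).im : ℂ)
    rw [Complex.sub_conj]; push_cast; field_simp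

theorem sum_rco (z : Fin n → ℂ) : ∑ k, rco z k • rbasis k = z := by
  ext j
  rw [Finset.sum_apply, Fintype.sum_sum_type]
  simp only [rco, rbasis, Sum.elim_inl, Sum.elim_inr, Pi.smul_apply]
  rw [Finset.sum_eq_single j, Finset.sum_eq_single j]
  · simp [Complex.re_add_im]
  all_goals simp +contextual [Pi.single_apply, eq_comm]

/-- Complexification of the homogeneous terms of a real power series. -/
noncomputable def cplx (p : FormalMultilinearSeries ℝ (Fin n → ℂ) ℝ) :
    FormalMultilinearSeries ℂ (Fin n ⊕ Fin n → ℂ) ℂ := fun m =>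
  ∑ j : Fin m → Fin n ⊕ Fin n, ((p m (fun i => rbasis (j i)) : ℝ) : ℂ) •
    (ContinuousMultilinearMap.mkPiAlgebra ℂ (Fin m) ℂ).compContinuousLinearMap
      (fun i => rcoord (j i))

theorem cplx_apply (p : FormalMultilinearSeries ℝ (Fin n → ℂ) ℝ) (m : ℕ) (z : Fin n → ℂ) :
    cplx p m (fun _ => rp z) = ((p m (fun _ => z) : ℝ) : ℂ) := by
  have h1 : p m (fun _ => z) = ∑ j : Fin m → Fin n ⊕ Fin n,
      (∏ i, rco z (j i)) * p m (fun i => rbasis (j i)) := by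
    conv_lhs => rw [← sum_rco z]
    have := (p m).toMultilinearMap.map_sum
      (fun (_ : Fin m) (k : Fin n ⊕ Fin n) => rco z k • rbasis k)
    refine this.trans (Finset.sum_congr rfl fun j _ => ?_)
    exact (p m).toMultilinearMap.map_smul_univ (fun i => rco z (j i)) (fun i => rbasis (j i))
  rw [h1, cplx, sum_apply]
  push_cast
  refine Finset.sum_congr rfl fun j _ => ?_
  simp [rcoord_rp]
  ring

theorem norm_cplx_le (p : FormalMultilinearSeries ℝ (Fin n → ℂ) ℝ) (m : ℕ) :
    ‖cplx p m‖ ≤ ‖p m‖ * (2 * n : ℝ) ^ m := by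
  have hterm : ∀ j : Fin m → Fin n ⊕ Fin n, ‖((p m (fun i => rbasis (j i)) : ℝ) : ℂ) •
    (ContinuousMultilinearMap.mkPiAlgebra ℂ (Fin m) ℂ).compContinuousLinearMap
      (fun i => rcoord (j i))‖ ≤ ‖p m‖ := by
    intro j
    rw [norm_smul, Complex.norm_real]
    have h1 : ‖p m (fun i => rbasis (j i))‖ ≤ ‖p m‖ := by
      refine ((p m).le_opNorm _).trans ?_
      have : ∏ i, ‖(rbasis (j i) : Fin n → ℂ)‖ ≤ 1 :=
        Finset.prod_le_one (fun i _ => norm_nonneg _) (fun i _ => norm_rbasis_le _)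
      nlinarith [norm_nonneg (p m)]
    have h2 : ‖(ContinuousMultilinearMap.mkPiAlgebra ℂ (Fin m) ℂ).compContinuousLinearMap
      (fun i => rcoord (j i))‖ ≤ 1 := by
      refine (ContinuousMultilinearMap.norm_compContinuousLinearMap_le _ _).trans ?_
      have : ∏ i, ‖rcoord (j i)‖ ≤ 1 :=
        Finset.prod_le_one (fun i _ => norm_nonneg _) (fun i _ => norm_rcoord_le _)
      simpa using this
    nlinarith [norm_nonneg (p m), norm_nonneg (p m (fun i => rbasis (j i)))]
  refine (norm_sum_le _ _).trans ((Finset.sum_le_sum fun j _ => hterm j).trans ?_)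
  simp only [Finset.sum_const, Finset.card_univ, Fintype.card_pi, Fintype.card_sum,
    Fintype.card_fin, Finset.prod_const, nsmul_eq_mul]
  push_cast
  rw [← two_mul, mul_comm]

/-- A real-analytic germ is the restriction to the real locus of a holomorphic germ. -/
theorem exists_complexification [NeZero n] {F : (Fin n → ℂ) → ℝ} (hF : AnalyticAt ℝ F 0) :
    ∃ Φ : (Fin n ⊕ Fin n → ℂ) → ℂ, AnalyticAt ℂ Φ 0 ∧
      ∀ᶠ z in 𝓝 0, ((F z : ℝ) : ℂ) = Φ (rp z) := by
  obtain ⟨p, r, hp⟩ := hF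
  have hn : (0 : ℝ) < 2 * n := by
    have : 0 < n := Nat.pos_of_ne_zero (NeZero.ne n)
    positivity
  have hrad : 0 < (cplx p).radius := by
    obtain ⟨s, hs0, hs⟩ := ENNReal.lt_iff_exists_nnreal_btwn.1 (hp.r_pos.trans_le hp.r_le)
    obtain ⟨K, hK, hKb⟩ := p.norm_mul_pow_le_of_lt_radius hs
    have hs0 : 0 < s := by exact_mod_cast hs0
    have : ((s / (2 * n : NNReal) : NNReal) : ENNReal) ≤ (cplx p).radius := by
      refine FormalMultilinearSeries.le_radius_of_bound _ K fun m => ?_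
      calc ‖cplx p m‖ * ((s / (2 * n : NNReal) : NNReal) : ℝ) ^ m
          ≤ ‖p m‖ * (2 * n : ℝ) ^ m * ((s / (2 * n : NNReal) : NNReal) : ℝ) ^ m := by
            gcongr; exact norm_cplx_le p m
        _ = ‖p m‖ * (s : ℝ) ^ m := by
            push_cast
            rw [mul_assoc, ← mul_pow, mul_div_cancel₀ _ hn.ne']
        _ ≤ K := hKb m
    refine lt_of_lt_of_le ?_ this
    have h2 : (0 : NNReal) < 2 * n := by exact_mod_cast hn
    exact_mod_cast div_pos hs0 h2
  have hs := (cplx p).hasFPowerSeriesOnBall hrad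
  refine ⟨(cplx p).sum, hs.analyticAt, ?_⟩
  have hb : Metric.eball (0 : Fin n → ℂ) r ∈ 𝓝 0 := Metric.eball_mem_nhds _ hp.r_pos
  have hb2 : Metric.eball (0 : Fin n ⊕ Fin n → ℂ) (cplx p).radius ∈ 𝓝 0 :=
    Metric.eball_mem_nhds _ hrad
  have ht : Tendsto (rp : (Fin n → ℂ) → _) (𝓝 0) (𝓝 0) := by
    have hc : Continuous (rp : (Fin n → ℂ) → _) := by
      refine continuous_pi fun k => ?_
      rcases k with i | i
      · simp only [rp, Sum.elim_inl]; fun_prop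
      · simp only [rp, Sum.elim_inr, cj]; fun_prop
    have h0 : rp (0 : Fin n → ℂ) = 0 := by ext k; rcases k <;> simp [rp]
    simpa [h0] using hc.tendsto 0
  filter_upwards [hb, ht.eventually hb2] with z hz hz2
  have h1 := (hp.hasSum hz).mapL Complex.ofRealCLM
  have h2 := hs.hasSum hz2
  simp only [zero_add, cplx_apply] at h1 h2
  exact h1.unique h2

end complexify

/-! ### The complexified defining function -/

section reallocus
variable {n : ℕ}

theorem continuous_rp : Continuous (rp : (Fin n → ℂ) → _) := by
  refine continuous_pi fun k => ?_
  rcases k with i | i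
  · simp only [rp, Sum.elim_inl]; fun_prop
  · simp only [rp, Sum.elim_inr, cj]; fun_prop

@[simp] theorem rp_zero : rp (0 : Fin n → ℂ) = 0 := by ext k; rcases k <;> simp [rp]

theorem tendsto_rp : Tendsto (rp : (Fin n → ℂ) → _) (𝓝 0) (𝓝 0) := by
  simpa using (continuous_rp (n := n)).tendsto 0

/-- The real locus `{(z, conj z)}` is Zariski dense in `ℂⁿ × ℂⁿ`. -/
theorem eq_zero_of_rp {T : MvPolynomial (Fin n ⊕ Fin n) ℂ} (h : ∀ z, eval (rp z) T = 0) :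
    T = 0 := by
  set σ : Fin n ⊕ Fin n → MvPolynomial (Fin n ⊕ Fin n) ℂ :=
    Sum.elim (fun i => X (Sum.inl i) + C Complex.I * X (Sum.inr i))
      (fun i => X (Sum.inl i) - C Complex.I * X (Sum.inr i)) with hσ
  have h1 : bind₁ σ T = 0 := by
    refine funext_set (fun _ => Set.range ((↑) : ℝ → ℂ))
      (fun _ => Set.infinite_range_of_injective Complex.ofReal_injective) fun x hx => ?_
    have hx' : ∀ k, (starRingEnd ℂ) (x k) = x k := fun k => by
      obtain ⟨y, hy⟩ := hx k trivial
      rw [← hy, Complex.conj_ofReal]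
    rw [← coe_aeval_eq_eval, RingHom.coe_coe, aeval_bind₁, map_zero]
    have : (fun i => (aeval x) (σ i)) = rp (fun i => x (Sum.inl i) + Complex.I * x (Sum.inr i)) := by
      ext k
      rcases k with i | i
      · simp [hσ, rp]
      · simp [hσ, rp, cj, hx', sub_eq_add_neg]
    rw [this]
    exact h _
  refine MvPolynomial.funext fun p => ?_
  have h2 := congrArg (eval (Sum.elim (fun i => (p (Sum.inl i) + p (Sum.inr i)) / 2)
    (fun i => (p (Sum.inl i) - p (Sum.inr i)) / (2 * Complex.I)))) h1
  rw [← coe_aeval_eq_eval, RingHom.coe_coe, aeval_bind₁, map_zero] at h2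
  rw [map_zero, ← h2]
  change (aeval p) T = _
  congr 2
  ext k
  rcases k with i | i
  · simp [hσ]; field_simp; ring
  · simp [hσ]; field_simp; ring

/-- The reflection of `ℂⁿ × ℂⁿ` across the real locus. -/
noncomputable def sw (p : Fin n ⊕ Fin n → ℂ) : Fin n ⊕ Fin n → ℂ := cj (p ∘ Sum.swap)

theorem sw_rp (z : Fin n → ℂ) : sw (rp z) = rp z := by
  ext k; rcases k with i | i <;> simp [sw, rp, cj]

@[simp] theorem sw_sw (p : Fin n ⊕ Fin n → ℂ) : sw (sw p) = p := by
  ext k; rcases k with i | i <;> simp [sw, cj]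

@[simp] theorem sw_inl (p : Fin n ⊕ Fin n → ℂ) : sw p ∘ Sum.inl = cj (p ∘ Sum.inr) := by
  ext k; simp [sw, cj]

@[simp] theorem sw_inr (p : Fin n ⊕ Fin n → ℂ) : sw p ∘ Sum.inr = cj (p ∘ Sum.inl) := by
  ext k; simp [sw, cj]

/-- The weights on `ℂⁿ × ℂⁿ`. -/
def wt2 (wt : Fin n → ℕ) : Fin n ⊕ Fin n → ℕ := Sum.elim wt wt

theorem wt2_pos {wt : Fin n → ℕ} (hwt : ∀ i, 0 < wt i) : ∀ k, 0 < wt2 wt k := by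
  rintro (i | i) <;> exact hwt i

theorem sc_rp (wt : Fin n → ℕ) (t : ℝ) (z : Fin n → ℂ) : sc (wt2 wt) t (rp z) = rp (sc wt t z) := by
  ext k; rcases k with i | i <;> simp [sc, rp, wt2, cj]

theorem sc_inl (wt : Fin n → ℕ) (t : ℂ) (p : Fin n ⊕ Fin n → ℂ) :
    sc (wt2 wt) t p ∘ Sum.inl = sc wt t (p ∘ Sum.inl) := rfl

theorem sc_inr (wt : Fin n → ℕ) (t : ℂ) (p : Fin n ⊕ Fin n → ℂ) :
    sc (wt2 wt) t p ∘ Sum.inr = sc wt t (p ∘ Sum.inr) := rfl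

/-- The coefficientwise conjugate polynomial. -/
noncomputable abbrev Qb (Q : MvPolynomial (Fin n) ℂ) : MvPolynomial (Fin n) ℂ :=
  map (starRingEnd ℂ) Q

/-- The complexification `Q(z) + conj Q(w)` of `2 Re Q`. -/
noncomputable def dbl (Q : MvPolynomial (Fin n) ℂ) : MvPolynomial (Fin n ⊕ Fin n) ℂ :=
  rename Sum.inl Q + rename Sum.inr (Qb Q)

theorem isWH_Qb {wt : Fin n → ℕ} {d : ℕ} {Q : MvPolynomial (Fin n) ℂ}
    (hQ : IsWeightedHomogeneous wt Q d) : IsWeightedHomogeneous wt (Qb Q) d :=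
  fun m hm => hQ (fun h0 => hm (by simp [coeff_map, h0]))

theorem isWH_rename {κ ι : Type*} {wt : ι → ℕ} {wt' : κ → ℕ} (e : ι → κ)
    (he : ∀ i, wt' (e i) = wt i) {d : ℕ} {Q : MvPolynomial ι ℂ}
    (hQ : IsWeightedHomogeneous wt Q d) : IsWeightedHomogeneous wt' (rename e Q) d := by
  intro m hm
  obtain ⟨u, rfl, hu⟩ := coeff_rename_ne_zero _ _ _ hm
  rw [← hQ hu, Finsupp.weight_apply, Finsupp.weight_apply,
    Finsupp.sum_mapDomain_index (by simp) (by intros; simp [add_mul])]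
  simp [he]

theorem isWH_dbl {wt : Fin n → ℕ} {d : ℕ} {Q : MvPolynomial (Fin n) ℂ}
    (hQ : IsWeightedHomogeneous wt Q d) : IsWeightedHomogeneous (wt2 wt) (dbl Q) d :=
  (isWH_rename Sum.inl (fun _ => rfl) hQ).add (isWH_rename Sum.inr (fun _ => rfl) (isWH_Qb hQ))

theorem eval_dbl (Q : MvPolynomial (Fin n) ℂ) (p : Fin n ⊕ Fin n → ℂ) :
    eval p (dbl Q) = eval (p ∘ Sum.inl) Q + eval (p ∘ Sum.inr) (Qb Q) := by
  rw [dbl, map_add, eval_rename, eval_rename]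

theorem eval_dbl_sw (Q : MvPolynomial (Fin n) ℂ) (p : Fin n ⊕ Fin n → ℂ) :
    eval (sw p) (dbl Q) = (starRingEnd ℂ) (eval p (dbl Q)) := by
  rw [eval_dbl, eval_dbl, map_add, sw_inl, sw_inr, eval_map_conj, eval_map_conj]
  simp [add_comm]

theorem eval_dbl_rp (Q : MvPolynomial (Fin n) ℂ) (z : Fin n → ℂ) :
    eval (rp z) (dbl Q) = ((2 * (eval z Q).re : ℝ) : ℂ) := by
  rw [eval_dbl, show rp z ∘ Sum.inl = z from rfl, show rp z ∘ Sum.inr = cj z from rfl,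
    eval_map_conj, cj_cj, Complex.add_conj]

theorem tendsto_sc_real {wt : Fin n → ℕ} (hwt : ∀ i, 0 < wt i) (z : Fin n → ℂ) :
    Tendsto (fun t : ℝ => sc wt (t : ℂ) z) (𝓝[>] 0) (𝓝 0) := by
  have h5 : Tendsto (fun t : ℝ => ((t : ℂ), z)) (𝓝[>] 0) (𝓝 (0, z)) := by
    have : Continuous (fun t : ℝ => ((t : ℂ), z)) := by fun_prop
    exact (this.tendsto' 0 _ (by simp)).mono_left nhdsWithin_le_nhds
  exact (tendsto_sc hwt z).comp h5

set_option maxHeartbeats 1000000 in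
/-- Growth of `H` along real dilations controls the weighted order of its complexification,
because the real locus is Zariski dense. -/
theorem wOrd_of_real {wt : Fin n → ℕ} (hwt : ∀ i, 0 < wt i) {d : ℕ} {H : (Fin n → ℂ) → ℝ}
    {HC : (Fin n ⊕ Fin n → ℂ) → ℂ} (hHC : AnalyticAt ℂ HC 0)
    (hH : ∀ᶠ z in 𝓝 0, ((H z : ℝ) : ℂ) = HC (rp z))
    (hHord : ∃ r > (0:ℝ), ∀ z : Fin n → ℂ, ‖z‖ < r →
      Tendsto (fun lam : ℝ => H (sc wt lam z) / lam ^ d) (𝓝[>] 0) (𝓝 0)) :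
    WOrd (wt2 wt) (d + 1) HC := by
  obtain ⟨r, hr, hHord⟩ := hHord
  have key : ∀ k, k ≤ d + 1 → WOrd (wt2 wt) k HC := by
    intro k
    induction k with
    | zero => exact fun _ => WOrd.of_analytic hHC
    | succ k ih =>
      intro hk
      have hw2 := wt2_pos hwt
      obtain ⟨P, hP, hHP⟩ := (ih (by lia)).lead hw2
      have hsmall : ∀ z : Fin n → ℂ, ‖z‖ < r → eval (rp z) P = 0 := by
        intro z hz
        refine WOrd.succ_of_tendsto hw2 hP hHP ?_
        have h1 := hHord z hz
        have h2 : Tendsto (fun t : ℝ => t ^ (d - k)) (𝓝[>] 0) (𝓝 (0 ^ (d - k))) :=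
          ((continuous_id.pow (d - k)).tendsto (0 : ℝ)).mono_left nhdsWithin_le_nhds
        have h3 := (Complex.continuous_ofReal.tendsto _).comp (h2.mul h1)
        simp only [mul_zero, Complex.ofReal_zero] at h3
        refine h3.congr' ?_
        have h4 := tendsto_sc_real hwt z
        filter_upwards [h4.eventually hH, self_mem_nhdsWithin] with t ht ht0
        have ht0' : (t : ℂ) ≠ 0 := by exact_mod_cast (ne_of_gt ht0)
        rw [sc_rp, ← ht]
        simp only [Function.comp]
        push_cast
        have : (t : ℂ) ^ d = (t : ℂ) ^ (d - k) * (t : ℂ) ^ k := by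
          rw [← pow_add]; congr 1; lia
        rw [this]
        field_simp
      have hall : ∀ z : Fin n → ℂ, eval (rp z) P = 0 := by
        intro z
        have h4 := tendsto_sc_real hwt z
        have h6 : ∀ᶠ t : ℝ in 𝓝[>] 0, sc wt (t : ℂ) z ∈ Metric.ball (0 : Fin n → ℂ) r :=
          h4.eventually (Metric.ball_mem_nhds (0 : Fin n → ℂ) hr)
        have h8 : ∀ᶠ t : ℝ in 𝓝[>] 0, 0 < t := self_mem_nhdsWithin
        obtain ⟨t, ht, ht0⟩ := (h6.and h8).exists
        have h7 := hsmall (sc wt t z) (by simpa using ht)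
        rw [← sc_rp, eval_sc hP] at h7
        have ht0' : (t : ℂ) ≠ 0 := by exact_mod_cast (ne_of_gt ht0)
        exact (mul_eq_zero.1 h7).resolve_left (pow_ne_zero _ ht0')
      have hP0 := eq_zero_of_rp hall
      exact hHP.congr' fun z => by simp [hP0]
  exact key _ le_rfl

/-- The complexified defining function: it is symmetric under reflection, restricts to `2 F` on
the real locus, and its leading form is `Q(z) + conj Q(w)`. -/
theorem exists_FC [NeZero n] {wt : Fin n → ℕ} (hwt : ∀ i, 0 < wt i) {d : ℕ}
    {Q : MvPolynomial (Fin n) ℂ} {F H : (Fin n → ℂ) → ℝ} (hH : AnalyticAt ℝ H 0)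
    (hFeq : ∀ᶠ z in 𝓝 (0 : Fin n → ℂ), F z = (eval z Q).re + H z)
    (hHord : ∃ r > (0:ℝ), ∀ z : Fin n → ℂ, ‖z‖ < r →
      Tendsto (fun lam : ℝ => H (sc wt lam z) / lam ^ d) (𝓝[>] 0) (𝓝 0)) :
    ∃ Φ : (Fin n ⊕ Fin n → ℂ) → ℂ,
      WOrd (wt2 wt) (d + 1) (fun p => Φ p - eval p (dbl Q)) ∧
      (∀ᶠ z in 𝓝 0, ((2 * F z : ℝ) : ℂ) = Φ (rp z)) ∧
      ∀ p, Φ (sw p) = (starRingEnd ℂ) (Φ p) := by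
  obtain ⟨HC, hHC, hHeq⟩ := exists_complexification hH
  have hW := wOrd_of_real hwt hHC hHeq hHord
  have hW2 : WOrd (wt2 wt) (d + 1) (fun p => (starRingEnd ℂ) (HC (sw p))) :=
    hW.conj.comp_proj Sum.swap (by rintro (i | i) <;> rfl)
  refine ⟨fun p => eval p (dbl Q) + (HC p + (starRingEnd ℂ) (HC (sw p))), ?_, ?_, ?_⟩
  · exact (hW.add _ _ hW2).congr' fun p => by ring
  · filter_upwards [hFeq, hHeq] with z h1 h2
    rw [eval_dbl_rp, sw_rp, ← h2, h1, Complex.conj_ofReal]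
    push_cast; ring
  · intro p
    simp only [sw_sw, eval_dbl_sw, map_add, Complex.conj_conj]
    ring

end reallocus

/-! ### Isolated critical points and the Hamiltonian derivation -/

section isolated

theorem pderiv_dbl_inl {n : ℕ} (Q : MvPolynomial (Fin n) ℂ) (i : Fin n) :
    pderiv (Sum.inl i) (dbl Q) = rename Sum.inl (pderiv i Q) := by
  rw [dbl, map_add, pderiv_rename Sum.inl_injective]
  have : pderiv (Sum.inl i) (rename (Sum.inr : Fin n → Fin n ⊕ Fin n) (Qb Q)) = 0 := by
    refine pderiv_eq_zero_of_notMem_vars fun h => ?_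
    have := vars_rename (Sum.inr : Fin n → Fin n ⊕ Fin n) (Qb Q) h
    simp at this
  rw [this, add_zero]

theorem pderiv_dbl_inr {n : ℕ} (Q : MvPolynomial (Fin n) ℂ) (i : Fin n) :
    pderiv (Sum.inr i) (dbl Q) = rename Sum.inr (pderiv i (Qb Q)) := by
  rw [dbl, map_add, pderiv_rename Sum.inr_injective]
  have : pderiv (Sum.inr i) (rename (Sum.inl : Fin n → Fin n ⊕ Fin n) Q) = 0 := by
    refine pderiv_eq_zero_of_notMem_vars fun h => ?_
    have := vars_rename (Sum.inl : Fin n → Fin n ⊕ Fin n) Q h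
    simp at this
  rw [this, zero_add]

/-- `0` is the only critical point of `Q`. -/
def Iso (Q : MvPolynomial (Fin 2) ℂ) : Prop := ∀ z, (∀ i, eval z (pderiv i Q) = 0) ↔ z = 0

/-- By homogeneity, an isolated critical point at `0` is the only critical point in `ℂ²`. -/
theorem iso_of_germ {wt : Fin 2 → ℕ} (hwt : ∀ i, 0 < wt i) {d : ℕ} {Q : MvPolynomial (Fin 2) ℂ}
    (hQ : IsWeightedHomogeneous wt Q d)
    (h0 : ∀ i, eval (0 : Fin 2 → ℂ) (pderiv i Q) = 0)
    (h : ∀ᶠ z in 𝓝 (0 : Fin 2 → ℂ), (∀ i, eval z (pderiv i Q) = 0) → z = 0) : Iso Q := by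
  intro z
  refine ⟨fun hz => ?_, by rintro rfl; exact h0⟩
  have h8 : ∀ᶠ t : ℝ in 𝓝[>] 0, 0 < t := self_mem_nhdsWithin
  obtain ⟨t, ht, ht0⟩ := (((tendsto_sc_real hwt z).eventually h).and h8).exists
  have ht0' : (t : ℂ) ≠ 0 := by exact_mod_cast (ne_of_gt ht0)
  have h2 : sc wt t z = 0 := by
    refine ht fun i => ?_
    have := eval_sc_pderiv (s := 0) (n := d) (R := Q) (wt := wt)
      (fun c p => by rw [eval_sc hQ]; simp) i t z
    rw [hz i, mul_zero] at this
    exact (mul_eq_zero.1 this).resolve_left (pow_ne_zero _ ht0')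
  ext i
  have := congrFun h2 i
  exact (mul_eq_zero.1 this).resolve_left (pow_ne_zero _ ht0')

theorem Iso.conj {Q : MvPolynomial (Fin 2) ℂ} (h : Iso Q) : Iso (Qb Q) := by
  intro z
  have h1 : (∀ i, eval z (pderiv i (Qb Q)) = 0) ↔ ∀ i, eval (cj z) (pderiv i Q) = 0 := by
    refine forall_congr' fun i => ?_
    rw [pderiv_map, eval_map_conj, map_eq_zero]
  rw [h1, h (cj z)]
  exact ⟨fun h2 => by rw [← cj_cj z, h2, cj_zero], by rintro rfl; simp⟩

theorem Iso.neg {Q : MvPolynomial (Fin 2) ℂ} (h : Iso Q) : Iso (-Q) := by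
  intro z
  rw [← h z]; simp

theorem Iso.dbl {Q : MvPolynomial (Fin 2) ℂ} (h : Iso Q) {q : Fin 2 ⊕ Fin 2 → ℂ} (hq : q ≠ 0) :
    ∃ i, eval q (pderiv i (dbl Q)) ≠ 0 := by
  by_contra! hc
  have h1 : q ∘ Sum.inl = 0 := (h _).1 fun i => by
    have := hc (Sum.inl i)
    rwa [pderiv_dbl_inl, eval_rename] at this
  have h2 : q ∘ Sum.inr = 0 := (h.conj _).1 fun i => by
    have := hc (Sum.inr i)
    rwa [pderiv_dbl_inr, eval_rename] at this
  refine hq ?_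
  ext k
  rcases k with i | i
  · exact congrFun h1 i
  · exact congrFun h2 i

theorem Iso.ne_zero {Q : MvPolynomial (Fin 2) ℂ} (h : Iso Q) : Q ≠ 0 := by
  rintro rfl
  have := congrFun ((h 1).1 (by simp)) 0
  simp at this

/-- Nullstellensatz: an ideal containing the partial derivatives of `Q` contains powers of the
variables. -/
theorem Iso.exists_pow_mem {Q : MvPolynomial (Fin 2) ℂ} (h : Iso Q) {I : Ideal (MvPolynomial (Fin 2) ℂ)}
    (hI : ∀ i, pderiv i Q ∈ I) (i : Fin 2) : ∃ N, (X i : MvPolynomial (Fin 2) ℂ) ^ N ∈ I := by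
  have : (X i : MvPolynomial (Fin 2) ℂ) ∈ I.radical := by
    rw [← vanishingIdeal_zeroLocus_eq_radical (k := ℂ) (K := ℂ) I]
    intro x hx
    have : x = 0 := (h x).1 fun j => hx _ (hI j)
    simp [this]
  exact this

theorem Iso.isRelPrime {Q : MvPolynomial (Fin 2) ℂ} (h : Iso Q) :
    IsRelPrime (pderiv 0 Q) (pderiv 1 Q) := by
  intro g h0 h1
  have hI : ∀ i, pderiv i Q ∈ Ideal.span {g} := by
    intro i
    rw [Ideal.mem_span_singleton]
    fin_cases i
    · exact h0
    · exact h1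
  obtain ⟨N, hN⟩ := h.exists_pow_mem hI 0
  obtain ⟨M, hM⟩ := h.exists_pow_mem hI 1
  rw [Ideal.mem_span_singleton] at hN hM
  have hX : IsRelPrime (X 0 : MvPolynomial (Fin 2) ℂ) (X 1) := by
    rw [(X_prime (i := (0 : Fin 2)) (R := ℂ)).irreducible.isRelPrime_iff_not_dvd]
    rw [X_dvd_X]
    simp
  exact (hX.pow (m := N) (n := M)) hN hM

/-- The Hamiltonian vector field of `Q`. -/
noncomputable def hv (Q : MvPolynomial (Fin 2) ℂ) (i : Fin 2) : MvPolynomial (Fin 2) ℂ :=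
  if i = 0 then - pderiv 1 Q else pderiv 0 Q

/-- The Hamiltonian derivation of `Q`. -/
noncomputable def ham (Q p : MvPolynomial (Fin 2) ℂ) : MvPolynomial (Fin 2) ℂ :=
  ∑ i, hv Q i * pderiv i p

theorem ham_eq (Q p : MvPolynomial (Fin 2) ℂ) :
    ham Q p = pderiv 0 Q * pderiv 1 p - pderiv 1 Q * pderiv 0 p := by
  simp [ham, hv, Fin.sum_univ_two]; ring

theorem eq_C_of_pderiv {p : MvPolynomial (Fin 2) ℂ} (h : ∀ i, pderiv i p = 0) :
    ∃ c, p = C c := by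
  refine ⟨coeff 0 p, ?_⟩
  ext m
  rw [coeff_C]
  split_ifs with hm
  · rw [hm]
  · obtain ⟨i, hi⟩ : ∃ i, m i ≠ 0 := by
      by_contra! hc
      exact hm (by ext i; simp [hc i])
    have h1 := congrArg (coeff (m - Finsupp.single i 1)) (h i)
    rw [coeff_pderiv, coeff_zero] at h1
    have h2 : m - Finsupp.single i 1 + Finsupp.single i 1 = m := by
      refine tsub_add_cancel_of_le ?_
      rw [Finsupp.single_le_iff]
      lia
    rw [h2] at h1
    refine (mul_eq_zero.1 h1).resolve_right ?_
    exact Nat.cast_add_one_ne_zero _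

theorem pderiv_aeval (Q : MvPolynomial (Fin 2) ℂ) (r : Polynomial ℂ) (i : Fin 2) :
    pderiv i (Polynomial.aeval Q r) = Polynomial.aeval Q (Polynomial.derivative r) * pderiv i Q := by
  induction r using Polynomial.induction_on' with
  | add p q h1 h2 => simp [h1, h2, add_mul]
  | monomial n a =>
    simp [Polynomial.aeval_monomial, Polynomial.derivative_monomial, Derivation.leibniz_pow,
      Algebra.smul_def, algebraMap_eq, Derivation.leibniz]
    ring

theorem exists_antideriv (r : Polynomial ℂ) : ∃ R : Polynomial ℂ, Polynomial.derivative R = r := by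
  induction r using Polynomial.induction_on' with
  | add p q h1 h2 =>
    obtain ⟨P, rfl⟩ := h1
    obtain ⟨R, rfl⟩ := h2
    exact ⟨P + R, by simp⟩
  | monomial n a =>
    refine ⟨Polynomial.monomial (n + 1) (a / (n + 1)), ?_⟩
    rw [Polynomial.derivative_monomial]
    have : ((n : ℂ) + 1) ≠ 0 := by exact_mod_cast Nat.succ_ne_zero n
    simp only [Nat.cast_add, Nat.cast_one, Nat.add_sub_cancel]
    rw [div_mul_cancel₀ _ this]

theorem pderiv_comm (p : MvPolynomial (Fin 2) ℂ) (i j : Fin 2) :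
    pderiv i (pderiv j p) = pderiv j (pderiv i p) := by
  ext m
  simp only [coeff_pderiv]
  rcases eq_or_ne i j with rfl | hij
  · rfl
  rw [add_right_comm]
  simp [hij, hij.symm]
  ring

theorem totalDegree_pderiv_lt {p : MvPolynomial (Fin 2) ℂ} {i : Fin 2} (h : pderiv i p ≠ 0) :
    (pderiv i p).totalDegree < p.totalDegree := by
  obtain ⟨m, hm, hm2⟩ := Finset.exists_mem_eq_sup (pderiv i p).support (support_nonempty.2 h)
    (fun s => s.sum fun _ e => e)
  have h1 : m + Finsupp.single i 1 ∈ p.support := by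
    rw [mem_support_iff] at hm ⊢
    rw [coeff_pderiv] at hm
    exact left_ne_zero_of_mul hm
  have h2 := le_totalDegree h1
  rw [Finsupp.sum_add_index' (by simp) (by simp), Finsupp.sum_single_index rfl] at h2
  change (pderiv i p).support.sup _ < _
  rw [hm2]
  lia

/-- The constants of the Hamiltonian derivation of a polynomial with isolated critical point are
the polynomials in `Q`. -/
theorem Iso.ham_ker {Q : MvPolynomial (Fin 2) ℂ} (h : Iso Q) :
    ∀ (N : ℕ) (p : MvPolynomial (Fin 2) ℂ), p.totalDegree ≤ N → ham Q p = 0 →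
      ∃ r : Polynomial ℂ, p = Polynomial.aeval Q r := by
  intro N
  induction N using Nat.strong_induction_on with
  | _ N ih =>
  intro p hN hp
  by_cases hcst : ∀ i, pderiv i p = 0
  · obtain ⟨c, rfl⟩ := eq_C_of_pderiv hcst
    exact ⟨Polynomial.C c, by simp [algebraMap_eq]⟩
  rw [ham_eq, sub_eq_zero] at hp
  have hdvd : pderiv 0 Q ∣ pderiv 0 p :=
    h.isRelPrime.dvd_of_dvd_mul_left (Dvd.intro _ hp)
  obtain ⟨c, hc0⟩ := hdvd
  have hne : pderiv 0 Q ≠ 0 := by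
    intro h0
    have h1 := h.isRelPrime
    rw [h0, isRelPrime_zero_left] at h1
    have h2 := h1.map (eval (0 : Fin 2 → ℂ))
    rw [(h 0).2 rfl 1] at h2
    simp at h2
  have hc1 : pderiv 1 p = pderiv 1 Q * c := by
    refine mul_left_cancel₀ hne ?_
    rw [hp, hc0]; ring
  have hc : ∀ i, pderiv i p = pderiv i Q * c := by
    intro i; fin_cases i
    · exact hc0
    · exact hc1
  have hcdeg : c.totalDegree < N := by
    push Not at hcst
    obtain ⟨i, hi⟩ := hcst
    have h1 := totalDegree_pderiv_lt hi
    have h2 := hi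
    rw [hc i] at h2
    rw [hc i, totalDegree_mul_of_isDomain (left_ne_zero_of_mul h2) (right_ne_zero_of_mul h2)] at h1
    lia
  have hham : ham Q c = 0 := by
    have h1 := pderiv_comm p 0 1
    rw [hc0, hc1, pderiv_mul, pderiv_mul, pderiv_comm Q 0 1] at h1
    rw [ham_eq]
    linear_combination -h1
  obtain ⟨r, hr⟩ := ih _ hcdeg c le_rfl hham
  obtain ⟨R, rfl⟩ := exists_antideriv r
  obtain ⟨k, hk⟩ := eq_C_of_pderiv (p := p - Polynomial.aeval Q R) fun i => by
    rw [map_sub, hc i, pderiv_aeval, hr]; ring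
  refine ⟨R + Polynomial.C k, ?_⟩
  rw [map_add, Polynomial.aeval_C, algebraMap_eq, ← hk]; ring

theorem transcendental_of_iso {wt : Fin 2 → ℕ} {d : ℕ} (hd : 0 < d)
    {Q : MvPolynomial (Fin 2) ℂ} (hQ : IsWeightedHomogeneous wt Q d) (hQ0 : Q ≠ 0)
    {r : Polynomial ℂ} (hr : Polynomial.aeval Q r = 0) : r = 0 := by
  obtain ⟨p, hp⟩ : ∃ p, eval p Q ≠ 0 := by
    by_contra! hc
    exact hQ0 (MvPolynomial.funext fun x => by simpa using hc x)
  refine Polynomial.funext fun x => ?_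
  obtain ⟨c, hc⟩ := IsAlgClosed.exists_pow_nat_eq (x / eval p Q) hd
  have h1 := congrArg (eval (sc wt c p)) hr
  rw [map_zero, Polynomial.aeval_def, Polynomial.hom_eval₂, eval_sc hQ, hc, div_mul_cancel₀ _ hp] at h1
  have h2 : (eval (sc wt c p)).comp (algebraMap ℂ (MvPolynomial (Fin 2) ℂ)) = RingHom.id ℂ := by
    ext; simp [algebraMap_eq]
  rw [h2] at h1
  simpa using h1

end isolated

/-! ### The fibre product `Q(z) = - conj Q(w)` as a tensor product over `ℂ[t]` -/

section tensor
open TensorProduct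

/-- `ℂ[z₁,z₂]` regarded as an algebra over `ℂ[t]` through `t ↦ Q`. -/
def MQ (_Q : MvPolynomial (Fin 2) ℂ) : Type := MvPolynomial (Fin 2) ℂ

noncomputable instance (Q : MvPolynomial (Fin 2) ℂ) : CommRing (MQ Q) :=
  inferInstanceAs (CommRing (MvPolynomial (Fin 2) ℂ))

instance (Q : MvPolynomial (Fin 2) ℂ) : IsDomain (MQ Q) :=
  inferInstanceAs (IsDomain (MvPolynomial (Fin 2) ℂ))

noncomputable instance (Q : MvPolynomial (Fin 2) ℂ) : Algebra (Polynomial ℂ) (MQ Q) :=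
  ((Polynomial.aeval Q : Polynomial ℂ →ₐ[ℂ] MvPolynomial (Fin 2) ℂ) :
    Polynomial ℂ →+* MvPolynomial (Fin 2) ℂ).toAlgebra

variable {Q : MvPolynomial (Fin 2) ℂ}

/-- The identity `ℂ[z₁,z₂] → MQ Q`. -/
noncomputable def toMQ (Q : MvPolynomial (Fin 2) ℂ) : MvPolynomial (Fin 2) ℂ ≃+* MQ Q :=
  RingEquiv.refl _

theorem smul_toMQ (r : Polynomial ℂ) (p : MvPolynomial (Fin 2) ℂ) :
    r • toMQ Q p = toMQ Q (Polynomial.aeval Q r * p) := rfl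

theorem ham_aeval_mul (r : Polynomial ℂ) (p : MvPolynomial (Fin 2) ℂ) :
    ham Q (Polynomial.aeval Q r * p) = Polynomial.aeval Q r * ham Q p := by
  simp only [ham_eq, pderiv_mul, pderiv_aeval]; ring

/-- The Hamiltonian derivation as a `ℂ[t]`-linear map. -/
noncomputable def hamL (Q : MvPolynomial (Fin 2) ℂ) : MQ Q →ₗ[Polynomial ℂ] MQ Q where
  toFun m := toMQ Q (ham Q ((toMQ Q).symm m))
  map_add' x y := by simp [ham_eq]; ring
  map_smul' r x := by
    obtain ⟨p, rfl⟩ := (toMQ Q).surjective x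
    simp [smul_toMQ, ham_aeval_mul]

theorem hamL_toMQ (p : MvPolynomial (Fin 2) ℂ) : hamL Q (toMQ Q p) = toMQ Q (ham Q p) := by
  simp [hamL]

theorem torsionFree_MQ (hQ : ∀ r : Polynomial ℂ, Polynomial.aeval Q r = 0 → r = 0) :
    Module.IsTorsionFree (Polynomial ℂ) (MQ Q) where
  isSMulRegular r hr := by
    intro x y hxy
    obtain ⟨p, rfl⟩ := (toMQ Q).surjective x
    obtain ⟨q, rfl⟩ := (toMQ Q).surjective y
    simp only [smul_toMQ] at hxy
    have h1 := (toMQ Q).injective hxy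
    have h2 : Polynomial.aeval Q r ≠ 0 := fun h => hr.ne_zero (hQ r h)
    rw [mul_left_cancel₀ h2 h1]

/-- For torsion-free (hence flat) modules over a Dedekind domain, the kernel of `f ⊗ g` is the sum
of the images of `M ⊗ ker g` and `ker f ⊗ N`. -/
theorem mem_ker_map {R M N : Type*} [CommRing R] [IsDedekindDomain R] [AddCommGroup M]
    [AddCommGroup N] [Module R M] [Module R N] [Module.IsTorsionFree R M]
    [Module.IsTorsionFree R N] (f : M →ₗ[R] M) (g : N →ₗ[R] N) (x : M ⊗[R] N)
    (hx : TensorProduct.map f g x = 0) :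
    x ∈ LinearMap.range (LinearMap.lTensor M (LinearMap.ker g).subtype) ⊔
      LinearMap.range (LinearMap.rTensor N (LinearMap.ker f).subtype) := by
  have hfac : TensorProduct.map f g = TensorProduct.map (LinearMap.range f).subtype
      (LinearMap.range g).subtype ∘ₗ TensorProduct.map f.rangeRestrict g.rangeRestrict := by
    rw [← TensorProduct.map_comp]; rfl
  have hinj : Function.Injective (TensorProduct.map (LinearMap.range f).subtype
      (LinearMap.range g).subtype) := by
    rw [← LinearMap.lTensor_comp_rTensor]
    exact (Module.Flat.lTensor_preserves_injective_linearMap _ Subtype.coe_injective).comp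
      (Module.Flat.rTensor_preserves_injective_linearMap _ Subtype.coe_injective)
  have h0 : TensorProduct.map f.rangeRestrict g.rangeRestrict x = 0 := by
    apply hinj
    rw [map_zero, ← hx, hfac]; rfl
  rw [← TensorProduct.map_ker (f := (LinearMap.ker f).subtype) (g := f.rangeRestrict)
    (f' := (LinearMap.ker g).subtype) (g' := g.rangeRestrict)]
  · exact h0
  · rw [LinearMap.exact_iff, Submodule.range_subtype, LinearMap.ker_rangeRestrict]
  · exact f.surjective_rangeRestrict
  · rw [LinearMap.exact_iff, Submodule.range_subtype, LinearMap.ker_rangeRestrict]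
  · exact g.surjective_rangeRestrict

variable {P : MvPolynomial (Fin 2) ℂ}

theorem ker_hamL (h : Iso Q) {m : MQ Q} (hm : hamL Q m = 0) :
    ∃ r : Polynomial ℂ, m = r • (1 : MQ Q) := by
  obtain ⟨p, rfl⟩ := (toMQ Q).surjective m
  rw [hamL_toMQ, map_eq_zero_iff _ (toMQ Q).injective] at hm
  obtain ⟨r, rfl⟩ := h.ham_ker _ p le_rfl hm
  exact ⟨r, by rw [← map_one (toMQ Q), smul_toMQ, mul_one]⟩

/-- Functions on the fibre product killed by the tensor product of the two Hamiltonian derivations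
are sums of a function of the first and a function of the second group of variables. -/
theorem tensor_split (hQ : Iso Q) (hP : Iso P)
    (hQt : ∀ r : Polynomial ℂ, Polynomial.aeval Q r = 0 → r = 0)
    (hPt : ∀ r : Polynomial ℂ, Polynomial.aeval P r = 0 → r = 0)
    (x : MQ Q ⊗[Polynomial ℂ] MQ P) (hx : TensorProduct.map (hamL Q) (hamL P) x = 0) :
    ∃ p q, x = toMQ Q p ⊗ₜ 1 + 1 ⊗ₜ toMQ P q := by
  have := torsionFree_MQ hQt
  have := torsionFree_MQ hPt
  have h1 := mem_ker_map (hamL Q) (hamL P) x hx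
  obtain ⟨y, ⟨y', rfl⟩, z, ⟨z', rfl⟩, rfl⟩ := Submodule.mem_sup.1 h1
  have hy : ∃ p, LinearMap.lTensor (MQ Q) (LinearMap.ker (hamL P)).subtype y' =
      toMQ Q p ⊗ₜ 1 := by
    clear hx h1
    induction y' using TensorProduct.induction_on with
    | zero => exact ⟨0, by simp⟩
    | tmul a b =>
      obtain ⟨r, hr⟩ := ker_hamL hP b.2
      refine ⟨(toMQ Q).symm (r • a), ?_⟩
      simp only [LinearMap.lTensor_tmul, Submodule.subtype_apply, hr, RingEquiv.apply_symm_apply]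
      rw [TensorProduct.smul_tmul]
    | add a b ha hb =>
      obtain ⟨p, hp⟩ := ha
      obtain ⟨q, hq⟩ := hb
      exact ⟨p + q, by rw [map_add, hp, hq, map_add, TensorProduct.add_tmul]⟩
  have hz : ∃ q, LinearMap.rTensor (MQ P) (LinearMap.ker (hamL Q)).subtype z' =
      1 ⊗ₜ toMQ P q := by
    clear hx h1
    induction z' using TensorProduct.induction_on with
    | zero => exact ⟨0, by simp⟩
    | tmul a b =>
      obtain ⟨r, hr⟩ := ker_hamL hQ a.2
      refine ⟨(toMQ P).symm (r • b), ?_⟩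
      simp only [LinearMap.rTensor_tmul, Submodule.subtype_apply, hr, RingEquiv.apply_symm_apply]
      rw [TensorProduct.smul_tmul]
    | add a b ha hb =>
      obtain ⟨p, hp⟩ := ha
      obtain ⟨q, hq⟩ := hb
      exact ⟨p + q, by rw [map_add, hp, hq, map_add, TensorProduct.tmul_add]⟩
  obtain ⟨p, hp⟩ := hy
  obtain ⟨q, hq⟩ := hz
  exact ⟨p, q, by rw [hp, hq]⟩


/-- The canonical map from polynomials in `(z, w)` to the functions on the fibre product
`Q(z) = - conj Q(w)`. -/
noncomputable def toT (Q : MvPolynomial (Fin 2) ℂ) :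
    MvPolynomial (Fin 2 ⊕ Fin 2) ℂ →+* MQ Q ⊗[Polynomial ℂ] MQ (-(Qb Q)) :=
  eval₂Hom ((Algebra.TensorProduct.includeLeftRingHom).comp ((toMQ Q).toRingHom.comp C))
    (Sum.elim (fun i => toMQ Q (X i) ⊗ₜ 1) (fun i => 1 ⊗ₜ toMQ _ (X i)))

theorem toT_inl (p : MvPolynomial (Fin 2) ℂ) : toT Q (rename Sum.inl p) = toMQ Q p ⊗ₜ 1 := by
  have : (toT Q).comp (rename (Sum.inl : Fin 2 → Fin 2 ⊕ Fin 2) :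
      MvPolynomial (Fin 2) ℂ →ₐ[ℂ] _).toRingHom =
      (Algebra.TensorProduct.includeLeftRingHom).comp (toMQ Q).toRingHom := by
    ext
    · simp [toT]
    · simp [toT]
  exact congrArg (fun f => f p) this

theorem toT_inr (p : MvPolynomial (Fin 2) ℂ) : toT Q (rename Sum.inr p) = 1 ⊗ₜ toMQ _ p := by
  have : (toT Q).comp (rename (Sum.inr : Fin 2 → Fin 2 ⊕ Fin 2) :
      MvPolynomial (Fin 2) ℂ →ₐ[ℂ] _).toRingHom =
      (Algebra.TensorProduct.includeRight : MQ (-(Qb Q)) →ₐ[Polynomial ℂ] _).toRingHom.comp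
        (toMQ (-(Qb Q))).toRingHom := by
    ext a
    · have h1 : toMQ Q (C a) = Polynomial.C a • (1 : MQ Q) := by
        rw [← map_one (toMQ Q), smul_toMQ, Polynomial.aeval_C, mul_one, algebraMap_eq]
      have h2 : toMQ (-(Qb Q)) (C a) = Polynomial.C a • (1 : MQ (-(Qb Q))) := by
        rw [← map_one (toMQ (-(Qb Q))), smul_toMQ, Polynomial.aeval_C, mul_one, algebraMap_eq]
      simp [toT, h1, h2, TensorProduct.smul_tmul]
    · simp [toT]
  exact congrArg (fun f => f p) this

theorem toT_mul (p q : MvPolynomial (Fin 2) ℂ) :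
    toT Q (rename Sum.inl p * rename Sum.inr q) = toMQ Q p ⊗ₜ toMQ _ q := by
  rw [map_mul, toT_inl, toT_inr, Algebra.TensorProduct.tmul_mul_tmul, one_mul, mul_one]

theorem toT_smul (x : MQ Q ⊗[Polynomial ℂ] MQ (-(Qb Q))) :
    toT Q (rename Sum.inl Q) * x = (Polynomial.X : Polynomial ℂ) • x := by
  have h1 : toMQ Q Q = (Polynomial.X : Polynomial ℂ) • (1 : MQ Q) := by
    rw [← map_one (toMQ Q), smul_toMQ, Polynomial.aeval_X, mul_one]
  rw [toT_inl, h1, ← TensorProduct.smul_tmul', ← Algebra.TensorProduct.one_def, smul_mul_assoc,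
    one_mul]

theorem toT_neg : toT Q (-(rename Sum.inr (Qb Q))) = toT Q (rename Sum.inl Q) := by
  have h1 : toMQ Q Q = (Polynomial.X : Polynomial ℂ) • (1 : MQ Q) := by
    rw [← map_one (toMQ Q), smul_toMQ, Polynomial.aeval_X, mul_one]
  have h2 : toMQ (-(Qb Q)) (-(Qb Q)) = (Polynomial.X : Polynomial ℂ) • (1 : MQ (-(Qb Q))) := by
    rw [← map_one (toMQ (-(Qb Q))), smul_toMQ, Polynomial.aeval_X, mul_one]
  have h3 : -(rename (Sum.inr : Fin 2 → Fin 2 ⊕ Fin 2) (Qb Q)) = rename Sum.inr (-(Qb Q)) :=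
    (map_neg _ _).symm
  rw [h3, toT_inl, toT_inr, h1, TensorProduct.smul_tmul]
  exact congrArg (fun y => (1 : MQ Q) ⊗ₜ[Polynomial ℂ] y) h2

/-- The kernel of `toT Q` consists of multiples of `Q(z) + conj Q(w)`. -/
theorem toT_ker {E : MvPolynomial (Fin 2 ⊕ Fin 2) ℂ} (hE : toT Q E = 0) : dbl Q ∣ E := by
  let I := Ideal.span {dbl Q}
  let S := MvPolynomial (Fin 2 ⊕ Fin 2) ℂ ⧸ I
  let α : MvPolynomial (Fin 2) ℂ →+* S := (Ideal.Quotient.mk I).comp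
    (rename (Sum.inl : Fin 2 → Fin 2 ⊕ Fin 2) : MvPolynomial (Fin 2) ℂ →ₐ[ℂ] _).toRingHom
  let β : MvPolynomial (Fin 2) ℂ →+* S := (Ideal.Quotient.mk I).comp
    (rename (Sum.inr : Fin 2 → Fin 2 ⊕ Fin 2) : MvPolynomial (Fin 2) ℂ →ₐ[ℂ] _).toRingHom
  have hαβ : α.comp (Polynomial.aeval Q : Polynomial ℂ →ₐ[ℂ] _).toRingHom =
      β.comp (Polynomial.aeval (-(Qb Q)) : Polynomial ℂ →ₐ[ℂ] _).toRingHom := by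
    ext a
    · simp [α, β, algebraMap_eq]
    · simp only [α, β, RingHom.comp_apply, AlgHom.toRingHom_eq_coe, RingHom.coe_coe,
        Polynomial.aeval_X]
      rw [Ideal.Quotient.eq, Ideal.mem_span_singleton, map_neg, sub_neg_eq_add]
      exact dvd_rfl
  let : Algebra (Polynomial ℂ) S :=
    (α.comp (Polynomial.aeval Q : Polynomial ℂ →ₐ[ℂ] _).toRingHom).toAlgebra
  let α' : MQ Q →ₐ[Polynomial ℂ] S :=
    { (α.comp (toMQ Q).symm.toRingHom) with commutes' := fun r => rfl }
  let β' : MQ (-(Qb Q)) →ₐ[Polynomial ℂ] S :=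
    { (β.comp (toMQ _).symm.toRingHom) with
      commutes' := fun r => (congrArg (fun f => f r) hαβ).symm }
  have hcomp : ((Algebra.TensorProduct.productMap α' β').toRingHom.comp (toT Q)) =
      Ideal.Quotient.mk I := by
    have hα : ∀ p, α' (toMQ Q p) = Ideal.Quotient.mk I (rename Sum.inl p) := fun p => rfl
    have hβ : ∀ p, β' (toMQ _ p) = Ideal.Quotient.mk I (rename Sum.inr p) := fun p => rfl
    ext k
    · simp [toT, hα]
    · rcases k with i | i
      · simp [toT, hα]
      · simp [toT, hβ]
  have h1 := congrArg (fun f => f E) hcomp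
  simp only [RingHom.comp_apply, hE, map_zero] at h1
  exact Ideal.mem_span_singleton.1 (Ideal.Quotient.eq_zero_iff_mem.1 h1.symm)

/-- The composition of the Hamiltonian derivations in `z` and in `w`. -/
noncomputable def XY (Q : MvPolynomial (Fin 2) ℂ) (E : MvPolynomial (Fin 2 ⊕ Fin 2) ℂ) :
    MvPolynomial (Fin 2 ⊕ Fin 2) ℂ :=
  ∑ i, ∑ j, rename Sum.inl (hv Q i) * rename Sum.inr (hv (Qb Q) j) *
    pderiv (Sum.inl i) (pderiv (Sum.inr j) E)

theorem pderiv_inl_rename_inr (i : Fin 2) (p : MvPolynomial (Fin 2) ℂ) :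
    pderiv (Sum.inl i) (rename (Sum.inr : Fin 2 → Fin 2 ⊕ Fin 2) p) = 0 := by
  refine pderiv_eq_zero_of_notMem_vars fun h => ?_
  have := vars_rename (Sum.inr : Fin 2 → Fin 2 ⊕ Fin 2) p h
  simp at this

theorem pderiv_inr_rename_inl (i : Fin 2) (p : MvPolynomial (Fin 2) ℂ) :
    pderiv (Sum.inr i) (rename (Sum.inl : Fin 2 → Fin 2 ⊕ Fin 2) p) = 0 := by
  refine pderiv_eq_zero_of_notMem_vars fun h => ?_
  have := vars_rename (Sum.inl : Fin 2 → Fin 2 ⊕ Fin 2) p h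
  simp at this

theorem XY_add (E E' : MvPolynomial (Fin 2 ⊕ Fin 2) ℂ) : XY Q (E + E') = XY Q E + XY Q E' := by
  simp [XY, mul_add, Finset.sum_add_distrib]

theorem XY_mul (p q : MvPolynomial (Fin 2) ℂ) : XY Q (rename Sum.inl p * rename Sum.inr q) =
    rename Sum.inl (ham Q p) * rename Sum.inr (ham (Qb Q) q) := by
  simp only [XY, ham, map_sum, pderiv_mul, pderiv_inr_rename_inl, pderiv_inl_rename_inr,
    pderiv_rename Sum.inl_injective, pderiv_rename Sum.inr_injective, map_mul, mul_zero, zero_mul,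
    zero_add, add_zero, Finset.sum_mul_sum]
  refine Finset.sum_congr rfl fun i _ => Finset.sum_congr rfl fun j _ => ?_
  ring

/-- Induction principle: polynomials in `(z, w)` are sums of products `p(z) q(w)`. -/
theorem sum_induction {C : MvPolynomial (Fin 2 ⊕ Fin 2) ℂ → Prop}
    (hadd : ∀ E E', C E → C E' → C (E + E'))
    (hmul : ∀ p q, C (rename Sum.inl p * rename Sum.inr q)) (E) : C E := by
  suffices h : ∀ p q, C (E * (rename Sum.inl p * rename Sum.inr q)) by
    simpa using h 1 1
  induction E using MvPolynomial.induction_on with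
  | C a =>
    intro p q
    have := hmul (MvPolynomial.C a * p) q
    rwa [map_mul, rename_C, mul_assoc] at this
  | add E E' h1 h2 =>
    intro p q
    rw [add_mul]
    exact hadd _ _ (h1 p q) (h2 p q)
  | mul_X E k h =>
    intro p q
    rcases k with i | i
    · have := h (X i * p) q
      rw [map_mul, rename_X] at this
      rwa [mul_assoc, ← mul_assoc (X _)]
    · have := h p (X i * q)
      rw [map_mul, rename_X] at this
      rwa [mul_assoc, mul_left_comm (X _)]

/-- The operator `XY Q` descends to the fibre product, where it is, up to sign, the tensor product
of the two Hamiltonian derivations. -/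
theorem toT_XY (E : MvPolynomial (Fin 2 ⊕ Fin 2) ℂ) :
    TensorProduct.map (hamL Q) (hamL (-(Qb Q))) (toT Q E) = - toT Q (XY Q E) := by
  induction E using sum_induction with
  | hadd E E' h1 h2 => rw [map_add, map_add, h1, h2, XY_add, map_add]; ring
  | hmul p q =>
    rw [toT_mul, TensorProduct.map_tmul, hamL_toMQ, hamL_toMQ, XY_mul, toT_mul]
    have : ham (-(Qb Q)) q = - ham (Qb Q) q := by simp [ham_eq]; ring
    rw [this, map_neg, TensorProduct.tmul_neg]

end tensor

/-! ### Splitting of weighted homogeneous polynomials killed by the mixed operator -/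

section fourier
open TensorProduct
variable {Q : MvPolynomial (Fin 2) ℂ} {wt : Fin 2 → ℕ} {d : ℕ}

theorem exists_sum_components {ι : Type*} (w : ι → ℕ) (T : MvPolynomial ι ℂ) :
    ∃ B : ℕ, ∑ i ∈ Finset.range B, weightedHomogeneousComponent w i T = T := by
  have hf := weightedHomogeneousComponent_finsupp (w := w) T
  obtain ⟨B, hB⟩ := (Set.Finite.bddAbove hf)
  refine ⟨B + 1, ?_⟩
  conv_rhs => rw [← sum_weightedHomogeneousComponent w T]
  refine (finsum_eq_sum_of_support_subset _ fun i hi => ?_).symm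
  have := hB hi
  simp only [Finset.coe_range, Set.mem_Iio]
  omega

/-- Discrete Fourier analysis: if `∑ t_i η ^ i = 0` for every `d`-th root `η` of `ζ ≠ 0`, then the
partial sums over residue classes modulo `d` vanish. -/
theorem roots_sum (hd : 0 < d) {ζ : ℂ} (hζ : ζ ≠ 0) (B : ℕ) (t : ℕ → ℂ)
    (h : ∀ η : ℂ, η ^ d = ζ → ∑ i ∈ Finset.range B, η ^ i * t i = 0) (r : ℕ) (hr : r < d) :
    ∑ i ∈ (Finset.range B).filter (fun i => i % d = r), ζ ^ (i / d) * t i = 0 := by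
  set a : ℕ → ℂ := fun r => ∑ i ∈ (Finset.range B).filter (fun i => i % d = r), ζ ^ (i / d) * t i
    with ha
  set A : Polynomial ℂ := ∑ r ∈ Finset.range d, Polynomial.monomial r (a r) with hA
  have hev : ∀ η : ℂ, η ^ d = ζ → A.eval η = 0 := by
    intro η hη
    rw [← h η hη, hA, Polynomial.eval_finsetSum]
    rw [← Finset.sum_fiberwise_of_maps_to (s := Finset.range B) (g := fun i => i % d)
      (t := Finset.range d)]
    · refine Finset.sum_congr rfl fun r _ => ?_
      rw [Polynomial.eval_monomial, ha, Finset.sum_mul]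
      refine Finset.sum_congr rfl fun i hi => ?_
      obtain rfl := (Finset.mem_filter.1 hi).2
      rw [← hη, ← pow_mul, mul_right_comm, ← pow_add, Nat.div_add_mod]
    · intro i _
      exact Finset.mem_range.2 (Nat.mod_lt _ hd)
  obtain ⟨η0, hη0⟩ := IsAlgClosed.exists_pow_nat_eq ζ hd
  have hη00 : η0 ≠ 0 := by rintro rfl; rw [zero_pow hd.ne'] at hη0; exact hζ hη0.symm
  have hω := Complex.isPrimitiveRoot_exp d hd.ne'
  set ω := Complex.exp (2 * Real.pi * Complex.I / d)
  have hA0 : A = 0 := by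
    refine Polynomial.eq_zero_of_natDegree_lt_card_of_eval_eq_zero A
      (f := fun k : Fin d => η0 * ω ^ (k : ℕ)) ?_ ?_ ?_
    · intro k l hkl
      have := mul_left_cancel₀ hη00 hkl
      exact Fin.ext (hω.pow_inj k.2 l.2 this)
    · intro k
      apply hev
      rw [mul_pow, hη0, ← pow_mul, mul_comm (k : ℕ), pow_mul, hω.pow_eq_one, one_pow, mul_one]
    · rw [Fintype.card_fin]
      refine lt_of_le_of_lt (Polynomial.natDegree_sum_le_of_forall_le (n := d - 1) _ _ ?_) (by omega)
      intro i hi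
      have := Finset.mem_range.1 hi
      exact (Polynomial.natDegree_monomial_le _).trans (by omega)
  have hc : A.coeff r = a r := by
    rw [hA, Polynomial.finsetSum_coeff]
    simp only [Polynomial.coeff_monomial]
    rw [Finset.sum_ite_eq' ]
    simp [hr]
  rw [hA0, Polynomial.coeff_zero] at hc
  exact hc.symm

/-- A polynomial on `ℂ² × ℂ²` whose zero set is invariant under the weighted scaling and contains
the real points of `Q(z) + conj Q(z) = 0` vanishes on the complexification. -/
theorem vanish_of_real (hd : 0 < d) (hQ : IsWeightedHomogeneous wt Q d) (hQ0 : Q ≠ 0)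
    (hQt : ∀ r : Polynomial ℂ, Polynomial.aeval Q r = 0 → r = 0)
    (hPt : ∀ r : Polynomial ℂ, Polynomial.aeval (-(Qb Q)) r = 0 → r = 0)
    {T : MvPolynomial (Fin 2 ⊕ Fin 2) ℂ}
    (hT : ∀ (c : ℂ) p, c ≠ 0 → eval p T = 0 → eval (sc (wt2 wt) c p) T = 0)
    (h0 : ∀ z, (eval z Q).re = 0 → eval (rp z) T = 0) : toT Q T = 0 := by
  set wl : Fin 2 ⊕ Fin 2 → ℕ := Sum.elim wt 0 with hwl
  obtain ⟨B, hB⟩ := exists_sum_components wl T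
  set Ti : ℕ → MvPolynomial (Fin 2 ⊕ Fin 2) ℂ := fun i => weightedHomogeneousComponent wl i T
  have hTi : ∀ i, IsWeightedHomogeneous wl (Ti i) i := fun i =>
    weightedHomogeneousComponent_isWeightedHomogeneous i T
  have hev : ∀ z, eval z Q ≠ 0 → ∀ η : ℂ, η ^ d = -(starRingEnd ℂ) (eval z Q) / eval z Q →
      ∑ i ∈ Finset.range B, η ^ i * eval (rp z) (Ti i) = 0 := by
    intro z hz η hη
    have hn : ‖η‖ = 1 := by
      have : ‖η‖ ^ d = 1 := by
        rw [← norm_pow, hη, norm_div, norm_neg, Complex.norm_conj, div_self (by simpa using hz)]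
      exact (pow_eq_one_iff_of_nonneg (norm_nonneg _) hd.ne').1 this
    obtain ⟨c, hc⟩ := IsAlgClosed.exists_pow_nat_eq η (n := 2) (by norm_num)
    have hcn : ‖c‖ = 1 := by
      have : ‖c‖ ^ 2 = 1 := by rw [← norm_pow, hc, hn]
      exact (pow_eq_one_iff_of_nonneg (norm_nonneg _) (by norm_num)).1 this
    have hcc : (starRingEnd ℂ) c * c = 1 := by
      rw [mul_comm, Complex.mul_conj, Complex.normSq_eq_norm_sq, hcn]; simp
    have hc0 : c ≠ 0 := by rintro rfl; simp at hcn
    have hre : (eval (sc wt c z) Q).re = 0 := by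
      rw [eval_sc hQ]
      have h1 : (c ^ d * eval z Q) + (starRingEnd ℂ) (c ^ d * eval z Q) = 0 := by
        have h2 : c ^ d * (c ^ d * eval z Q + (starRingEnd ℂ) (c ^ d * eval z Q)) = 0 := by
          have h3 : c ^ d * c ^ d = -(starRingEnd ℂ) (eval z Q) / eval z Q := by
            rw [← hη, ← hc]; ring
          have h4 : c ^ d * (starRingEnd ℂ) (c ^ d) = 1 := by
            rw [map_pow, ← mul_pow, mul_comm c, hcc, one_pow]
          rw [map_mul, mul_add, ← mul_assoc, ← mul_assoc, h3, h4]
          field_simp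
          ring
        exact (mul_eq_zero.1 h2).resolve_left (pow_ne_zero _ hc0)
      rw [Complex.add_conj] at h1
      have h2 : 2 * (c ^ d * eval z Q).re = 0 := by exact_mod_cast h1
      linarith
    have h1 := h0 _ hre
    have h2 : rp (sc wt c z) = sc (wt2 wt) ((starRingEnd ℂ) c) (sc wl η (rp z)) := by
      have h3 : (starRingEnd ℂ) c * η = c := by rw [← hc, pow_two, ← mul_assoc, hcc, one_mul]
      ext k
      rcases k with i | i
      · simp only [sc, rp, wt2, hwl, Sum.elim_inl]
        rw [← mul_assoc, ← mul_pow, h3]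
      · simp [sc, rp, wt2, hwl, cj]
    rw [h2] at h1
    have h3 := hT c _ hc0 h1
    rw [sc_sc, mul_comm, hcc, sc_one] at h3
    rw [← hB, map_sum] at h3
    rw [← h3]
    exact Finset.sum_congr rfl fun i _ => (eval_sc (hTi i) _ _).symm
  have hRem : ∀ r < d, ∑ i ∈ (Finset.range B).filter (fun i => i % d = r),
      (-(rename Sum.inr (Qb Q))) ^ (i / d) * (rename Sum.inl Q) ^ (B - i / d) * Ti i = 0 := by
    intro r hr
    have hl : rename (Sum.inl : Fin 2 → Fin 2 ⊕ Fin 2) Q ≠ 0 := by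
      rw [Ne, map_eq_zero_iff _ (rename_injective _ Sum.inl_injective)]; exact hQ0
    refine (mul_eq_zero.1 (eq_zero_of_rp (T := rename Sum.inl Q * _) fun z => ?_)).resolve_left hl
    rw [map_mul, eval_rename, show rp z ∘ Sum.inl = z from rfl]
    by_cases hz : eval z Q = 0
    · rw [hz, zero_mul]
    · have hζ : -(starRingEnd ℂ) (eval z Q) / eval z Q ≠ 0 :=
        div_ne_zero (neg_ne_zero.2 (by simpa using hz)) hz
      have := roots_sum hd hζ B _ (hev z hz) r hr
      suffices h : (eval z Q) ^ B * ∑ i ∈ (Finset.range B).filter (fun i => i % d = r),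
          (-(starRingEnd ℂ) (eval z Q) / eval z Q) ^ (i / d) * eval (rp z) (Ti i) =
          eval (rp z) (∑ i ∈ (Finset.range B).filter (fun i => i % d = r),
      (-(rename Sum.inr (Qb Q))) ^ (i / d) * (rename Sum.inl Q) ^ (B - i / d) * Ti i) by
        rw [← h, this, mul_zero, mul_zero]
      rw [map_sum, Finset.mul_sum]
      refine Finset.sum_congr rfl fun i hi => ?_
      have hi' := Finset.mem_range.1 (Finset.mem_filter.1 hi).1
      simp only [map_mul, map_pow, map_neg, eval_rename]
      rw [show rp z ∘ Sum.inl = z from rfl, show rp z ∘ Sum.inr = cj z from rfl, eval_map_conj,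
        cj_cj]
      have hle : i / d ≤ B := (Nat.div_le_self _ _).trans hi'.le
      obtain ⟨e, he⟩ := Nat.exists_eq_add_of_le hle
      have he' : B - i / d = e := by omega
      rw [he']
      conv_lhs => rw [he]
      rw [div_pow, pow_add]
      field_simp
  have := torsionFree_MQ hQt
  have := torsionFree_MQ hPt
  have hX : (Polynomial.X ^ B : Polynomial ℂ) • toT Q T = 0 := by
    have hmul : ∀ (n : ℕ) x, toT Q (rename Sum.inl Q) ^ n * x = (Polynomial.X ^ n : Polynomial ℂ) • x := by
      intro n
      induction n with
      | zero => intro x; simp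
      | succ n ih => intro x; rw [pow_succ, mul_assoc, toT_smul, ih, pow_succ, mul_smul]
    rw [← hmul]
    conv_lhs => rw [← hB]
    rw [map_sum, Finset.mul_sum,
      ← Finset.sum_fiberwise_of_maps_to (s := Finset.range B) (g := fun i => i % d)
        (t := Finset.range d)]
    · refine Finset.sum_eq_zero fun r hr => ?_
      have h1 := congrArg (toT Q) (hRem r (Finset.mem_range.1 hr))
      rw [map_zero, map_sum] at h1
      rw [← h1]
      refine Finset.sum_congr rfl fun i hi => ?_
      have hi' := Finset.mem_range.1 (Finset.mem_filter.1 hi).1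
      have hle : i / d ≤ B := (Nat.div_le_self _ _).trans hi'.le
      rw [map_mul, map_mul, map_pow, map_pow, toT_neg, ← pow_add, Nat.add_sub_cancel' hle]
    · intro i _
      exact Finset.mem_range.2 (Nat.mod_lt _ hd)
  have hreg : IsSMulRegular (MQ Q ⊗[Polynomial ℂ] MQ (-(Qb Q))) (Polynomial.X ^ B : Polynomial ℂ) :=
    Module.IsTorsionFree.isSMulRegular
      (IsRegular.of_ne_zero (pow_ne_zero _ Polynomial.X_ne_zero))
  exact hreg (by simpa using hX)

/-- Weighted homogeneous components commute with a linear map shifting the weight by `d`. -/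
theorem component_map {ι κ : Type*} {w : ι → ℕ} {w' : κ → ℕ}
    (L : MvPolynomial ι ℂ →ₗ[ℂ] MvPolynomial κ ℂ) {d : ℕ}
    (hL : ∀ k p, IsWeightedHomogeneous w p k → IsWeightedHomogeneous w' (L p) (k + d)) (k : ℕ)
    (p : MvPolynomial ι ℂ) : ∃ p', IsWeightedHomogeneous w p' k ∧
      weightedHomogeneousComponent w' (k + d) (L p) = L p' := by
  refine ⟨weightedHomogeneousComponent w k p,
    weightedHomogeneousComponent_isWeightedHomogeneous k p, ?_⟩
  obtain ⟨B, hB⟩ := exists_sum_components w p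
  have h1 : ∀ i, weightedHomogeneousComponent w' (k + d) (L (weightedHomogeneousComponent w i p)) =
      if i = k then L (weightedHomogeneousComponent w k p) else 0 := by
    intro i
    have h2 := hL i _ (weightedHomogeneousComponent_isWeightedHomogeneous (w := w) i p)
    split_ifs with hik
    · subst hik
      exact h2.weightedHomogeneousComponent_same
    · exact h2.weightedHomogeneousComponent_ne _ (by omega)
  conv_lhs => rw [← hB]
  rw [map_sum, map_sum, Finset.sum_congr rfl fun i _ => h1 i, Finset.sum_ite_eq']
  split_ifs with hk
  · rfl
  · conv_rhs => rw [← hB]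
    rw [map_sum, map_sum, Finset.sum_eq_zero]
    intro i hi
    rw [(weightedHomogeneousComponent_isWeightedHomogeneous (w := w) i
      p).weightedHomogeneousComponent_ne k (by rintro rfl; exact hk hi), map_zero]

theorem hv_scale (hQ : IsWeightedHomogeneous wt Q d) (i : Fin 2) (c : ℂ) (z : Fin 2 → ℂ) :
    c ^ (wt (1 - i)) * eval (sc wt c z) (hv Q i) = c ^ d * eval z (hv Q i) := by
  have h1 : ∀ (c : ℂ) (p : Fin 2 → ℂ), c ^ 0 * eval (sc wt c p) Q = c ^ d * eval p Q := by
    intro c p; rw [pow_zero, one_mul, eval_sc hQ]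
  fin_cases i
  · have := eval_sc_pderiv h1 1 c z
    simpa [hv] using this
  · have := eval_sc_pderiv h1 0 c z
    simpa [hv] using this

theorem XY_scale (hQ : IsWeightedHomogeneous wt Q d) {n : ℕ}
    {E : MvPolynomial (Fin 2 ⊕ Fin 2) ℂ} (hE : IsWeightedHomogeneous (wt2 wt) E n) (c : ℂ)
    (p : Fin 2 ⊕ Fin 2 → ℂ) :
    c ^ (2 * (wt 0 + wt 1)) * eval (sc (wt2 wt) c p) (XY Q E) =
      c ^ (2 * d + n) * eval p (XY Q E) := by
  simp only [XY, map_sum, Finset.mul_sum, map_mul, eval_rename]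
  refine Finset.sum_congr rfl fun i _ => Finset.sum_congr rfl fun j _ => ?_
  have h1 : ∀ (c : ℂ) p, c ^ 0 * eval (sc (wt2 wt) c p) E = c ^ n * eval p E := by
    intro c p; rw [pow_zero, one_mul, eval_sc hE]
  have h2 := eval_sc_pderiv (eval_sc_pderiv h1 (Sum.inr j)) (Sum.inl i) c p
  have h3 := hv_scale hQ i c (p ∘ Sum.inl)
  have h4 := hv_scale (isWH_Qb hQ) j c (p ∘ Sum.inr)
  rw [sc_inl, sc_inr]
  have h5 : 2 * (wt 0 + wt 1) = wt (1 - i) + wt (1 - j) + (0 + wt2 wt (Sum.inr j) +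
      wt2 wt (Sum.inl i)) := by
    simp only [wt2, Sum.elim_inl, Sum.elim_inr]
    fin_cases i <;> fin_cases j <;> simp <;> ring
  rw [h5, pow_add, pow_add _ (2 * d) n, two_mul d, pow_add _ d d, pow_add _ (wt (1 - i))]
  linear_combination (c ^ wt (1 - j) * eval (sc wt c (p ∘ Sum.inr)) (hv (Qb Q) j) *
    (c ^ (0 + wt2 wt (Sum.inr j) + wt2 wt (Sum.inl i)) *
      eval (sc (wt2 wt) c p) (pderiv (Sum.inl i) (pderiv (Sum.inr j) E)))) * h3 +
    (c ^ d * eval (p ∘ Sum.inl) (hv Q i) *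
    (c ^ (0 + wt2 wt (Sum.inr j) + wt2 wt (Sum.inl i)) *
      eval (sc (wt2 wt) c p) (pderiv (Sum.inl i) (pderiv (Sum.inr j) E)))) * h4 +
    (c ^ d * eval (p ∘ Sum.inl) (hv Q i) * (c ^ d * eval (p ∘ Sum.inr) (hv (Qb Q) j))) * h2

/-- The algebraic core of the argument: a weighted homogeneous `E` annihilated on the real points of
`Re Q = 0` by the mixed second-order operator `XY Q` is a sum of a function of `z`, a function of
`w` and a multiple of `Q(z) + conj Q(w)`. -/
theorem split_of_XY (hd : 0 < d) (hQ : IsWeightedHomogeneous wt Q d) (hiso : Iso Q) {n : ℕ}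
    {E : MvPolynomial (Fin 2 ⊕ Fin 2) ℂ} (hE : IsWeightedHomogeneous (wt2 wt) E (n + d))
    (h0 : ∀ z, (eval z Q).re = 0 → eval (rp z) (XY Q E) = 0) :
    ∃ p q U, IsWeightedHomogeneous wt p (n + d) ∧ IsWeightedHomogeneous wt q (n + d) ∧
      IsWeightedHomogeneous (wt2 wt) U n ∧
      E = rename Sum.inl p + rename Sum.inr q + dbl Q * U := by
  have hP : IsWeightedHomogeneous wt (-(Qb Q)) d := fun m hm => isWH_Qb hQ (by simpa using hm)
  have hQt : ∀ r : Polynomial ℂ, Polynomial.aeval Q r = 0 → r = 0 := fun r hr =>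
    transcendental_of_iso hd hQ hiso.ne_zero hr
  have hPt : ∀ r : Polynomial ℂ, Polynomial.aeval (-(Qb Q)) r = 0 → r = 0 := fun r hr =>
    transcendental_of_iso hd hP hiso.conj.neg.ne_zero hr
  have h1 : toT Q (XY Q E) = 0 := by
    refine vanish_of_real hd hQ hiso.ne_zero hQt hPt (fun c p hc hp => ?_) h0
    have := XY_scale hQ hE c p
    rw [hp, mul_zero] at this
    exact (mul_eq_zero.1 this).resolve_left (pow_ne_zero _ hc)
  have h2 := toT_XY (Q := Q) E
  rw [h1, neg_zero] at h2
  obtain ⟨p, q, hpq⟩ := tensor_split hiso hiso.conj.neg hQt hPt _ h2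
  rw [← toT_inl, ← toT_inr, ← map_add, ← sub_eq_zero, ← map_sub] at hpq
  obtain ⟨U, hU⟩ := toT_ker hpq
  obtain ⟨p', hp', hp⟩ := component_map (w := wt) (w' := wt2 wt) (d := 0)
    (rename (R := ℂ) (Sum.inl : Fin 2 → Fin 2 ⊕ Fin 2)).toLinearMap
    (fun k p hp => isWH_rename Sum.inl (fun _ => rfl) hp) (n + d) p
  obtain ⟨q', hq', hq⟩ := component_map (w := wt) (w' := wt2 wt) (d := 0)
    (rename (R := ℂ) (Sum.inr : Fin 2 → Fin 2 ⊕ Fin 2)).toLinearMap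
    (fun k p hp => isWH_rename Sum.inr (fun _ => rfl) hp) (n + d) q
  obtain ⟨U', hU', hU2⟩ := component_map (w := wt2 wt) (w' := wt2 wt) (d := d)
    (LinearMap.mulLeft ℂ (dbl Q))
    (fun k p hp => by
      rw [add_comm]; exact (isWH_dbl hQ).mul hp) n U
  refine ⟨p', q', U', hp', hq', hU', ?_⟩
  have h3 : E = rename Sum.inl p + rename Sum.inr q + dbl Q * U := by rw [← hU]; ring
  rw [← hE.weightedHomogeneousComponent_same, h3, map_add, map_add]
  exact congrArg₂ _ (congrArg₂ _ hp hq) hU2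

end fourier

/-! ### The complexified Levi form and its leading term -/

section claim
variable {Q : MvPolynomial (Fin 2) ℂ} {wt : Fin 2 → ℕ} {d : ℕ}

/-- The embedding `z ↦ (z, conj z)` as a real-linear map. -/
noncomputable def rpL : (Fin 2 → ℂ) →L[ℝ] (Fin 2 ⊕ Fin 2 → ℂ) :=
  LinearMap.toContinuousLinearMap
    { toFun := rp
      map_add' := fun x y => by ext k; rcases k with i | i <;> simp [rp, cj]
      map_smul' := fun c x => by ext k; rcases k with i | i <;> simp [rp, cj] }

theorem fderiv_comp_rp {Φ : (Fin 2 ⊕ Fin 2 → ℂ) → ℂ} {z : Fin 2 → ℂ}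
    (h : AnalyticAt ℂ Φ (rp z)) (v : Fin 2 → ℂ) :
    fderiv ℝ (fun z => Φ (rp z)) z v = fderiv ℂ Φ (rp z) (rp v) := by
  have h1 : HasFDerivAt Φ ((fderiv ℂ Φ (rp z)).restrictScalars ℝ) (rp z) :=
    h.differentiableAt.hasFDerivAt.restrictScalars ℝ
  have h2 : HasFDerivAt (fun z => Φ (rp z)) (((fderiv ℂ Φ (rp z)).restrictScalars ℝ).comp rpL) z :=
    HasFDerivAt.comp (g := Φ) z h1 rpL.hasFDerivAt
  rw [h2.fderiv]; rfl

theorem rp_single_one (j : Fin 2) : rp (Pi.single j 1 : Fin 2 → ℂ) =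
    Pi.single (Sum.inl j) 1 + Pi.single (Sum.inr j) 1 := by
  ext k
  rcases k with i | i
  · simp [rp, Pi.single_apply]
  · by_cases h : i = j <;> simp [rp, cj, h]

theorem rp_single_I (j : Fin 2) : rp (Pi.single j Complex.I : Fin 2 → ℂ) =
    Complex.I • (Pi.single (Sum.inl j) 1 : Fin 2 ⊕ Fin 2 → ℂ) -
      Complex.I • (Pi.single (Sum.inr j) 1 : Fin 2 ⊕ Fin 2 → ℂ) := by
  ext k
  rcases k with i | i
  · simp [rp, Pi.single_apply]
  · by_cases h : i = j <;> simp [rp, cj, h]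

theorem wirtZ_comp_rp {Φ : (Fin 2 ⊕ Fin 2 → ℂ) → ℂ} {z : Fin 2 → ℂ}
    (h : AnalyticAt ℂ Φ (rp z)) (j : Fin 2) :
    wirtZ (fun z => Φ (rp z)) j z = pd (Sum.inl j) Φ (rp z) := by
  rw [wirtZ, fderiv_comp_rp h, fderiv_comp_rp h, rp_single_one, rp_single_I, pd]
  simp only [map_add, map_sub, map_smul, smul_eq_mul]
  linear_combination (- (fderiv ℂ Φ (rp z) (Pi.single (Sum.inl j) 1)) / 2 +
    (fderiv ℂ Φ (rp z) (Pi.single (Sum.inr j) 1)) / 2) * Complex.I_mul_I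

theorem wirtZbar_comp_rp {Φ : (Fin 2 ⊕ Fin 2 → ℂ) → ℂ} {z : Fin 2 → ℂ}
    (h : AnalyticAt ℂ Φ (rp z)) (j : Fin 2) :
    wirtZbar (fun z => Φ (rp z)) j z = pd (Sum.inr j) Φ (rp z) := by
  rw [wirtZbar, fderiv_comp_rp h, fderiv_comp_rp h, rp_single_one, rp_single_I, pd]
  simp only [map_add, map_sub, map_smul, smul_eq_mul]
  linear_combination ((fderiv ℂ Φ (rp z) (Pi.single (Sum.inl j) 1)) / 2 -
    (fderiv ℂ Φ (rp z) (Pi.single (Sum.inr j) 1)) / 2) * Complex.I_mul_I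

/-- The complex tangent vector to the level sets of `Ψ` in the variables `e 0, e 1`. -/
noncomputable def tv (e : Fin 2 → Fin 2 ⊕ Fin 2) (Ψ : (Fin 2 ⊕ Fin 2 → ℂ) → ℂ) (i : Fin 2)
    (p : Fin 2 ⊕ Fin 2 → ℂ) : ℂ :=
  if i = 0 then - pd (e 1) Ψ p else pd (e 0) Ψ p

/-- The complexified Levi form of `Ψ` on the complex tangent direction. -/
noncomputable def levi (Ψ : (Fin 2 ⊕ Fin 2 → ℂ) → ℂ) (p : Fin 2 ⊕ Fin 2 → ℂ) : ℂ :=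
  ∑ i, ∑ j, pd (Sum.inr j) (pd (Sum.inl i) Ψ) p * tv Sum.inl Ψ i p * tv Sum.inr Ψ j p

theorem eventually_analyticAt_rp {Φ : (Fin 2 ⊕ Fin 2 → ℂ) → ℂ} (h : AnalyticAt ℂ Φ 0) :
    ∀ᶠ z in 𝓝 (0 : Fin 2 → ℂ), AnalyticAt ℂ Φ (rp z) :=
  tendsto_rp.eventually h.eventually_analyticAt

/-- Levi-flatness in terms of the complexification: at singular points of `F` the complex tangent
vector vanishes, so the Levi form vanishes there as well. -/
theorem levi_eq_zero {F : (Fin 2 → ℂ) → ℝ} (hF : AnalyticAt ℝ F 0) (hLF : LeviFlatGerm F)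
    {Φ : (Fin 2 ⊕ Fin 2 → ℂ) → ℂ} (hΦ : AnalyticAt ℂ Φ 0)
    (hFΦ : ∀ᶠ z in 𝓝 (0 : Fin 2 → ℂ), ((F z : ℝ) : ℂ) = Φ (rp z)) :
    ∀ᶠ z in 𝓝 (0 : Fin 2 → ℂ), F z = 0 → levi Φ (rp z) = 0 := by
  have h1 : ∀ᶠ z in 𝓝 (0 : Fin 2 → ℂ), ∀ i,
      wirtZ (fun z => ((F z : ℝ) : ℂ)) i z = pd (Sum.inl i) Φ (rp z) := by
    filter_upwards [hFΦ.eventually_nhds, eventually_analyticAt_rp hΦ] with z hz ha i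
    rw [← wirtZ_comp_rp ha]
    have : (fun z => ((F z : ℝ) : ℂ)) =ᶠ[𝓝 z] fun z => Φ (rp z) := hz
    rw [wirtZ, wirtZ, this.fderiv_eq]
  have h1b : ∀ᶠ z in 𝓝 (0 : Fin 2 → ℂ), ∀ i,
      wirtZbar (fun z => ((F z : ℝ) : ℂ)) i z = pd (Sum.inr i) Φ (rp z) := by
    filter_upwards [hFΦ.eventually_nhds, eventually_analyticAt_rp hΦ] with z hz ha i
    rw [← wirtZbar_comp_rp ha]
    have : (fun z => ((F z : ℝ) : ℂ)) =ᶠ[𝓝 z] fun z => Φ (rp z) := hz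
    rw [wirtZbar, wirtZbar, this.fderiv_eq]
  have h2 : ∀ᶠ z in 𝓝 (0 : Fin 2 → ℂ), ∀ i j,
      wirtZbar (wirtZ (fun z => ((F z : ℝ) : ℂ)) i) j z =
        pd (Sum.inr j) (pd (Sum.inl i) Φ) (rp z) := by
    have ha := fun i => eventually_analyticAt_rp (analyticAt_pd hΦ (Sum.inl i))
    filter_upwards [h1.eventually_nhds, eventually_all.2 ha] with z hz ha i j
    rw [← wirtZbar_comp_rp (ha i)]
    have : (wirtZ (fun z => ((F z : ℝ) : ℂ)) i) =ᶠ[𝓝 z] fun z => pd (Sum.inl i) Φ (rp z) := by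
      filter_upwards [hz] with y hy using hy i
    rw [wirtZbar, wirtZbar, this.fderiv_eq]
  filter_upwards [h1, h1b, h2, hLF, hF.eventually_analyticAt] with z h1 h1b h2 hL hFa hF0
  have hfd : ∀ v, fderiv ℝ (fun z => ((F z : ℝ) : ℂ)) z v = ((fderiv ℝ F z v : ℝ) : ℂ) := by
    intro v
    have h3 : HasFDerivAt (fun z => ((F z : ℝ) : ℂ)) (Complex.ofRealCLM.comp (fderiv ℝ F z)) z :=
      Complex.ofRealCLM.hasFDerivAt.comp z hFa.differentiableAt.hasFDerivAt
    rw [h3.fderiv]; rfl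
  have hconj : ∀ i, pd (Sum.inr i) Φ (rp z) = (starRingEnd ℂ) (pd (Sum.inl i) Φ (rp z)) := by
    intro i
    have h22 : (starRingEnd ℂ) (2 : ℂ) = 2 := map_ofNat _ 2
    rw [← h1, ← h1b, wirtZ, wirtZbar, hfd, hfd]
    simp [h22]
  by_cases hdF : fderiv ℝ F z = 0
  · have h3 : ∀ i, pd (Sum.inl i) Φ (rp z) = 0 := by
      intro i
      rw [← h1, wirtZ, hfd, hfd, hdF]; simp
    simp [levi, tv, h3]
  · have h4 := hL hF0 hdF (fun i => tv Sum.inl Φ i (rp z)) (by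
      simp only [Fin.sum_univ_two, h1, tv]
      simp; ring)
    rw [← h4, levi]
    refine Finset.sum_congr rfl fun i _ => Finset.sum_congr rfl fun j _ => ?_
    rw [h2]
    congr 1
    simp only [tv]
    split_ifs <;> simp [hconj]

/-- On the zero set, multiplying the defining function by `V` multiplies the Levi form by `V ^ 3`. -/
theorem pd_mul_eventually {V Φ : (Fin 2 ⊕ Fin 2 → ℂ) → ℂ} (hV : AnalyticAt ℂ V 0)
    (hΦ : AnalyticAt ℂ Φ 0) : ∀ᶠ p in 𝓝 (0 : Fin 2 ⊕ Fin 2 → ℂ), Φ p = 0 →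
      levi (fun p => V p * Φ p) p = V p ^ 3 * levi Φ p := by
  filter_upwards [hV.eventually_analyticAt, hΦ.eventually_analyticAt,
    hV.eventually_analyticAt.eventually_nhds, hΦ.eventually_analyticAt.eventually_nhds]
    with p hV hΦ hVn hΦn h0
  have h1 : ∀ k, pd k (fun p => V p * Φ p) p = V p * pd k Φ p := by
    intro k; rw [pd_mul hV hΦ, h0]; ring
  have h2 : ∀ k l, pd l (pd k (fun p => V p * Φ p)) p =
      pd k V p * pd l Φ p + pd l V p * pd k Φ p + V p * pd l (pd k Φ) p := by
    intro k l
    have h3 : ∀ᶠ q in 𝓝 p, pd k (fun p => V p * Φ p) q = pd k V q * Φ q + V q * pd k Φ q := by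
      filter_upwards [hVn, hΦn] with q hV hΦ using pd_mul hV hΦ k
    rw [(pd_congr h3 l).self_of_nhds, pd_add (Φ := fun q => pd k V q * Φ q)
      (Ψ := fun q => V q * pd k Φ q) ((analyticAt_pd hV k).mul hΦ)
      (hV.mul (analyticAt_pd hΦ k)), pd_mul (analyticAt_pd hV k) hΦ, pd_mul hV (analyticAt_pd hΦ k),
      h0]
    ring
  simp only [levi, Fin.sum_univ_two, tv, h1, h2]
  simp
  ring

theorem levi_mul_eq_zero {F : (Fin 2 → ℂ) → ℝ} (hF : AnalyticAt ℝ F 0) (hLF : LeviFlatGerm F)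
    {V Φ : (Fin 2 ⊕ Fin 2 → ℂ) → ℂ} (hV : AnalyticAt ℂ V 0) (hΦ : AnalyticAt ℂ Φ 0)
    (hFΦ : ∀ᶠ z in 𝓝 (0 : Fin 2 → ℂ), ((2 * F z : ℝ) : ℂ) = Φ (rp z)) :
    ∀ᶠ z in 𝓝 (0 : Fin 2 → ℂ), F z = 0 → levi (fun p => V p * Φ p) (rp z) = 0 := by
  have hΦ' : AnalyticAt ℂ (fun p => 1 / 2 * Φ p) 0 := analyticAt_const.mul hΦ
  have hF' : ∀ᶠ z in 𝓝 (0 : Fin 2 → ℂ), ((F z : ℝ) : ℂ) = 1 / 2 * Φ (rp z) := by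
    filter_upwards [hFΦ] with z hz
    rw [← hz]; push_cast; ring
  have h1 := tendsto_rp.eventually
    (pd_mul_eventually (V := fun p => 2 * V p) (analyticAt_const.mul hV) hΦ')
  filter_upwards [h1, levi_eq_zero hF hLF hΦ' hF', hF'] with z h1 h2 h3 h0
  have h4 := h1 (by rw [← h3, h0]; simp)
  rw [h2 h0, mul_zero] at h4
  rw [← h4]
  congr 1
  ext p
  ring

/-- Rescaled first derivatives converge to those of the leading form. -/
theorem tendsto_tv_inl (hwt : ∀ i, 0 < wt i) (hQ : IsWeightedHomogeneous wt Q d)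
    {Ψ : (Fin 2 ⊕ Fin 2 → ℂ) → ℂ}
    (hΨ : WOrd (wt2 wt) (d + 1) (fun p => Ψ p - eval p (dbl Q))) (i : Fin 2 ⊕ Fin 2)
    (p : Fin 2 ⊕ Fin 2 → ℂ) :
    Tendsto (fun x : ℂ × (Fin 2 ⊕ Fin 2 → ℂ) =>
        x.1 ^ (wt2 wt i) * pd i Ψ (sc (wt2 wt) x.1 x.2) / x.1 ^ d)
      (𝓝[{x | x.1 ≠ 0}] (0, p)) (𝓝 (eval p (pderiv i (dbl Q)))) := by
  have h1 : ∀ (c : ℂ) (p : Fin 2 ⊕ Fin 2 → ℂ),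
      c ^ 0 * eval (sc (wt2 wt) c p) (dbl Q) = c ^ d * eval p (dbl Q) := by
    intro c p; rw [pow_zero, one_mul, eval_sc (isWH_dbl hQ)]
  have h2 := eval_sc_pderiv h1 i
  rw [zero_add] at h2
  refine WOrd.tendsto_lead (wt2_pos hwt) (m := d + 1 - wt2 wt i) (by omega) h2 ?_ p
  refine .congr _ _ (hΨ.pd i) ?_
  have hΨa : AnalyticAt ℂ Ψ 0 := by
    have := hΨ.analyticAt.add (analyticAt_eval (dbl Q) 0)
    refine this.congr (Eventually.of_forall fun p => ?_)
    simp
  filter_upwards [hΨa.eventually_analyticAt] with z hz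
  have h3 := pd_add (Φ := Ψ) (Ψ := fun p => eval p (-dbl Q)) hz (analyticAt_eval _ z) i
  rw [pd_eval] at h3
  simp only [map_neg, ← sub_eq_add_neg] at h3
  exact h3

theorem pderiv_comm' (p : MvPolynomial (Fin 2 ⊕ Fin 2) ℂ) (i j : Fin 2 ⊕ Fin 2) :
    pderiv i (pderiv j p) = pderiv j (pderiv i p) := by
  have h : ⁅pderiv (R := ℂ) i, pderiv (R := ℂ) j⁆ = 0 := by
    refine derivation_ext fun k => ?_
    rw [Derivation.commutator_apply]
    simp [pderiv_X, Pi.single_apply, apply_ite]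
  have h1 := congrArg (fun D => D p) h
  simp only [Derivation.commutator_apply, Derivation.zero_apply] at h1
  exact sub_eq_zero.1 h1

/-- Passing to the leading term in the Levi form. -/
theorem tendsto_levi (hwt : ∀ i, 0 < wt i) (hQ : IsWeightedHomogeneous wt Q d)
    {Ψ E : (Fin 2 ⊕ Fin 2 → ℂ) → ℂ}
    (hΨ : WOrd (wt2 wt) (d + 1) (fun p => Ψ p - eval p (dbl Q)))
    (hE : ∀ᶠ p in 𝓝 0, ∀ i j, pd (Sum.inr j) (pd (Sum.inl i) Ψ) p =
      pd (Sum.inr j) (pd (Sum.inl i) E) p) {n : ℕ} {En : MvPolynomial (Fin 2 ⊕ Fin 2) ℂ}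
    (hEn : IsWeightedHomogeneous (wt2 wt) En n)
    (hEn2 : WOrd (wt2 wt) (n + 1) (fun p => E p - eval p En)) (p : Fin 2 ⊕ Fin 2 → ℂ) :
    Tendsto (fun x : ℂ × (Fin 2 ⊕ Fin 2 → ℂ) =>
        x.1 ^ (2 * (wt 0 + wt 1)) * levi Ψ (sc (wt2 wt) x.1 x.2) / x.1 ^ (2 * d + n))
      (𝓝[{x | x.1 ≠ 0}] (0, p)) (𝓝 (eval p (XY Q En))) := by
  have htl : ∀ i : Fin 2, Tendsto (fun x : ℂ × (Fin 2 ⊕ Fin 2 → ℂ) =>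
        x.1 ^ (wt (1 - i)) * tv Sum.inl Ψ i (sc (wt2 wt) x.1 x.2) / x.1 ^ d)
      (𝓝[{x | x.1 ≠ 0}] (0, p)) (𝓝 (eval (p ∘ Sum.inl) (hv Q i))) := by
    intro i
    fin_cases i
    · have := (tendsto_tv_inl hwt hQ hΨ (Sum.inl 1) p).neg
      rw [pderiv_dbl_inl, eval_rename, ← map_neg] at this
      refine this.congr fun x => ?_
      simp [tv, wt2, neg_div]
    · have := (tendsto_tv_inl hwt hQ hΨ (Sum.inl 0) p)
      rw [pderiv_dbl_inl, eval_rename] at this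
      refine this.congr fun x => ?_
      simp [tv, wt2]
  have htr : ∀ i : Fin 2, Tendsto (fun x : ℂ × (Fin 2 ⊕ Fin 2 → ℂ) =>
        x.1 ^ (wt (1 - i)) * tv Sum.inr Ψ i (sc (wt2 wt) x.1 x.2) / x.1 ^ d)
      (𝓝[{x | x.1 ≠ 0}] (0, p)) (𝓝 (eval (p ∘ Sum.inr) (hv (Qb Q) i))) := by
    intro i
    fin_cases i
    · have := (tendsto_tv_inl hwt hQ hΨ (Sum.inr 1) p).neg
      rw [pderiv_dbl_inr, eval_rename, ← map_neg] at this
      refine this.congr fun x => ?_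
      simp [tv, wt2, neg_div]
    · have := (tendsto_tv_inl hwt hQ hΨ (Sum.inr 0) p)
      rw [pderiv_dbl_inr, eval_rename] at this
      refine this.congr fun x => ?_
      simp [tv, wt2]
  have hEa : AnalyticAt ℂ E 0 := by
    have := hEn2.analyticAt.add (analyticAt_eval En 0)
    refine this.congr (Eventually.of_forall fun p => ?_)
    simp
  have hsub : ∀ {G : (Fin 2 ⊕ Fin 2 → ℂ) → ℂ} {R : MvPolynomial (Fin 2 ⊕ Fin 2) ℂ} {m : ℕ} (i),
      AnalyticAt ℂ G 0 → WOrd (wt2 wt) m (fun p => G p - eval p R) →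
      WOrd (wt2 wt) (m - wt2 wt i) (fun p => pd i G p - eval p (pderiv i R)) := by
    intro G R m i hG h
    refine .congr _ _ (h.pd i) ?_
    filter_upwards [hG.eventually_analyticAt] with z hz
    have h3 := pd_add (Φ := G) (Ψ := fun p => eval p (-R)) hz (analyticAt_eval _ z) i
    rw [pd_eval] at h3
    simp only [map_neg, ← sub_eq_add_neg] at h3
    exact h3
  have hEE : ∀ i j : Fin 2, Tendsto (fun x : ℂ × (Fin 2 ⊕ Fin 2 → ℂ) =>
        x.1 ^ (wt i + wt j) * pd (Sum.inr j) (pd (Sum.inl i) Ψ) (sc (wt2 wt) x.1 x.2) / x.1 ^ n)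
      (𝓝[{x | x.1 ≠ 0}] (0, p)) (𝓝 (eval p (pderiv (Sum.inl i) (pderiv (Sum.inr j) En)))) := by
    intro i j
    have h1 : ∀ (c : ℂ) p, c ^ 0 * eval (sc (wt2 wt) c p) En = c ^ n * eval p En := by
      intro c p; rw [pow_zero, one_mul, eval_sc hEn]
    have h2 := eval_sc_pderiv (eval_sc_pderiv h1 (Sum.inl i)) (Sum.inr j)
    rw [zero_add] at h2
    have h4 := hsub (Sum.inr j) (analyticAt_pd hEa (Sum.inl i)) (hsub (Sum.inl i) hEa hEn2)
    have h5 := WOrd.tendsto_lead (wt2_pos hwt) (n := n) (by omega) h2 h4 p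
    rw [pderiv_comm']
    refine h5.congr' ?_
    have h6 : ∀ᶠ x in 𝓝 ((0 : ℂ), p), ∀ i j,
        pd (Sum.inr j) (pd (Sum.inl i) Ψ) (sc (wt2 wt) x.1 x.2) =
        pd (Sum.inr j) (pd (Sum.inl i) E) (sc (wt2 wt) x.1 x.2) :=
      (tendsto_sc (wt2_pos hwt) p).eventually hE
    filter_upwards [mem_nhdsWithin_of_mem_nhds h6] with x hx
    rw [hx i j]
    rfl
  have hfin : Tendsto (fun x : ℂ × (Fin 2 ⊕ Fin 2 → ℂ) => ∑ i, ∑ j,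
      (x.1 ^ (wt (1 - i)) * tv Sum.inl Ψ i (sc (wt2 wt) x.1 x.2) / x.1 ^ d) *
      (x.1 ^ (wt (1 - j)) * tv Sum.inr Ψ j (sc (wt2 wt) x.1 x.2) / x.1 ^ d) *
      (x.1 ^ (wt i + wt j) * pd (Sum.inr j) (pd (Sum.inl i) Ψ) (sc (wt2 wt) x.1 x.2) / x.1 ^ n))
      (𝓝[{x | x.1 ≠ 0}] (0, p)) (𝓝 (eval p (XY Q En))) := by
    simp only [XY, map_sum, map_mul, eval_rename]
    exact tendsto_finsetSum _ fun i _ => tendsto_finsetSum _ fun j _ =>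
      ((htl i).mul (htr j)).mul (hEE i j)
  refine hfin.congr fun x => ?_
  simp only [levi, Finset.mul_sum, Finset.sum_div]
  refine Finset.sum_congr rfl fun i _ => Finset.sum_congr rfl fun j _ => ?_
  have h5 : 2 * (wt 0 + wt 1) = wt (1 - i) + wt (1 - j) + (wt i + wt j) := by
    fin_cases i <;> fin_cases j <;> simp <;> ring
  have h6 : x.1 ^ (2 * (wt 0 + wt 1)) =
      x.1 ^ wt (1 - i) * x.1 ^ wt (1 - j) * x.1 ^ (wt i + wt j) := by rw [h5, pow_add, pow_add]
  have h7 : x.1 ^ (2 * d + n) = x.1 ^ d * x.1 ^ d * x.1 ^ n := by ring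
  rw [h6, h7]
  simp only [div_eq_mul_inv, mul_inv]
  ring

end claim

/-! ### Real zeros near the zeros of the leading form -/

section claim
variable {Q : MvPolynomial (Fin 2) ℂ} {wt : Fin 2 → ℕ} {d : ℕ}

theorem tendsto_F_ray (hwt : ∀ i, 0 < wt i) (hQ : IsWeightedHomogeneous wt Q d)
    {F : (Fin 2 → ℂ) → ℝ} {Φ : (Fin 2 ⊕ Fin 2 → ℂ) → ℂ}
    (hΦ : WOrd (wt2 wt) (d + 1) (fun p => Φ p - eval p (dbl Q)))
    (hFΦ : ∀ᶠ z in 𝓝 (0 : Fin 2 → ℂ), ((2 * F z : ℝ) : ℂ) = Φ (rp z)) (z : Fin 2 → ℂ) :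
    Tendsto (fun t : ℝ => F (sc wt t z) / t ^ d) (𝓝[>] 0) (𝓝 (eval z Q).re) := by
  have h1 : ∀ (c : ℂ) (p : Fin 2 ⊕ Fin 2 → ℂ),
      c ^ 0 * eval (sc (wt2 wt) c p) (dbl Q) = c ^ d * eval p (dbl Q) := by
    intro c p; rw [pow_zero, one_mul, eval_sc (isWH_dbl hQ)]
  have h2 := WOrd.tendsto_lead (wt2_pos hwt) (n := d) (s := 0) (by omega) h1 hΦ (rp z)
  have h3 : Tendsto (fun t : ℝ => ((t : ℂ), rp z)) (𝓝[>] 0) (𝓝[{x | x.1 ≠ 0}] (0, rp z)) := by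
    refine tendsto_nhdsWithin_iff.2 ⟨?_, ?_⟩
    · have : Continuous (fun t : ℝ => ((t : ℂ), rp z)) := by fun_prop
      exact (this.tendsto' 0 _ (by simp)).mono_left nhdsWithin_le_nhds
    · filter_upwards [self_mem_nhdsWithin] with t ht
      have : (t : ℝ) ≠ 0 := (Set.mem_Ioi.1 ht).ne'
      simpa using this
  have h4 := (Complex.continuous_re.tendsto _).comp (h2.comp h3)
  rw [eval_dbl_rp, Complex.ofReal_re] at h4
  have h5 := h4.const_mul (1 / 2)
  rw [← mul_assoc, one_div, inv_mul_cancel₀ (by norm_num), one_mul] at h5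
  refine h5.congr' ?_
  filter_upwards [(tendsto_sc_real hwt z).eventually hFΦ] with t ht
  simp only [Function.comp, sc_rp, ← ht, pow_zero, one_mul]
  norm_cast
  ring

/-- `Re Q` takes both signs arbitrarily close to each of its nonzero zeros. -/
theorem exists_sign_change (hiso : Iso Q) {q : Fin 2 → ℂ} (hq : q ≠ 0)
    (hq0 : (eval q Q).re = 0) : ∃ v : Fin 2 → ℂ, ∀ ε > 0, ∃ s : ℝ, 0 < s ∧ s * ‖v‖ < ε ∧
      0 < (eval (q + (s : ℂ) • v) Q).re ∧ (eval (q + ((-s : ℝ) : ℂ) • v) Q).re < 0 := by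
  obtain ⟨i, hi⟩ : ∃ i, eval q (pderiv i Q) ≠ 0 := by
    by_contra! hc
    exact hq ((hiso q).1 hc)
  set v : Fin 2 → ℂ := Pi.single i ((starRingEnd ℂ) (eval q (pderiv i Q))) with hv
  set u : ℝ → ℝ := fun s => (eval (q + (s : ℂ) • v) Q).re with hu
  have hud : HasDerivAt u (Complex.normSq (eval q (pderiv i Q))) 0 := by
    have h1 := hasDerivAt_eval_line Q q v
    have h1' : HasDerivAt (fun t : ℂ => eval (q + t • v) Q)
        (∑ j, v j * eval q (pderiv j Q)) ((0 : ℝ) : ℂ) := by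
      rw [Complex.ofReal_zero]; exact h1
    have h2 := HasDerivAt.comp_ofReal h1'
    have h3 := Complex.reCLM.hasFDerivAt.comp_hasDerivAt (0 : ℝ) h2
    have h4 : Complex.reCLM (∑ j, v j * eval q (pderiv j Q)) =
        Complex.normSq (eval q (pderiv i Q)) := by
      rw [Finset.sum_eq_single i]
      · simp only [hv, Pi.single_eq_same, Complex.reCLM_apply]
        rw [mul_comm, Complex.mul_conj, Complex.ofReal_re]
      · intro j _ hj
        simp [hv, hj]
      · simp
    rw [h4] at h3
    exact h3
  have hu0 : u 0 = 0 := by simp [hu, hq0]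
  have hslope : ∀ᶠ s in 𝓝[≠] (0 : ℝ), 0 < slope u 0 s :=
    (hasDerivAt_iff_tendsto_slope.1 hud).eventually (lt_mem_nhds (Complex.normSq_pos.2 hi))
  obtain ⟨δ, hδ, h3⟩ := Metric.mem_nhdsWithin_iff.1 hslope
  refine ⟨v, fun ε hε => ?_⟩
  set s : ℝ := min (δ / 2) (ε / (2 * (‖v‖ + 1))) with hs
  have hs0 : 0 < s := lt_min (by positivity) (by positivity)
  have hsδ : s < δ := (min_le_left _ _).trans_lt (by linarith)
  have hsε : s * ‖v‖ < ε := by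
    have : s * (2 * (‖v‖ + 1)) ≤ ε := by
      rw [← le_div_iff₀ (by positivity)]; exact min_le_right _ _
    nlinarith [norm_nonneg v]
  have hup : 0 < u s := by
    have : 0 < slope u 0 s := h3 ⟨by simpa [abs_of_pos hs0] using hsδ, hs0.ne'⟩
    rw [slope_def_field, hu0, sub_zero, sub_zero] at this
    exact (div_pos_iff_of_pos_right hs0).1 this
  have hun : u (-s) < 0 := by
    have : 0 < slope u 0 (-s) := h3 ⟨by simpa [abs_of_pos hs0] using hsδ, by simpa using hs0.ne'⟩
    rw [slope_def_field, hu0, sub_zero, sub_zero] at this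
    by_contra! hc
    exact absurd (div_nonpos_of_nonneg_of_nonpos hc (by linarith)) (not_le.2 this)
  exact ⟨s, hs0, hsε, hup, hun⟩

/-- Real zeros of `F` accumulate, after rescaling, at every real zero of `Re Q`. -/
theorem frequently_real_zero (hwt : ∀ i, 0 < wt i) (hQ : IsWeightedHomogeneous wt Q d)
    (hiso : Iso Q) {F : (Fin 2 → ℂ) → ℝ} (hF : AnalyticAt ℝ F 0)
    {Φ : (Fin 2 ⊕ Fin 2 → ℂ) → ℂ}
    (hΦ : WOrd (wt2 wt) (d + 1) (fun p => Φ p - eval p (dbl Q)))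
    (hFΦ : ∀ᶠ z in 𝓝 (0 : Fin 2 → ℂ), ((2 * F z : ℝ) : ℂ) = Φ (rp z))
    {q : Fin 2 → ℂ} (hq : q ≠ 0) (hq0 : (eval q Q).re = 0) :
    ∃ᶠ x in 𝓝[{x : ℂ × (Fin 2 ⊕ Fin 2 → ℂ) | x.1 ≠ 0}] ((0 : ℂ), rp q),
      ∃ (t : ℝ) (z : Fin 2 → ℂ), x = ((t : ℂ), rp z) ∧ F (sc wt t z) = 0 := by
  have hlim := tendsto_F_ray hwt hQ hΦ hFΦ
  obtain ⟨v, hv⟩ := exists_sign_change hiso hq hq0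
  rw [frequently_iff]
  intro U hU
  have hcont : Tendsto (fun y : ℝ × (Fin 2 → ℂ) => ((y.1 : ℂ), rp y.2)) (𝓝 (0, q))
      (𝓝 (0, rp q)) := by
    have : Continuous (fun y : ℝ × (Fin 2 → ℂ) => ((y.1 : ℂ), rp y.2)) :=
      (Complex.continuous_ofReal.comp continuous_fst).prodMk (continuous_rp.comp continuous_snd)
    exact this.tendsto' _ _ (by simp)
  have hsc : Tendsto (fun y : ℝ × (Fin 2 → ℂ) => sc wt (y.1 : ℂ) y.2) (𝓝 (0, q)) (𝓝 0) := by
    have : Continuous (fun y : ℝ × (Fin 2 → ℂ) => ((y.1 : ℂ), y.2)) := by fun_prop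
    exact (tendsto_sc hwt q).comp (this.tendsto' _ _ (by simp))
  have h1 : ∀ᶠ y in 𝓝 ((0 : ℝ), q), (y.1 ≠ 0 → ((y.1 : ℂ), rp y.2) ∈ U) ∧
      ContinuousAt F (sc wt (y.1 : ℂ) y.2) := by
    refine Eventually.and ?_ ?_
    · filter_upwards [hcont.eventually (eventually_nhdsWithin_iff.1 hU)] with y hy h0
      exact hy (by simpa using h0)
    · exact hsc.eventually (hF.eventually_analyticAt.mono fun z hz => hz.continuousAt)
  obtain ⟨ε, hε, h2⟩ := Metric.eventually_nhds_iff.1 h1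
  obtain ⟨s, hs0, hsε, hup, hun⟩ := hv ε hε
  have h4 : ∀ᶠ t in 𝓝[>] (0 : ℝ), t < ε ∧ 0 < t ∧
      0 < F (sc wt t (q + (s : ℂ) • v)) / t ^ d ∧
      F (sc wt t (q + ((-s : ℝ) : ℂ) • v)) / t ^ d < 0 := by
    filter_upwards [(hlim _).eventually (lt_mem_nhds hup), (hlim _).eventually (gt_mem_nhds hun),
      self_mem_nhdsWithin, mem_nhdsWithin_of_mem_nhds (gt_mem_nhds hε)] with t a b c e
    exact ⟨e, c, a, b⟩
  obtain ⟨t, ht1, ht0, htp, htn⟩ := h4.exists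
  have hball : ∀ r ∈ Set.Icc (-s) s, dist (t, q + (r : ℂ) • v) (0, q) < ε := by
    intro r hr
    rw [Prod.dist_eq, max_lt_iff]
    refine ⟨by simpa [abs_of_pos ht0] using ht1, ?_⟩
    have : |r| ≤ s := abs_le.2 ⟨hr.1, hr.2⟩
    rw [dist_self_add_left, norm_smul, Complex.norm_real, Real.norm_eq_abs]
    exact (mul_le_mul_of_nonneg_right this (norm_nonneg _)).trans_lt hsε
  have hivt : (0 : ℝ) ∈ (fun r : ℝ => F (sc wt t (q + (r : ℂ) • v))) '' Set.Icc (-s) s := by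
    refine intermediate_value_Icc (by linarith) (fun r hr => ?_) ⟨?_, ?_⟩
    · refine ContinuousAt.continuousWithinAt ?_
      have hc : Continuous (fun r : ℝ => sc wt (t : ℂ) (q + (r : ℂ) • v)) :=
        continuous_sc.comp (f := fun r : ℝ => ((t : ℂ), q + (r : ℂ) • v)) (by fun_prop)
      exact ContinuousAt.comp (f := fun r : ℝ => sc wt (t : ℂ) (q + (r : ℂ) • v))
        (h2 (hball r hr)).2 hc.continuousAt
    · by_contra! hc
      exact absurd (div_nonneg hc.le (pow_pos ht0 d).le) (not_le.2 htn)
    · by_contra! hc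
      exact absurd (div_nonpos_of_nonpos_of_nonneg hc.le (pow_pos ht0 d).le) (not_le.2 htp)
  obtain ⟨r, hr, hr0⟩ := hivt
  exact ⟨((t : ℂ), rp (q + (r : ℂ) • v)), (h2 (hball r hr)).1 ht0.ne', t, _, rfl, hr0⟩

end claim

/-! ### Separation of variables modulo high order -/

section claim
variable {Q : MvPolynomial (Fin 2) ℂ} {wt : Fin 2 → ℕ} {d : ℕ}

theorem pd_eq_zero {ι : Type*} [Fintype ι] [DecidableEq ι] {k : ι} {Φ : (ι → ℂ) → ℂ}
    (h : ∀ p (t : ℂ), Φ (p + t • Pi.single k 1) = Φ p) (p : ι → ℂ) : pd k Φ p = 0 := by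
  unfold pd
  by_cases hd : DifferentiableAt ℂ Φ p
  · rw [← hd.lineDeriv_eq_fderiv]
    simp only [lineDeriv, h, deriv_const]
  · rw [fderiv_zero_of_not_differentiableAt hd]; rfl

theorem pd_translate {ι : Type*} [Fintype ι] [DecidableEq ι] {k l : ι} {Φ : (ι → ℂ) → ℂ}
    (h : ∀ p (t : ℂ), Φ (p + t • Pi.single k 1) = Φ p) (p : ι → ℂ) (t : ℂ) :
    pd l Φ (p + t • Pi.single k 1) = pd l Φ p := by
  unfold pd
  rw [← fderiv_comp_add_right]
  simp only [h]

theorem analyticAt_comp_inl {f : (Fin 2 → ℂ) → ℂ} (hf : AnalyticAt ℂ f 0) :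
    AnalyticAt ℂ (fun p : Fin 2 ⊕ Fin 2 → ℂ => f (p ∘ Sum.inl)) 0 :=
  (WOrd.comp_proj (wt := fun _ => 1) (wt' := fun _ => 1) Sum.inl (fun _ => rfl)
    (WOrd.of_analytic hf)).analyticAt

theorem analyticAt_comp_inr {f : (Fin 2 → ℂ) → ℂ} (hf : AnalyticAt ℂ f 0) :
    AnalyticAt ℂ (fun p : Fin 2 ⊕ Fin 2 → ℂ => f (p ∘ Sum.inr)) 0 :=
  (WOrd.comp_proj (wt := fun _ => 1) (wt' := fun _ => 1) Sum.inr (fun _ => rfl)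
    (WOrd.of_analytic hf)).analyticAt

/-- Separated terms `f(z) + g(w)` do not contribute to the mixed second derivatives. -/
theorem mixed_pd {Ψ E : (Fin 2 ⊕ Fin 2 → ℂ) → ℂ} {f g : (Fin 2 → ℂ) → ℂ}
    (hf : AnalyticAt ℂ f 0) (hg : AnalyticAt ℂ g 0) (hE : AnalyticAt ℂ E 0)
    (h : ∀ᶠ p in 𝓝 (0 : Fin 2 ⊕ Fin 2 → ℂ),
      Ψ p = f (p ∘ Sum.inl) + g (p ∘ Sum.inr) + E p) :
    ∀ᶠ p in 𝓝 (0 : Fin 2 ⊕ Fin 2 → ℂ), ∀ i j : Fin 2,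
      pd (Sum.inr j) (pd (Sum.inl i) Ψ) p = pd (Sum.inr j) (pd (Sum.inl i) E) p := by
  rw [eventually_all]; intro i
  rw [eventually_all]; intro j
  have hf1 : ∀ (p : Fin 2 ⊕ Fin 2 → ℂ) (t : ℂ),
      f ((p + t • (Pi.single (Sum.inr j) 1 : Fin 2 ⊕ Fin 2 → ℂ)) ∘ Sum.inl) =
        f (p ∘ Sum.inl) := by
    intro p t; congr 1; ext k; simp
  have hg1 : ∀ (p : Fin 2 ⊕ Fin 2 → ℂ) (t : ℂ),
      g ((p + t • (Pi.single (Sum.inl i) 1 : Fin 2 ⊕ Fin 2 → ℂ)) ∘ Sum.inr) =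
        g (p ∘ Sum.inr) := by
    intro p t; congr 1; ext k; simp
  have e1 : ∀ᶠ p in 𝓝 (0 : Fin 2 ⊕ Fin 2 → ℂ), pd (Sum.inl i) Ψ p =
      pd (Sum.inl i) (fun p : Fin 2 ⊕ Fin 2 → ℂ => f (p ∘ Sum.inl)) p +
        pd (Sum.inl i) E p := by
    filter_upwards [pd_congr h (Sum.inl i), (analyticAt_comp_inl hf).eventually_analyticAt,
      (analyticAt_comp_inr hg).eventually_analyticAt, hE.eventually_analyticAt] with p a b c e
    rw [a, pd_add (Φ := fun p => f (p ∘ Sum.inl) + g (p ∘ Sum.inr)) (b.add c) e,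
      pd_add (Φ := fun p => f (p ∘ Sum.inl)) b c,
      pd_eq_zero (Φ := fun p : Fin 2 ⊕ Fin 2 → ℂ => g (p ∘ Sum.inr)) hg1, add_zero]
  filter_upwards [pd_congr e1 (Sum.inr j),
    (analyticAt_pd (analyticAt_comp_inl hf) (Sum.inl i)).eventually_analyticAt,
    (analyticAt_pd hE (Sum.inl i)).eventually_analyticAt] with p a b c
  rw [a, pd_add b c, pd_eq_zero (Φ := pd (Sum.inl i) _), zero_add]
  exact fun p t => pd_translate hf1 p t

theorem XY_zero (hiso : Iso Q) (E : MvPolynomial (Fin 2 ⊕ Fin 2) ℂ) :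
    eval (rp 0) (XY Q E) = 0 := by
  have h := (hiso 0).2 rfl
  have hhv : ∀ i, eval (0 : Fin 2 → ℂ) (hv Q i) = 0 := by
    intro i
    unfold hv
    split_ifs
    · rw [map_neg, h, neg_zero]
    · exact h 0
  have h0 : (rp (0 : Fin 2 → ℂ)) ∘ Sum.inl = 0 := by ext i; simp [rp]
  simp only [XY, map_sum, map_mul, eval_rename, h0, hhv, zero_mul, Finset.sum_const_zero]

/-- Formal decomposition: modulo arbitrarily high weighted order, a multiple of the complexified
defining function is a sum `f(z) + g(w)`. -/
theorem claim (hwt : ∀ i, 0 < wt i) (hd : 0 < d) (hQ : IsWeightedHomogeneous wt Q d)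
    (hiso : Iso Q) {F : (Fin 2 → ℂ) → ℝ} (hF : AnalyticAt ℝ F 0) (hLF : LeviFlatGerm F)
    {Φ : (Fin 2 ⊕ Fin 2 → ℂ) → ℂ}
    (hΦ : WOrd (wt2 wt) (d + 1) (fun p => Φ p - eval p (dbl Q)))
    (hFΦ : ∀ᶠ z in 𝓝 (0 : Fin 2 → ℂ), ((2 * F z : ℝ) : ℂ) = Φ (rp z)) (N : ℕ) :
    ∃ (V : (Fin 2 ⊕ Fin 2 → ℂ) → ℂ) (f g : (Fin 2 → ℂ) → ℂ) (E : (Fin 2 ⊕ Fin 2 → ℂ) → ℂ),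
      AnalyticAt ℂ V 0 ∧ WOrd wt (d + 1) (fun z => f z - eval z Q) ∧
      WOrd wt (d + 1) (fun z => g z - eval z (Qb Q)) ∧ WOrd (wt2 wt) (d + N + 1) E ∧
      ∀ᶠ p in 𝓝 (0 : Fin 2 ⊕ Fin 2 → ℂ),
        V p * Φ p = f (p ∘ Sum.inl) + g (p ∘ Sum.inr) + E p := by
  have hΦa : AnalyticAt ℂ Φ 0 := by
    have := hΦ.analyticAt.add (analyticAt_eval (dbl Q) 0)
    refine this.congr (Eventually.of_forall fun p => ?_)
    simp
  induction N with
  | zero =>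
    refine ⟨fun _ => 1, fun z => eval z Q, fun z => eval z (Qb Q),
      fun p => Φ p - eval p (dbl Q), analyticAt_const, WOrd.zero.congr' fun z => by simp,
      WOrd.zero.congr' fun z => by simp, hΦ, Eventually.of_forall fun p => ?_⟩
    simp only [eval_dbl]; ring
  | succ N ih =>
    obtain ⟨V, f, g, E, hV, hf, hg, hE, heq⟩ := ih
    have hfa : AnalyticAt ℂ f 0 :=
      (hf.analyticAt.add (analyticAt_eval Q 0)).congr (Eventually.of_forall fun p => by simp)
    have hga : AnalyticAt ℂ g 0 :=
      (hg.analyticAt.add (analyticAt_eval (Qb Q) 0)).congr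
        (Eventually.of_forall fun p => by simp)
    have hf' := hf.comp_proj (wt' := wt2 wt) Sum.inl (fun _ => rfl)
    have hg' := hg.comp_proj (wt' := wt2 wt) Sum.inr (fun _ => rfl)
    obtain ⟨En, hEn, hEn2⟩ := hE.lead (wt2_pos hwt)
    have hVΦ : WOrd (wt2 wt) (d + 1) (fun p => V p * Φ p - eval p (dbl Q)) := by
      refine WOrd.congr _ _ ((hf'.add _ _ hg').add _ _ (hE.mono (by omega))) ?_
      filter_upwards [heq] with p hp
      rw [hp, eval_dbl]; ring
    have hlev := levi_mul_eq_zero hF hLF hV hΦa hFΦ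
    have hXY : ∀ z, (eval z Q).re = 0 → eval (rp z) (XY Q En) = 0 := by
      intro q hq0
      by_cases hq : q = 0
      · rw [hq, XY_zero hiso]
      have hfr := frequently_real_zero hwt hQ hiso hF hΦ hFΦ hq hq0
      have ht := tendsto_levi hwt hQ hVΦ (mixed_pd hfa hga hE.analyticAt heq) hEn hEn2 (rp q)
      have hev : ∀ᶠ x in 𝓝[{x : ℂ × (Fin 2 ⊕ Fin 2 → ℂ) | x.1 ≠ 0}] ((0 : ℂ), rp q),
          ∀ z, sc (wt2 wt) x.1 x.2 = rp z → F z = 0 →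
            levi (fun p => V p * Φ p) (rp z) = 0 := by
        have h1 : ∀ᶠ p in 𝓝 (0 : Fin 2 ⊕ Fin 2 → ℂ), F (p ∘ Sum.inl) = 0 →
            levi (fun p => V p * Φ p) (rp (p ∘ Sum.inl)) = 0 := by
          have : Tendsto (fun p : Fin 2 ⊕ Fin 2 → ℂ => p ∘ Sum.inl) (𝓝 0) (𝓝 0) :=
            (Continuous.tendsto' (by fun_prop) _ _ rfl)
          exact this.eventually hlev
        filter_upwards [((tendsto_sc (wt2_pos hwt) (rp q)).mono_left
          nhdsWithin_le_nhds).eventually h1] with x hx z hz hFz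
        rw [hz] at hx
        exact hx hFz
      refine isClosed_singleton.mem_of_frequently_of_tendsto ?_ ht
      refine (hfr.and_eventually hev).mono ?_
      rintro x ⟨⟨t, z, rfl, hz⟩, hx⟩
      have := hx _ (sc_rp wt t z) hz
      simp only [Set.mem_singleton_iff]
      rw [sc_rp, this, mul_zero, zero_div]
    have hEn' : IsWeightedHomogeneous (wt2 wt) En ((N + 1) + d) := by
      convert hEn using 1; ring
    obtain ⟨p, q, U, hp, hq, hU, hsplit⟩ := split_of_XY hd hQ hiso hEn' hXY
    refine ⟨fun x => V x * (1 - eval x U), fun z => f z + eval z p, fun z => g z + eval z q,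
      fun x => (E x - eval x En) + eval x U * (eval x (dbl Q) - V x * Φ x), ?_, ?_, ?_, ?_, ?_⟩
    · exact hV.mul (analyticAt_const.sub (analyticAt_eval U 0))
    · exact (hf.add _ _ (WOrd.poly hp (by omega))).congr' fun z => by ring
    · exact (hg.add _ _ (WOrd.poly hq (by omega))).congr' fun z => by ring
    · refine WOrd.add _ _ (hEn2.mono (by omega)) ?_
      exact (((WOrd.poly hU le_rfl).mul hVΦ).neg.mono (by omega)).congr' fun z => by ring
    · filter_upwards [heq] with x hx
      have h1 : eval x En = eval (x ∘ Sum.inl) p + eval (x ∘ Sum.inr) q +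
          eval x (dbl Q) * eval x U := by
        rw [hsplit]; simp [eval_rename]
      linear_combination hx + h1

end claim

/-! ### Flatness of holonomy along chains in the zero set -/

section flat
variable {Q : MvPolynomial (Fin 2) ℂ} {wt : Fin 2 → ℕ} {d : ℕ}

/-- An analytic function with nonzero derivative in the second variable is uniformly injective
in that variable, with a linear lower bound. -/
theorem inj_bound {G : ℂ × ℂ → ℂ} {e x : ℂ} (hG : AnalyticAt ℂ G (e, x)) {D : ℂ}
    (hD : HasDerivAt (fun t => G (e, t)) D x) (hD0 : D ≠ 0) :
    ∃ c > 0, ∀ᶠ y in 𝓝 (e, x, x), c * ‖y.2.1 - y.2.2‖ ≤ ‖G (y.1, y.2.1) - G (y.1, y.2.2)‖ := by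
  obtain ⟨L, hL⟩ : ∃ L, HasStrictFDerivAt G L (e, x) := ⟨_, hG.hasStrictFDerivAt⟩
  have hLD : ∀ t : ℂ, L (0, t) = t * D := by
    intro t
    have h1 : HasDerivAt (fun t : ℂ => (e, t)) ((0 : ℂ), (1 : ℂ)) x :=
      (hasDerivAt_const x e).prodMk (hasDerivAt_id x)
    have h2 := (hL.hasFDerivAt.comp_hasDerivAt x h1).unique hD
    rw [← h2, ← smul_eq_mul, ← map_smul]; simp
  refine ⟨‖D‖ / 2, half_pos (norm_pos_iff.2 hD0), ?_⟩
  have h3 := hL.isLittleO.def (half_pos (norm_pos_iff.2 hD0))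
  have h4 : Tendsto (fun y : ℂ × ℂ × ℂ => ((y.1, y.2.1), (y.1, y.2.2))) (𝓝 (e, x, x))
      (𝓝 ((e, x), (e, x))) := Continuous.tendsto' (by fun_prop) _ _ rfl
  filter_upwards [h4.eventually h3] with y hy
  have h5 : ((y.1, y.2.1) : ℂ × ℂ) - (y.1, y.2.2) = (0, y.2.1 - y.2.2) := by simp
  have h6 : ‖((0 : ℂ), y.2.1 - y.2.2)‖ = ‖y.2.1 - y.2.2‖ := by simp [Prod.norm_def]
  rw [h5, hLD, h6] at hy
  have h7 : ‖(y.2.1 - y.2.2) * D‖ ≤ ‖G (y.1, y.2.1) - G (y.1, y.2.2)‖ +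
      ‖G (y.1, y.2.1) - G (y.1, y.2.2) - (y.2.1 - y.2.2) * D‖ := by
    have := norm_sub_le (G (y.1, y.2.1) - G (y.1, y.2.2))
      (G (y.1, y.2.1) - G (y.1, y.2.2) - (y.2.1 - y.2.2) * D)
    rwa [sub_sub_cancel] at this
  rw [norm_mul] at h7
  linarith

/-- Separation of variables up to order `N`: some multiple of `Φ` is `f(z) + g(w)` up to an error
of weighted order at least `d + N + 1`. -/
def Decomp (wt : Fin 2 → ℕ) (d : ℕ) (Q : MvPolynomial (Fin 2) ℂ)
    (Φ : (Fin 2 ⊕ Fin 2 → ℂ) → ℂ) (N : ℕ) : Prop :=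
  ∃ (V : (Fin 2 ⊕ Fin 2 → ℂ) → ℂ) (f g : (Fin 2 → ℂ) → ℂ) (E : (Fin 2 ⊕ Fin 2 → ℂ) → ℂ),
      AnalyticAt ℂ V 0 ∧ WOrd wt (d + 1) (fun z => f z - eval z Q) ∧
      WOrd wt (d + 1) (fun z => g z - eval z (Qb Q)) ∧ WOrd (wt2 wt) (d + N + 1) E ∧
      ∀ᶠ p in 𝓝 (0 : Fin 2 ⊕ Fin 2 → ℂ),
        V p * Φ p = f (p ∘ Sum.inl) + g (p ∘ Sum.inr) + E p

theorem continuousAt_elim {X : Type*} [TopologicalSpace X] {a b : X → Fin 2 → ℂ} {x : X}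
    (ha : ContinuousAt a x) (hb : ContinuousAt b x) :
    ContinuousAt (fun y => (Sum.elim (a y) (b y) : Fin 2 ⊕ Fin 2 → ℂ)) x := by
  rw [continuousAt_pi]
  rintro (i | i)
  · exact (continuous_apply i).continuousAt.comp ha
  · exact (continuous_apply i).continuousAt.comp hb

/-- Blown-up form of the decomposition: along curves in the zero set of `Φ`, the sum
`fs + gs` of the blown-up functions vanishes to order `N + 1`. -/
theorem sharp_rel (hwt : ∀ i, 0 < wt i) (hQ : IsWeightedHomogeneous wt Q d)
    {Φ : (Fin 2 ⊕ Fin 2 → ℂ) → ℂ} {N : ℕ} (hC : Decomp wt d Q Φ N) :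
    ∃ fs gs : ℂ × (Fin 2 → ℂ) → ℂ, (∀ z, AnalyticAt ℂ fs (0, z)) ∧
      (∀ z, AnalyticAt ℂ gs (0, z)) ∧ (∀ z, fs (0, z) = eval z Q) ∧
      (∀ z, gs (0, z) = eval z (Qb Q)) ∧
      ∀ a b : ℂ → Fin 2 → ℂ, ContinuousAt a 0 → ContinuousAt b 0 →
        (∀ᶠ t in 𝓝[≠] (0 : ℂ), Φ (sc (wt2 wt) t (Sum.elim (a t) (b t))) = 0) →
        (fun t => fs (t, a t) + gs (t, b t)) =O[𝓝[≠] 0] (fun t : ℂ => t ^ (N + 1)) := by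
  obtain ⟨V, f, g, E, hV, hf, hg, hE, heq⟩ := hC
  obtain ⟨fs, hfs, hfs1, hfs0⟩ := hf.sharp_lead hwt hQ
  obtain ⟨gs, hgs, hgs1, hgs0⟩ := hg.sharp_lead hwt (isWH_Qb hQ)
  obtain ⟨Es, hEs, hEs1⟩ := hE.sharp (wt2_pos hwt)
  refine ⟨fs, gs, hfs, hgs, hfs0, hgs0, fun a b ha hb hab => ?_⟩
  have ha1 : Tendsto (fun t => (t, a t)) (𝓝[≠] (0 : ℂ)) (𝓝 (0, a 0)) :=
    (continuousAt_id.prodMk ha).tendsto.mono_left nhdsWithin_le_nhds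
  have hb1 : Tendsto (fun t => (t, b t)) (𝓝[≠] (0 : ℂ)) (𝓝 (0, b 0)) :=
    (continuousAt_id.prodMk hb).tendsto.mono_left nhdsWithin_le_nhds
  have hab1 : Tendsto (fun t => (t, (Sum.elim (a t) (b t) : Fin 2 ⊕ Fin 2 → ℂ)))
      (𝓝[≠] (0 : ℂ)) (𝓝 (0, Sum.elim (a 0) (b 0))) :=
    (continuousAt_id.prodMk (continuousAt_elim ha hb)).tendsto.mono_left nhdsWithin_le_nhds
  have hbd : (fun t => Es (t, Sum.elim (a t) (b t))) =O[𝓝[≠] (0 : ℂ)] (fun _ => (1 : ℂ)) :=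
    ((hEs _).continuousAt.tendsto.comp hab1).isBigO_one ℂ
  have h1 : (fun t : ℂ => - (t ^ (N + 1) * Es (t, Sum.elim (a t) (b t)))) =O[𝓝[≠] 0]
      (fun t : ℂ => t ^ (N + 1)) := by
    simpa using ((Asymptotics.isBigO_refl (fun t : ℂ => t ^ (N + 1)) (𝓝[≠] 0)).mul hbd).neg_left
  refine h1.congr' ?_ EventuallyEq.rfl
  filter_upwards [hab, ha1.eventually (hfs1 _), hb1.eventually (hgs1 _),
    hab1.eventually (hEs1 _), ((tendsto_sc (wt2_pos hwt) _).comp hab1).eventually heq,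
    self_mem_nhdsWithin] with t h2 h3 h4 h5 h6 h7
  simp only [Function.comp] at h6
  rw [h2, mul_zero, sc_inl, sc_inr, Sum.elim_comp_inl, Sum.elim_comp_inr, h5, h3, h4] at h6
  have h8 : t ^ d * (fs (t, a t) + gs (t, b t) + t ^ (N + 1) * Es (t, Sum.elim (a t) (b t))) = 0 := by
    linear_combination -h6
  have h9 := (mul_eq_zero.1 h8).resolve_left (pow_ne_zero _ h7)
  linear_combination -h9

/-- Four-point chain: if `(z, w)`, `(z, w₀ + h v)`, `(ζ, w)` and `(ζ, w₀ + k v)` all lie in the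
rescaled zero set, then `h` and `k` agree to infinite order in the dilation parameter `t`. -/
theorem four_point (hwt : ∀ i, 0 < wt i) (hQ : IsWeightedHomogeneous wt Q d)
    {Φ : (Fin 2 ⊕ Fin 2 → ℂ) → ℂ} (hC : ∀ N, Decomp wt d Q Φ N) {w0 v : Fin 2 → ℂ}
    (hv : ∑ i, v i * eval w0 (pderiv i (Qb Q)) ≠ 0) :
    ∃ r > 0, ∀ (z w ζ : ℂ → Fin 2 → ℂ) (h k : ℂ → ℂ), ContinuousAt z 0 → ContinuousAt w 0 →
      ContinuousAt ζ 0 → ContinuousAt h 0 → ContinuousAt k 0 → ‖h 0‖ < r → ‖k 0‖ < r →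
      (∀ᶠ t in 𝓝[≠] (0 : ℂ), Φ (sc (wt2 wt) t (Sum.elim (z t) (w t))) = 0) →
      (∀ᶠ t in 𝓝[≠] (0 : ℂ), Φ (sc (wt2 wt) t (Sum.elim (z t) (w0 + h t • v))) = 0) →
      (∀ᶠ t in 𝓝[≠] (0 : ℂ), Φ (sc (wt2 wt) t (Sum.elim (ζ t) (w t))) = 0) →
      (∀ᶠ t in 𝓝[≠] (0 : ℂ), Φ (sc (wt2 wt) t (Sum.elim (ζ t) (w0 + k t • v))) = 0) →
      ∀ N : ℕ, (fun t => h t - k t) =O[𝓝[≠] 0] (fun t : ℂ => t ^ (N + 1)) := by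
  have hlin : ∀ t : ℂ, AnalyticAt ℂ (fun t : ℂ => w0 + t • v) t := fun t =>
    analyticAt_const.add (analyticAt_id.smul analyticAt_const)
  have hder : ∀ t0 : ℂ, HasDerivAt (fun t : ℂ => eval (w0 + t • v) (Qb Q))
      (∑ i, v i * eval (w0 + t0 • v) (pderiv i (Qb Q))) t0 := by
    intro t0
    have h1 := hasDerivAt_eval_line (Qb Q) (w0 + t0 • v) v
    have h2 : HasDerivAt (fun t : ℂ => t - t0) 1 t0 := (hasDerivAt_id t0).sub_const t0
    have h1' : HasDerivAt (fun t : ℂ => eval (w0 + t0 • v + t • v) (Qb Q))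
        (∑ i, v i * eval (w0 + t0 • v) (pderiv i (Qb Q))) ((fun t : ℂ => t - t0) t0) := by
      simp only [sub_self]; exact h1
    have h3 := HasDerivAt.comp (h := fun t : ℂ => t - t0) t0 h1' h2
    rw [mul_one] at h3
    refine h3.congr_of_eventuallyEq (Eventually.of_forall fun t => ?_)
    simp only [Function.comp]
    congr 2
    rw [add_assoc, ← add_smul, add_sub_cancel]
  have hG0 : AnalyticAt ℂ (fun y : ℂ × ℂ => eval (w0 + y.2 • v) (Qb Q)) (0, 0) :=
    AnalyticAt.comp (g := fun z => eval z (Qb Q)) (f := fun y : ℂ × ℂ => w0 + y.2 • v)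
      (analyticAt_eval _ _) (analyticAt_const.add (analyticAt_snd.smul analyticAt_const))
  have hd0 := hder 0
  rw [zero_smul, add_zero] at hd0
  obtain ⟨c0, hc0, hinj⟩ := inj_bound hG0 hd0 hv
  have hne : ∀ᶠ t in 𝓝 (0 : ℂ), ∑ i, v i * eval (w0 + t • v) (pderiv i (Qb Q)) ≠ 0 := by
    have hc : ContinuousAt (fun t : ℂ => ∑ i, v i * eval (w0 + t • v) (pderiv i (Qb Q))) 0 := by
      refine tendsto_finsetSum _ fun i _ => ?_
      exact (((analyticAt_eval (pderiv i (Qb Q)) _).comp (hlin 0)).continuousAt).const_mul _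
    refine hc.eventually_ne ?_
    rwa [zero_smul, add_zero]
  have hinj' : ∀ᶠ y in 𝓝 ((0 : ℂ), (0 : ℂ)),
      eval (w0 + y.1 • v) (Qb Q) = eval (w0 + y.2 • v) (Qb Q) → y.1 = y.2 := by
    have hT : Tendsto (fun y : ℂ × ℂ => ((0 : ℂ), y)) (𝓝 (0, 0)) (𝓝 (0, 0, 0)) :=
      Continuous.tendsto' (by fun_prop) _ _ rfl
    filter_upwards [hT.eventually hinj] with y hy h
    simp only [h, sub_self, norm_zero] at hy
    have : ‖y.1 - y.2‖ ≤ 0 := by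
      by_contra! hlt; nlinarith
    exact sub_eq_zero.1 (norm_le_zero_iff.1 this)
  obtain ⟨r1, hr1, hne1⟩ := Metric.eventually_nhds_iff.1 hne
  obtain ⟨r2, hr2, hinj2⟩ := Metric.eventually_nhds_iff.1 hinj'
  refine ⟨min r1 r2, lt_min hr1 hr2, ?_⟩
  intro z w ζ h k hz hw hζ hh hk hh0 hk0 A B C D N
  obtain ⟨fs, gs, hfs, hgs, hfs0, hgs0, hrel⟩ := sharp_rel hwt hQ (hC N)
  have hhv : ContinuousAt (fun t => w0 + h t • v) 0 :=
    continuousAt_const.add (hh.smul continuousAt_const)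
  have hkv : ContinuousAt (fun t => w0 + k t • v) 0 :=
    continuousAt_const.add (hk.smul continuousAt_const)
  have hO : (fun t => gs (t, w0 + h t • v) - gs (t, w0 + k t • v)) =O[𝓝[≠] 0]
      (fun t : ℂ => t ^ (N + 1)) :=
    ((((hrel _ _ hz hhv B).sub (hrel _ _ hz hw A)).add (hrel _ _ hζ hw C)).sub
      (hrel _ _ hζ hkv D)).congr_left fun t => by ring
  -- in the limit `t → 0` the two points have the same image under `Qb Q`
  have hlim : eval (w0 + h 0 • v) (Qb Q) = eval (w0 + k 0 • v) (Qb Q) := by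
    have l1 : Tendsto (fun t => gs (t, w0 + h t • v) - gs (t, w0 + k t • v)) (𝓝[≠] (0 : ℂ))
        (𝓝 (gs (0, w0 + h 0 • v) - gs (0, w0 + k 0 • v))) :=
      (((hgs _).continuousAt.comp (f := fun t => (t, w0 + h t • v))
        (continuousAt_id.prodMk hhv)).sub
        ((hgs _).continuousAt.comp (f := fun t => (t, w0 + k t • v))
          (continuousAt_id.prodMk hkv))).tendsto.mono_left nhdsWithin_le_nhds
    have l2 : Tendsto (fun t : ℂ => t ^ (N + 1)) (𝓝[≠] (0 : ℂ)) (𝓝 0) :=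
      (Continuous.tendsto' (by fun_prop) _ _ (by simp)).mono_left nhdsWithin_le_nhds
    have l3 := tendsto_nhds_unique l1 (hO.trans_tendsto l2)
    rw [hgs0, hgs0] at l3
    exact sub_eq_zero.1 l3
  have hhk : h 0 = k 0 := by
    refine hinj2 (y := (h 0, k 0)) ?_ hlim
    rw [Prod.dist_eq, max_lt_iff]
    simp only [dist_zero_right]
    exact ⟨hh0.trans_le (min_le_right _ _), hk0.trans_le (min_le_right _ _)⟩
  have hG : AnalyticAt ℂ (fun y : ℂ × ℂ => gs (y.1, w0 + y.2 • v)) (0, h 0) :=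
    (hgs _).comp (f := fun y : ℂ × ℂ => (y.1, w0 + y.2 • v)) (analyticAt_fst.prod
      ((hlin _).comp (x := ((0 : ℂ), h 0)) analyticAt_snd))
  have hGd : HasDerivAt (fun t => gs (0, w0 + t • v))
      (∑ i, v i * eval (w0 + h 0 • v) (pderiv i (Qb Q))) (h 0) := by
    simp only [hgs0]; exact hder _
  obtain ⟨c, hc, hbd⟩ := inj_bound hG hGd
    (hne1 (by rw [dist_zero_right]; exact hh0.trans_le (min_le_left _ _)))
  have hT : Tendsto (fun t => (t, h t, k t)) (𝓝[≠] (0 : ℂ)) (𝓝 (0, h 0, h 0)) := by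
    have : ContinuousAt (fun t => (t, h t, k t)) 0 := continuousAt_id.prodMk (hh.prodMk hk)
    have := this.tendsto
    simp only [id, ← hhk] at this
    exact this.mono_left nhdsWithin_le_nhds
  refine (Asymptotics.IsBigO.of_bound (c⁻¹) ?_).trans hO
  filter_upwards [hT.eventually hbd] with t ht
  rw [← div_eq_inv_mul, le_div_iff₀ hc, mul_comm]
  exact ht

end flat

/-! ### Transversals to the foliation of the zero set -/

section family
variable {Q : MvPolynomial (Fin 2) ℂ} {wt : Fin 2 → ℕ} {d : ℕ}

theorem eventually_zero_of_flat {g : ℂ → ℂ} (hg : AnalyticAt ℂ g 0)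
    (h : ∀ N : ℕ, g =O[𝓝[≠] 0] (fun t : ℂ => t ^ (N + 1))) : ∀ᶠ t in 𝓝 0, g t = 0 := by
  by_contra hc
  obtain ⟨n, g1, hg1, hne, heq⟩ := hg.exists_eventuallyEq_pow_smul_nonzero_iff.2 hc
  have h1 : g1 =O[𝓝[≠] 0] (fun t : ℂ => t) := by
    have h2 := (h n).mul (Asymptotics.isBigO_refl (fun t : ℂ => (t ^ n)⁻¹) (𝓝[≠] 0))
    refine h2.congr' ?_ ?_
    · filter_upwards [mem_nhdsWithin_of_mem_nhds heq, self_mem_nhdsWithin] with t ht ht0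
      have : t ^ n ≠ 0 := pow_ne_zero _ ht0
      rw [ht, sub_zero, smul_eq_mul]; field_simp
    · filter_upwards [self_mem_nhdsWithin] with t ht0
      have : t ^ n ≠ 0 := pow_ne_zero _ ht0
      rw [pow_succ]; field_simp
  have h3 : Tendsto (fun t : ℂ => t) (𝓝[≠] (0 : ℂ)) (𝓝 0) :=
    tendsto_id.mono_left nhdsWithin_le_nhds
  exact hne (tendsto_nhds_unique (hg1.continuousAt.tendsto.mono_left nhdsWithin_le_nhds)
    (h1.trans_tendsto h3))

/-- An analytic function that is flat in `t` at `t = 0`, for every nearby value of the other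
variable, vanishes identically. -/
theorem zero_of_flat {E : Type*} [NormedAddCommGroup E] [NormedSpace ℂ E] {Θ : ℂ × E → ℂ} {y0 : E}
    (hΘ : AnalyticAt ℂ Θ (0, y0))
    (hflat : ∀ᶠ y in 𝓝 y0, ∀ N : ℕ, (fun t => Θ (t, y)) =O[𝓝[≠] 0] (fun t : ℂ => t ^ (N + 1))) :
    ∀ᶠ x in 𝓝 ((0 : ℂ), y0), Θ x = 0 := by
  obtain ⟨ε, hε, h1⟩ := Metric.eventually_nhds_iff.1 hΘ.eventually_analyticAt
  obtain ⟨δ, hδ, h2⟩ := Metric.eventually_nhds_iff.1 hflat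
  refine Metric.eventually_nhds_iff.2 ⟨min ε δ, lt_min hε hδ, ?_⟩
  rintro ⟨t, y⟩ hty
  rw [Prod.dist_eq, max_lt_iff] at hty
  have hy : ∀ s ∈ Metric.ball (0 : ℂ) ε, AnalyticAt ℂ (fun s => Θ (s, y)) s := by
    intro s hs
    have h3 : AnalyticAt ℂ Θ (s, y) := by
      refine h1 ?_
      rw [Prod.dist_eq, max_lt_iff]
      exact ⟨hs, hty.2.trans_le (min_le_left _ _)⟩
    exact AnalyticAt.comp (g := Θ) (f := fun s : ℂ => (s, y)) h3
      (analyticAt_id.prod analyticAt_const)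
  have h0 : (0 : ℂ) ∈ Metric.ball (0 : ℂ) ε := Metric.mem_ball_self hε
  have h4 := eventually_zero_of_flat (hy 0 h0) (h2 (hty.2.trans_le (min_le_right _ _)))
  have h5 := AnalyticOnNhd.eqOn_zero_of_preconnected_of_eventuallyEq_zero
    (f := fun s => Θ (s, y)) (fun s hs => hy s hs) (convex_ball (0 : ℂ) ε).isPreconnected h0 h4
  exact h5 (Metric.mem_ball.2 (hty.1.trans_le (min_le_left _ _)))

/-- Version of `polar` with an additional parameter `t`. -/
theorem polar_param {ι : Type*} [Fintype ι] [DecidableEq ι] {wt : ι → ℕ} (hwt : ∀ i, 0 < wt i)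
    {R : ℂ → (ι → ℂ) → Prop}
    (h : ∀ q : ι → ℂ, q ≠ 0 → ∀ᶠ x in 𝓝 ((0 : ℂ), ((0 : ℂ), q)),
      x.2.1 ≠ 0 → R x.1 (sc wt x.2.1 x.2.2)) :
    ∀ᶠ t in 𝓝 (0 : ℂ), ∀ᶠ p in 𝓝 (0 : ι → ℂ), p ≠ 0 → R t p := by
  have hc : IsCompact (Metric.sphere (0 : ι → ℂ) 1) := isCompact_sphere 0 1
  have h1 : ∀ᶠ μ in 𝓝 ((0 : ℂ), (0 : ℂ)), ∀ q ∈ Metric.sphere (0 : ι → ℂ) 1,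
      μ.2 ≠ 0 → R μ.1 (sc wt μ.2 q) := by
    refine hc.eventually_forall_of_forall_eventually
      (P := fun (μ : ℂ × ℂ) q => μ.2 ≠ 0 → R μ.1 (sc wt μ.2 q)) ?_
    intro q hq
    have hT : Tendsto (fun y : (ℂ × ℂ) × (ι → ℂ) => (y.1.1, (y.1.2, y.2)))
        (𝓝 (((0 : ℂ), (0 : ℂ)), q)) (𝓝 ((0 : ℂ), ((0 : ℂ), q))) :=
      Continuous.tendsto' (by fun_prop) _ _ rfl
    refine hT.eventually (h q ?_)
    rintro rfl
    simp at hq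
  rw [nhds_prod_eq] at h1
  exact h1.curry.mono fun t ht => polar_core hwt ht

/-- `Q` has a nontrivial zero, since it has two variables. -/
theorem exists_zero (hwt : ∀ i, 0 < wt i) (hd : 0 < d) (hQ : IsWeightedHomogeneous wt Q d) :
    ∃ z : Fin 2 → ℂ, z ≠ 0 ∧ eval z Q = 0 := by
  by_contra! hc
  have hdvd : ∀ i : Fin 2, ∃ N, Q ∣ (X i : MvPolynomial (Fin 2) ℂ) ^ N := by
    intro i
    have : (X i : MvPolynomial (Fin 2) ℂ) ∈ (Ideal.span {Q}).radical := by
      rw [← vanishingIdeal_zeroLocus_eq_radical (k := ℂ) (K := ℂ) (Ideal.span {Q})]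
      intro x hx
      have : x = 0 := by
        by_contra hx0
        exact hc x hx0 (hx _ (Ideal.mem_span_singleton_self Q))
      simp [this]
    obtain ⟨N, hN⟩ := this
    exact ⟨N, Ideal.mem_span_singleton.1 hN⟩
  obtain ⟨N, hN⟩ := hdvd 0
  obtain ⟨M, hM⟩ := hdvd 1
  have hX : IsRelPrime (X 0 : MvPolynomial (Fin 2) ℂ) (X 1) := by
    rw [(X_prime (i := (0 : Fin 2)) (R := ℂ)).irreducible.isRelPrime_iff_not_dvd]
    rw [X_dvd_X]; simp
  have hu : IsUnit Q := (hX.pow (m := N) (n := M)) hN hM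
  have h0 : eval (0 : Fin 2 → ℂ) Q = 0 := by
    have := eval_sc hQ 0 0
    rwa [sc_zero_left hwt, zero_pow hd.ne', zero_mul] at this
  have := hu.map (eval (0 : Fin 2 → ℂ))
  rw [h0] at this
  exact not_isUnit_zero this

theorem elim_add_smul (z a w b : Fin 2 → ℂ) (t : ℂ) :
    (Sum.elim z w + t • Sum.elim a b : Fin 2 ⊕ Fin 2 → ℂ) = Sum.elim (z + t • a) (w + t • b) := by
  ext k; rcases k with i | i <;> simp

theorem analyticAt_elim {E : Type*} [NormedAddCommGroup E] [NormedSpace ℂ E]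
    {a b : E → Fin 2 → ℂ} {x : E} (ha : AnalyticAt ℂ a x) (hb : AnalyticAt ℂ b x) :
    AnalyticAt ℂ (fun y => (Sum.elim (a y) (b y) : Fin 2 ⊕ Fin 2 → ℂ)) x := by
  rw [analyticAt_pi_iff] at *
  rintro (i | i)
  · exact ha i
  · exact hb i

/-- For small `z` the slice of the rescaled zero set over `z` meets the line `w₀ + ℂ v` in a point
`w₀ + τ v` depending analytically on `z` and on the dilation parameter. -/
theorem transversal_w (hwt : ∀ i, 0 < wt i) (hQ : IsWeightedHomogeneous wt Q d) (hd : 0 < d)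
    {Φ : (Fin 2 ⊕ Fin 2 → ℂ) → ℂ}
    (hΦ : WOrd (wt2 wt) (d + 1) (fun p => Φ p - eval p (dbl Q))) {w0 v : Fin 2 → ℂ}
    (hw0 : eval w0 (Qb Q) = 0) (hv : ∑ i, v i * eval w0 (pderiv i (Qb Q)) ≠ 0) :
    ∃ τ : ℂ × (Fin 2 → ℂ) → ℂ, AnalyticAt ℂ τ (0, 0) ∧ τ (0, 0) = 0 ∧
      (∀ᶠ x in 𝓝 ((0 : ℂ), (0 : Fin 2 → ℂ)),
        Φ (sc (wt2 wt) x.1 (Sum.elim x.2 (w0 + τ x • v))) = 0) ∧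
      ∀ᶠ z in 𝓝 (0 : Fin 2 → ℂ), eval z Q + eval (w0 + τ (0, z) • v) (Qb Q) = 0 := by
  have h0 : eval (0 : Fin 2 → ℂ) Q = 0 := by
    have := eval_sc hQ 0 0
    rwa [sc_zero_left hwt, zero_pow hd.ne', zero_mul] at this
  obtain ⟨ψ, hψ, hψ0, h1, -, h2⟩ := param_zero (wt2_pos hwt) (isWH_dbl hQ) hΦ
    (q := Sum.elim 0 w0) (v := Sum.elim 0 v)
    (by rw [eval_dbl, Sum.elim_comp_inl, Sum.elim_comp_inr, h0, hw0, add_zero])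
    (by
      rw [Fintype.sum_sum_type]
      simp only [Sum.elim_inl, Sum.elim_inr, pderiv_dbl_inr, eval_rename, Sum.elim_comp_inr,
        Pi.zero_apply, zero_mul, Finset.sum_const_zero, zero_add]
      exact hv)
  have hA : AnalyticAt ℂ (fun x : ℂ × (Fin 2 → ℂ) =>
      (x.1, (Sum.elim x.2 w0 : Fin 2 ⊕ Fin 2 → ℂ))) (0, 0) :=
    analyticAt_fst.prod (analyticAt_elim analyticAt_snd analyticAt_const)
  refine ⟨fun x => ψ (x.1, Sum.elim x.2 w0), AnalyticAt.comp (g := ψ) hψ hA, hψ0, ?_, ?_⟩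
  · filter_upwards [hA.continuousAt.tendsto.eventually h1] with x hx
    rw [elim_add_smul, smul_zero, add_zero] at hx
    exact hx
  · have hT : Tendsto (fun z : Fin 2 → ℂ => ((0 : ℂ), z)) (𝓝 0) (𝓝 (0, 0)) :=
      Continuous.tendsto' (by fun_prop) _ _ rfl
    filter_upwards [hT.eventually (hA.continuousAt.tendsto.eventually h2)] with z hz
    have := hz rfl
    rw [elim_add_smul, smul_zero, add_zero, eval_dbl, Sum.elim_comp_inl, Sum.elim_comp_inr] at this
    exact this

/-- The analogue of `transversal_w` for the slice over `w` and the line `z₀ + ℂ v`. -/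
theorem transversal_z (hwt : ∀ i, 0 < wt i) (hQ : IsWeightedHomogeneous wt Q d) (hd : 0 < d)
    {Φ : (Fin 2 ⊕ Fin 2 → ℂ) → ℂ}
    (hΦ : WOrd (wt2 wt) (d + 1) (fun p => Φ p - eval p (dbl Q))) {z0 v : Fin 2 → ℂ}
    (hz0 : eval z0 Q = 0) (hv : ∑ i, v i * eval z0 (pderiv i Q) ≠ 0) :
    ∃ σ : ℂ × (Fin 2 → ℂ) → ℂ, AnalyticAt ℂ σ (0, 0) ∧ σ (0, 0) = 0 ∧
      (∀ᶠ x in 𝓝 ((0 : ℂ), (0 : Fin 2 → ℂ)),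
        Φ (sc (wt2 wt) x.1 (Sum.elim (z0 + σ x • v) x.2)) = 0) := by
  have h0 : eval (0 : Fin 2 → ℂ) (Qb Q) = 0 := by
    have := eval_sc (isWH_Qb hQ) 0 0
    rwa [sc_zero_left hwt, zero_pow hd.ne', zero_mul] at this
  obtain ⟨ψ, hψ, hψ0, h1, -, -⟩ := param_zero (wt2_pos hwt) (isWH_dbl hQ) hΦ
    (q := Sum.elim z0 0) (v := Sum.elim v 0)
    (by rw [eval_dbl, Sum.elim_comp_inl, Sum.elim_comp_inr, h0, hz0, add_zero])
    (by
      rw [Fintype.sum_sum_type]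
      simp only [Sum.elim_inl, Sum.elim_inr, pderiv_dbl_inl, eval_rename, Sum.elim_comp_inl,
        Pi.zero_apply, zero_mul, Finset.sum_const_zero, add_zero]
      exact hv)
  have hA : AnalyticAt ℂ (fun x : ℂ × (Fin 2 → ℂ) =>
      (x.1, (Sum.elim z0 x.2 : Fin 2 ⊕ Fin 2 → ℂ))) (0, 0) :=
    analyticAt_fst.prod (analyticAt_elim analyticAt_const analyticAt_snd)
  refine ⟨fun x => ψ (x.1, Sum.elim z0 x.2), AnalyticAt.comp (g := ψ) hψ hA, hψ0, ?_⟩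
  filter_upwards [hA.continuousAt.tendsto.eventually h1] with x hx
  rw [elim_add_smul, smul_zero, add_zero] at hx
  exact hx

end family

/-! ### Exact separation of variables for the rescaled function -/

section
variable {Q : MvPolynomial (Fin 2) ℂ} {wt : Fin 2 → ℕ} {d : ℕ}

theorem elim_comp (p : Fin 2 ⊕ Fin 2 → ℂ) : Sum.elim (p ∘ Sum.inl) (p ∘ Sum.inr) = p := by
  funext k; cases k <;> rfl

theorem analyticAt_precomp {κ ι E : Type*} [Fintype κ] [Fintype ι] [NormedAddCommGroup E]
    [NormedSpace ℂ E] {P : E → κ → ℂ} {x : E} (h : AnalyticAt ℂ P x) (e : ι → κ) :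
    AnalyticAt ℂ (fun y => P y ∘ e) x := by
  rw [analyticAt_pi_iff]
  intro i
  exact (analyticAt_pi_iff.1 h) (e i)

set_option maxHeartbeats 1000000 in
/-- Near a zero `q0` of the leading form, the point of the transversal reached from `z` and the one
reached from `w` (through the second transversal) coincide on the zero set: by `hr` their difference
is flat in the dilation parameter, and it is analytic. -/
theorem family_zero (hwt : ∀ i, 0 < wt i) (hQ : IsWeightedHomogeneous wt Q d)
    (hiso : Iso Q) {Φ : (Fin 2 ⊕ Fin 2 → ℂ) → ℂ}
    (hΦ : WOrd (wt2 wt) (d + 1) (fun p => Φ p - eval p (dbl Q)))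
    {w0 v z0 v' : Fin 2 → ℂ} {r : ℝ}
    (hr : ∀ (z w ζ : ℂ → Fin 2 → ℂ) (h k : ℂ → ℂ), ContinuousAt z 0 → ContinuousAt w 0 →
      ContinuousAt ζ 0 → ContinuousAt h 0 → ContinuousAt k 0 → ‖h 0‖ < r → ‖k 0‖ < r →
      (∀ᶠ t in 𝓝[≠] (0 : ℂ), Φ (sc (wt2 wt) t (Sum.elim (z t) (w t))) = 0) →
      (∀ᶠ t in 𝓝[≠] (0 : ℂ), Φ (sc (wt2 wt) t (Sum.elim (z t) (w0 + h t • v))) = 0) →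
      (∀ᶠ t in 𝓝[≠] (0 : ℂ), Φ (sc (wt2 wt) t (Sum.elim (ζ t) (w t))) = 0) →
      (∀ᶠ t in 𝓝[≠] (0 : ℂ), Φ (sc (wt2 wt) t (Sum.elim (ζ t) (w0 + k t • v))) = 0) →
      ∀ N : ℕ, (fun t => h t - k t) =O[𝓝[≠] 0] (fun t : ℂ => t ^ (N + 1)))
    {τ σ : ℂ × (Fin 2 → ℂ) → ℂ} (hτ0 : AnalyticAt ℂ τ (0, 0)) (hτ00 : ‖τ (0, 0)‖ < r)
    (hτ1 : AnalyticAt ℂ τ (0, z0)) (hτ11 : ‖τ (0, z0)‖ < r)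
    (hT0 : ∀ᶠ x in 𝓝 ((0 : ℂ), (0 : Fin 2 → ℂ)),
        Φ (sc (wt2 wt) x.1 (Sum.elim x.2 (w0 + τ x • v))) = 0)
    (hT1 : ∀ᶠ x in 𝓝 ((0 : ℂ), z0),
        Φ (sc (wt2 wt) x.1 (Sum.elim x.2 (w0 + τ x • v))) = 0)
    (hσ : AnalyticAt ℂ σ (0, 0)) (hσ0 : σ (0, 0) = 0)
    (hS : ∀ᶠ x in 𝓝 ((0 : ℂ), (0 : Fin 2 → ℂ)),
        Φ (sc (wt2 wt) x.1 (Sum.elim (z0 + σ x • v') x.2)) = 0)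
    {q0 : Fin 2 ⊕ Fin 2 → ℂ} (hq0 : q0 ≠ 0) (hq : eval q0 (dbl Q) = 0) :
    ∀ᶠ x in 𝓝 ((0 : ℂ), ((0 : ℂ), q0)), x.2.1 ≠ 0 → x.1 ≠ 0 →
      Φ (sc (wt2 wt) x.1 (sc (wt2 wt) x.2.1 x.2.2)) = 0 →
      τ (x.1, sc (wt2 wt) x.2.1 x.2.2 ∘ Sum.inl) =
        τ (x.1, z0 + σ (x.1, sc (wt2 wt) x.2.1 x.2.2 ∘ Sum.inr) • v') := by
  obtain ⟨u, hu⟩ := exists_transverse (hiso.dbl hq0)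
  obtain ⟨ψ, hψ, hψ0, hψ1, hψ2, -⟩ := param_zero (wt2_pos hwt) (isWH_dbl hQ) hΦ hq hu
  let E := ℂ × (ℂ × (Fin 2 ⊕ Fin 2 → ℂ))
  let x0 : E := (0, (0, q0))
  let A : E → ℂ × (Fin 2 ⊕ Fin 2 → ℂ) := fun x => (x.1 * x.2.1, x.2.2)
  have hA0 : A x0 = (0, q0) := by simp [A, x0]
  have hAan : AnalyticAt ℂ A x0 :=
    ((analyticAt_fst.mul (analyticAt_fst.comp analyticAt_snd)).prod
      (analyticAt_snd.comp analyticAt_snd))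
  have hAt : Tendsto A (𝓝 x0) (𝓝 (0, q0)) := hA0 ▸ hAan.continuousAt.tendsto
  let P : E → Fin 2 ⊕ Fin 2 → ℂ := fun x => sc (wt2 wt) x.2.1 (x.2.2 + ψ (A x) • u)
  have hψA : AnalyticAt ℂ (fun x => ψ (A x)) x0 :=
    AnalyticAt.comp (g := ψ) (f := A) (by rw [hA0]; exact hψ) hAan
  have hin : AnalyticAt ℂ (fun x : E => (x.2.1, x.2.2 + ψ (A x) • u)) x0 :=
    (analyticAt_fst.comp analyticAt_snd).prod
      ((analyticAt_snd.comp analyticAt_snd).add (hψA.smul analyticAt_const))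
  have hP : AnalyticAt ℂ P x0 :=
    AnalyticAt.comp (g := fun y : ℂ × (Fin 2 ⊕ Fin 2 → ℂ) => sc (wt2 wt) y.1 y.2)
      (f := fun x : E => (x.2.1, x.2.2 + ψ (A x) • u)) (analyticAt_sc _ _) hin
  have hP0 : P x0 = 0 := sc_zero_left (wt2_pos hwt) _
  have hz : AnalyticAt ℂ (fun x => P x ∘ Sum.inl) x0 := analyticAt_precomp hP _
  have hw : AnalyticAt ℂ (fun x => P x ∘ Sum.inr) x0 := analyticAt_precomp hP _
  have hz' : AnalyticAt ℂ (fun x : E => (x.1, P x ∘ Sum.inl)) x0 := analyticAt_fst.prod hz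
  have hw' : AnalyticAt ℂ (fun x : E => (x.1, P x ∘ Sum.inr)) x0 := analyticAt_fst.prod hw
  have hz0' : (x0.1, P x0 ∘ Sum.inl) = ((0 : ℂ), (0 : Fin 2 → ℂ)) := by rw [hP0]; rfl
  have hw0' : (x0.1, P x0 ∘ Sum.inr) = ((0 : ℂ), (0 : Fin 2 → ℂ)) := by rw [hP0]; rfl
  let ζ : E → Fin 2 → ℂ := fun x => z0 + σ (x.1, P x ∘ Sum.inr) • v'
  have hζ : AnalyticAt ℂ ζ x0 := analyticAt_const.add
    ((AnalyticAt.comp (g := σ) (f := fun x : E => (x.1, P x ∘ Sum.inr))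
      (by rw [hw0']; exact hσ) hw').smul analyticAt_const)
  have hζ0 : ζ x0 = z0 := by simp only [ζ]; rw [hw0', hσ0]; simp
  have hζ' : AnalyticAt ℂ (fun x : E => (x.1, ζ x)) x0 := analyticAt_fst.prod hζ
  have hζ0' : (x0.1, ζ x0) = ((0 : ℂ), z0) := by rw [hζ0]
  let hh : E → ℂ := fun x => τ (x.1, P x ∘ Sum.inl)
  let kk : E → ℂ := fun x => τ (x.1, ζ x)
  have hhh : AnalyticAt ℂ hh x0 :=
    AnalyticAt.comp (g := τ) (f := fun x : E => (x.1, P x ∘ Sum.inl)) (by rw [hz0']; exact hτ0) hz'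
  have hkk : AnalyticAt ℂ kk x0 :=
    AnalyticAt.comp (g := τ) (f := fun x : E => (x.1, ζ x)) (by rw [hζ0']; exact hτ1) hζ'
  have n1 : ∀ᶠ x in 𝓝 x0, ‖hh x‖ < r := hhh.continuousAt.norm.eventually_lt continuousAt_const
    (by simp only [hh]; rw [hz0']; exact hτ00)
  have n2 : ∀ᶠ x in 𝓝 x0, ‖kk x‖ < r := hkk.continuousAt.norm.eventually_lt continuousAt_const
    (by simp only [kk]; rw [hζ0']; exact hτ11)
  have R1 : ∀ᶠ x in 𝓝 x0, Φ (sc (wt2 wt) x.1 (Sum.elim (P x ∘ Sum.inl) (P x ∘ Sum.inr))) = 0 := by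
    filter_upwards [hAt.eventually hψ1] with x hx
    rw [elim_comp]
    simp only [P]
    rw [sc_sc]
    exact hx
  have R2 : ∀ᶠ x in 𝓝 x0, Φ (sc (wt2 wt) x.1 (Sum.elim (P x ∘ Sum.inl) (w0 + hh x • v))) = 0 :=
    (hz0' ▸ hz'.continuousAt.tendsto : Tendsto _ _ _).eventually hT0
  have R3 : ∀ᶠ x in 𝓝 x0, Φ (sc (wt2 wt) x.1 (Sum.elim (ζ x) (P x ∘ Sum.inr))) = 0 :=
    (hw0' ▸ hw'.continuousAt.tendsto : Tendsto _ _ _).eventually hS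
  have R4 : ∀ᶠ x in 𝓝 x0, Φ (sc (wt2 wt) x.1 (Sum.elim (ζ x) (w0 + kk x • v))) = 0 :=
    (hζ0' ▸ hζ'.continuousAt.tendsto : Tendsto _ _ _).eventually hT1
  have hΘ : AnalyticAt ℂ (fun x => hh x - kk x) x0 := hhh.sub hkk
  have hzero : ∀ᶠ x in 𝓝 x0, hh x - kk x = 0 := by
    refine zero_of_flat hΘ ?_
    have hr0 : Tendsto (fun y : ℂ × (Fin 2 ⊕ Fin 2 → ℂ) => ((0 : ℂ), y)) (𝓝 ((0 : ℂ), q0)) (𝓝 x0) :=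
      Continuous.tendsto' (by fun_prop) _ _ rfl
    filter_upwards [hr0.eventually hz.eventually_analyticAt, hr0.eventually hw.eventually_analyticAt,
      hr0.eventually hζ.eventually_analyticAt, hr0.eventually hhh.eventually_analyticAt,
      hr0.eventually hkk.eventually_analyticAt, hr0.eventually n1, hr0.eventually n2,
      hr0.eventually R1.eventually_nhds, hr0.eventually R2.eventually_nhds,
      hr0.eventually R3.eventually_nhds, hr0.eventually R4.eventually_nhds]
      with y a1 a2 a3 a4 a5 b1 b2 c1 c2 c3 c4
    have hl : Tendsto (fun t : ℂ => (t, y)) (𝓝 (0 : ℂ)) (𝓝 ((0 : ℂ), y)) :=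
      Continuous.tendsto' (by fun_prop) _ _ rfl
    have hl' := hl.mono_left (nhdsWithin_le_nhds (s := {0}ᶜ))
    exact hr (fun t => P (t, y) ∘ Sum.inl) (fun t => P (t, y) ∘ Sum.inr) (fun t => ζ (t, y))
      (fun t => hh (t, y)) (fun t => kk (t, y))
      (a1.continuousAt.tendsto.comp hl) (a2.continuousAt.tendsto.comp hl)
      (a3.continuousAt.tendsto.comp hl) (a4.continuousAt.tendsto.comp hl)
      (a5.continuousAt.tendsto.comp hl) b1 b2 (hl'.eventually c1) (hl'.eventually c2)
      (hl'.eventually c3) (hl'.eventually c4)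
  have hU : Tendsto (fun x : E => (A x, (0 : ℂ))) (𝓝 x0) (𝓝 (((0 : ℂ), q0), (0 : ℂ))) :=
    hAt.prodMk_nhds tendsto_const_nhds
  filter_upwards [hzero, hU.eventually hψ2] with x h1 h2 hx2 hx1 hx
  have h3 : ψ (A x) = 0 := by
    refine h2 (mul_ne_zero hx1 hx2) ?_
    simp only [A, zero_smul, add_zero]
    rw [sc_sc] at hx
    exact hx
  have h4 : P x = sc (wt2 wt) x.2.1 x.2.2 := by simp only [P]; rw [h3]; simp
  have h5 := sub_eq_zero.1 h1
  simp only [hh, kk, ζ] at h5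
  rw [h4] at h5
  exact h5

set_option maxHeartbeats 1000000 in
/-- For small parameters `t`, the zero set of the rescaled function `p ↦ Φ (sc t p)` lies in the
set where a function of `z` equals a function of `w`; both functions depend analytically on `t`, and
the first one specialises to `Q` at `t = 0`. -/
theorem exists_family (hwt : ∀ i, 0 < wt i) (hd : 0 < d) (hQ : IsWeightedHomogeneous wt Q d)
    (hiso : Iso Q) {Φ : (Fin 2 ⊕ Fin 2 → ℂ) → ℂ}
    (hΦ : WOrd (wt2 wt) (d + 1) (fun p => Φ p - eval p (dbl Q)))
    (hC : ∀ N, Decomp wt d Q Φ N) :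
    ∃ f1 k1 : ℂ × (Fin 2 → ℂ) → ℂ, AnalyticAt ℂ f1 (0, 0) ∧ AnalyticAt ℂ k1 (0, 0) ∧
      (∀ᶠ z in 𝓝 (0 : Fin 2 → ℂ), f1 (0, z) = eval z Q) ∧
      ∀ᶠ t in 𝓝 (0 : ℂ), t ≠ 0 → ∀ᶠ p in 𝓝 (0 : Fin 2 ⊕ Fin 2 → ℂ), p ≠ 0 →
        Φ (sc (wt2 wt) t p) = 0 → f1 (t, p ∘ Sum.inl) = k1 (t, p ∘ Sum.inr) := by
  obtain ⟨z00, hz00, hQz⟩ := exists_zero hwt hd hQ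
  have hw0 : eval (cj z00) (Qb Q) = 0 := by
    unfold Qb; rw [eval_map_conj, cj_cj, hQz, map_zero]
  have hw00 : cj z00 ≠ 0 := fun h => hz00 (by rw [← cj_cj z00, h, cj_zero])
  obtain ⟨v, hv⟩ := exists_transverse (P := Qb Q) (q := cj z00) (by
    by_contra hcon
    push Not at hcon
    exact hw00 ((hiso.conj _).1 hcon))
  obtain ⟨r, hr0, hr⟩ := four_point hwt hQ hC hv
  obtain ⟨τ, hτ, hτ0, hT, hτQ⟩ := transversal_w hwt hQ hd hΦ hw0 hv
  -- a zero `z0 ≠ 0` of `Q` so close to the origin that `τ` is controlled at `(0, z0)`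
  obtain ⟨z0, hz0, hQz0, hτ1, hτ11, hT1⟩ : ∃ z0 : Fin 2 → ℂ, z0 ≠ 0 ∧ eval z0 Q = 0 ∧
      AnalyticAt ℂ τ (0, z0) ∧ ‖τ (0, z0)‖ < r ∧ ∀ᶠ x in 𝓝 ((0 : ℂ), z0),
        Φ (sc (wt2 wt) x.1 (Sum.elim x.2 (cj z00 + τ x • v))) = 0 := by
    have ht : Tendsto (fun ν : ℂ => ((0 : ℂ), sc wt ν z00)) (𝓝[≠] 0) (𝓝 (0, 0)) := by
      refine tendsto_const_nhds.prodMk_nhds (Tendsto.mono_left ?_ nhdsWithin_le_nhds)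
      exact (tendsto_sc hwt z00).comp
        (Continuous.tendsto' (by fun_prop) _ _ rfl : Tendsto (fun ν : ℂ => (ν, z00)) _ _)
    have e1 := ht.eventually hτ.eventually_analyticAt
    have e2 := ht.eventually (hτ.continuousAt.norm.eventually_lt continuousAt_const
      (by rw [hτ0]; simpa using hr0) : ∀ᶠ x in 𝓝 ((0 : ℂ), (0 : Fin 2 → ℂ)), ‖τ x‖ < r)
    have e3 := ht.eventually hT.eventually_nhds
    obtain ⟨ν, ⟨h1, h2, h3⟩, hν⟩ := ((e1.and (e2.and e3)).and self_mem_nhdsWithin).exists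
    refine ⟨sc wt ν z00, ?_, ?_, h1, h2, h3⟩
    · intro h
      apply hz00
      have := congrArg (sc wt ν⁻¹) h
      rwa [sc_sc, inv_mul_cancel₀ hν, sc_one, sc_zero_right] at this
    · rw [eval_sc hQ, hQz, mul_zero]
  obtain ⟨v', hv'⟩ := exists_transverse (P := Q) (q := z0) (by
    by_contra hcon
    push Not at hcon
    exact hz0 ((hiso _).1 hcon))
  obtain ⟨σ, hσ, hσ0, hS⟩ := transversal_z hwt hQ hd hΦ hQz0 hv'
  have hloc : ∀ q0 : Fin 2 ⊕ Fin 2 → ℂ, q0 ≠ 0 → ∀ᶠ x in 𝓝 ((0 : ℂ), ((0 : ℂ), q0)),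
      x.2.1 ≠ 0 → (x.1 ≠ 0 → Φ (sc (wt2 wt) x.1 (sc (wt2 wt) x.2.1 x.2.2)) = 0 →
      τ (x.1, sc (wt2 wt) x.2.1 x.2.2 ∘ Sum.inl) =
        τ (x.1, z0 + σ (x.1, sc (wt2 wt) x.2.1 x.2.2 ∘ Sum.inr) • v')) := by
    intro q0 hq0
    by_cases hq : eval q0 (dbl Q) = 0
    · exact family_zero hwt hQ hiso hΦ hr hτ (by rw [hτ0]; simpa using hr0) hτ1 hτ11 hT hT1 hσ hσ0
        hS hq0 hq
    · obtain ⟨S, hS1, hS2, hS3⟩ := WOrd.sharp_lead (wt2_pos hwt) (isWH_dbl hQ) hΦ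
      have hm : Tendsto (fun x : ℂ × (ℂ × (Fin 2 ⊕ Fin 2 → ℂ)) => (x.1 * x.2.1, x.2.2))
          (𝓝 ((0 : ℂ), ((0 : ℂ), q0))) (𝓝 (0, q0)) :=
        Continuous.tendsto' (by fun_prop) _ _ (by simp)
      have hne := (hS1 q0).continuousAt.eventually_ne (by rw [hS3]; exact hq : S (0, q0) ≠ 0)
      filter_upwards [hm.eventually (hS2 q0), hm.eventually hne] with x h1 h2 hx2 hx1 hx
      rw [sc_sc, h1] at hx
      exact absurd hx (mul_ne_zero (pow_ne_zero _ (mul_ne_zero hx1 hx2)) h2)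
  have hpol := polar_param (wt2_pos hwt) (R := fun t p => t ≠ 0 → Φ (sc (wt2 wt) t p) = 0 →
      τ (t, p ∘ Sum.inl) = τ (t, z0 + σ (t, p ∘ Sum.inr) • v')) hloc
  have hcur : AnalyticAt ℂ (fun x : ℂ × (Fin 2 → ℂ) => (x.1, z0 + σ x • v')) (0, 0) :=
    analyticAt_fst.prod (analyticAt_const.add (hσ.smul analyticAt_const))
  have hκ : AnalyticAt ℂ (fun x : ℂ × (Fin 2 → ℂ) => τ (x.1, z0 + σ x • v')) (0, 0) :=
    AnalyticAt.comp (g := τ) (f := fun x : ℂ × (Fin 2 → ℂ) => (x.1, z0 + σ x • v'))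
      (by simp only [hσ0, zero_smul, add_zero]; exact hτ1) hcur
  have hev : ∀ {κ : ℂ × (Fin 2 → ℂ) → ℂ}, AnalyticAt ℂ κ (0, 0) →
      AnalyticAt ℂ (fun x => - eval (cj z00 + κ x • v) (Qb Q)) (0, 0) := by
    intro κ hκ
    exact (AnalyticAt.comp (g := fun w => eval w (Qb Q)) (f := fun x => cj z00 + κ x • v)
      (analyticAt_eval _ _) (analyticAt_const.add (hκ.smul analyticAt_const))).neg
  refine ⟨fun x => - eval (cj z00 + τ x • v) (Qb Q),
    fun x => - eval (cj z00 + τ (x.1, z0 + σ x • v') • v) (Qb Q), hev hτ, hev hκ, ?_, ?_⟩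
  · filter_upwards [hτQ] with z hz
    linear_combination -hz
  · filter_upwards [hpol] with t ht ht0
    filter_upwards [ht] with p hp hp0 hΦp
    rw [hp hp0 ht0 hΦp]
end

/-! ### Leading terms of the separating functions -/

section
variable {Q : MvPolynomial (Fin 2) ℂ} {wt : Fin 2 → ℕ} {d : ℕ}

theorem exists_eval_one (hd : 0 < d) (hQ : IsWeightedHomogeneous wt Q d) (hQ0 : Q ≠ 0) :
    ∃ z, eval z Q = 1 := by
  obtain ⟨z, hz⟩ : ∃ z, eval z Q ≠ 0 := by
    by_contra hcon
    push Not at hcon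
    exact hQ0 (MvPolynomial.funext fun x => by simp [hcon x])
  obtain ⟨μ, hμ⟩ := IsAlgClosed.exists_pow_nat_eq (eval z Q)⁻¹ hd
  exact ⟨sc wt μ z, by rw [eval_sc hQ, hμ, inv_mul_cancel₀ hz]⟩

theorem eval_Qb (Q : MvPolynomial (Fin 2) ℂ) (z : Fin 2 → ℂ) :
    eval z (Qb Q) = (starRingEnd ℂ) (eval (cj z) Q) := eval_map_conj Q z

/-- Iterated derivatives in the second variable of an analytic function of two variables are
analytic in both variables. -/
theorem iteratedDeriv_slice {U : ℂ × ℂ → ℂ} (hU : AnalyticAt ℂ U (0, 0)) (n : ℕ) :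
    ∃ V : ℂ × ℂ → ℂ, AnalyticAt ℂ V (0, 0) ∧
      ∀ᶠ y in 𝓝 ((0 : ℂ), (0 : ℂ)), iteratedDeriv n (fun ν => U (y.1, ν)) y.2 = V y := by
  induction n with
  | zero => exact ⟨U, hU, by simp⟩
  | succ n ih =>
    obtain ⟨V, hV, hVU⟩ := ih
    refine ⟨fun y => fderiv ℂ V y (0, 1), ?_, ?_⟩
    · exact ((ContinuousLinearMap.apply ℂ ℂ ((0 : ℂ), (1 : ℂ))).analyticAt _).comp hV.fderiv
    · filter_upwards [hVU.eventually_nhds, hV.eventually_analyticAt] with y hy hVy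
      rw [iteratedDeriv_succ]
      have ht : Tendsto (fun ν : ℂ => (y.1, ν)) (𝓝 y.2) (𝓝 y) :=
        Continuous.tendsto' (by fun_prop) _ _ rfl
      have h1 : iteratedDeriv n (fun ν => U (y.1, ν)) =ᶠ[𝓝 y.2] fun ν => V (y.1, ν) :=
        ht.eventually hy
      rw [h1.deriv_eq]
      have h2 : HasFDerivAt V (fderiv ℂ V y) ((fun ν : ℂ => (y.1, ν)) y.2) :=
        hVy.differentiableAt.hasFDerivAt
      have h3 : HasDerivAt (fun ν : ℂ => (y.1, ν)) ((0 : ℂ), (1 : ℂ)) y.2 :=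
        (hasDerivAt_const y.2 y.1).prodMk (hasDerivAt_id y.2)
      exact (h2.comp_hasDerivAt y.2 h3).deriv

/-- For small `t` the weight-`d` part of `f1 (t, ·)` stays nonzero. -/
theorem lead_ne_zero (hwt : ∀ i, 0 < wt i) (hd : 0 < d) (hQ : IsWeightedHomogeneous wt Q d)
    (hQ0 : Q ≠ 0) {f1 : ℂ × (Fin 2 → ℂ) → ℂ} (hf : AnalyticAt ℂ f1 (0, 0))
    (hfQ : ∀ᶠ z in 𝓝 (0 : Fin 2 → ℂ), f1 (0, z) = eval z Q) :
    ∀ᶠ t in 𝓝 (0 : ℂ), ∀ a, ¬ WOrd wt (d + 1) (fun z => f1 (t, z) - a) := by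
  obtain ⟨z1, hz1⟩ := exists_eval_one hd hQ hQ0
  have hsc : AnalyticAt ℂ (fun y : ℂ × ℂ => (y.1, sc wt y.2 z1)) (0, 0) :=
    analyticAt_fst.prod (AnalyticAt.comp (g := fun x : ℂ × (Fin 2 → ℂ) => sc wt x.1 x.2)
      (f := fun y : ℂ × ℂ => (y.2, z1)) (analyticAt_sc _ _) (analyticAt_snd.prod analyticAt_const))
  have hU : AnalyticAt ℂ (fun y : ℂ × ℂ => f1 (y.1, sc wt y.2 z1)) (0, 0) :=
    AnalyticAt.comp (g := f1) (f := fun y : ℂ × ℂ => (y.1, sc wt y.2 z1))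
      (by simp only [sc_zero_left hwt]; exact hf) hsc
  obtain ⟨V, hV, hVU⟩ := iteratedDeriv_slice hU d
  have ht : Tendsto (fun ν : ℂ => sc wt ν z1) (𝓝 0) (𝓝 0) :=
    (tendsto_sc hwt z1).comp
      (Continuous.tendsto' (by fun_prop) _ _ rfl : Tendsto (fun ν : ℂ => (ν, z1)) _ _)
  have hV0 : V (0, 0) ≠ 0 := by
    rw [← hVU.self_of_nhds]
    have h1 : (fun ν => f1 (0, sc wt ν z1)) =ᶠ[𝓝 0] fun ν => ν ^ d := by
      filter_upwards [ht.eventually hfQ] with ν hν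
      rw [hν, eval_sc hQ, hz1, mul_one]
    rw [Filter.EventuallyEq.iteratedDeriv_eq d h1, iteratedDeriv_pow]
    simp [Nat.descFactorial_self, Nat.factorial_ne_zero]
  have hl : Tendsto (fun t : ℂ => (t, (0 : ℂ))) (𝓝 0) (𝓝 (0, 0)) :=
    Continuous.tendsto' (by fun_prop) _ _ rfl
  filter_upwards [hl.eventually hVU, hl.eventually (hV.continuousAt.eventually_ne hV0)]
    with t h1 h2 a ha
  apply h2
  rw [← h1]
  obtain ⟨S, hS, hS'⟩ := ha.sharp hwt
  have hz : Tendsto (fun ν : ℂ => (ν, z1)) (𝓝 0) (𝓝 (0, z1)) :=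
    Continuous.tendsto' (by fun_prop) _ _ rfl
  have hS1 : AnalyticAt ℂ (fun ν => S (ν, z1)) 0 :=
    AnalyticAt.comp (g := S) (f := fun ν : ℂ => (ν, z1)) (hS z1)
      (analyticAt_id.prod analyticAt_const)
  have h3 : (fun ν => f1 (t, sc wt ν z1)) =ᶠ[𝓝 0] fun ν => a + ν ^ (d + 1) * S (ν, z1) := by
    filter_upwards [hz.eventually (hS' z1)] with ν hν
    linear_combination hν
  have h4 : AnalyticAt ℂ (fun ν : ℂ => ν ^ (d + 1) * S (ν, z1)) 0 := (analyticAt_id.pow _).mul hS1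
  rw [Filter.EventuallyEq.iteratedDeriv_eq d h3, iteratedDeriv_const_add hd]
  refine (natCast_le_analyticOrderAt_iff_iteratedDeriv_eq_zero h4).1 ?_ d (Nat.lt_succ_self d)
  exact (natCast_le_analyticOrderAt h4).2 ⟨_, hS1, by simp⟩

/-- A relation `h(z) = k(w)` on the zero set of `Φ` passes to the terms of weight `l` and to the
zero set of the leading form. -/
theorem lead_rel (hwt : ∀ i, 0 < wt i) (hQ : IsWeightedHomogeneous wt Q d) (hiso : Iso Q)
    {Φ : (Fin 2 ⊕ Fin 2 → ℂ) → ℂ}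
    (hΦ : WOrd (wt2 wt) (d + 1) (fun p => Φ p - eval p (dbl Q)))
    {h k : (Fin 2 → ℂ) → ℂ} {l : ℕ} (hh : WOrd wt l h) (hk : WOrd wt l k)
    (hrel : ∀ᶠ p in 𝓝 (0 : Fin 2 ⊕ Fin 2 → ℂ), p ≠ 0 → Φ p = 0 →
      h (p ∘ Sum.inl) = k (p ∘ Sum.inr)) :
    ∃ A B : MvPolynomial (Fin 2) ℂ, IsWeightedHomogeneous wt A l ∧ IsWeightedHomogeneous wt B l ∧
      WOrd wt (l + 1) (fun z => h z - eval z A) ∧ WOrd wt (l + 1) (fun z => k z - eval z B) ∧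
      ∀ z w, (Sum.elim z w : Fin 2 ⊕ Fin 2 → ℂ) ≠ 0 → eval z Q + eval w (Qb Q) = 0 →
        eval z A = eval w B := by
  obtain ⟨A, hA, hA'⟩ := hh.lead hwt
  obtain ⟨B, hB, hB'⟩ := hk.lead hwt
  refine ⟨A, B, hA, hB, hA', hB', ?_⟩
  intro z w hzw hQ0
  have h1 : IsWeightedHomogeneous (wt2 wt) (rename Sum.inl A) l := isWH_rename _ (fun _ => rfl) hA
  have h2 : IsWeightedHomogeneous (wt2 wt) (rename Sum.inr B) l := isWH_rename _ (fun _ => rfl) hB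
  have h3 : IsWeightedHomogeneous (wt2 wt)
      (rename Sum.inl A + C (-1) * rename Sum.inr B : MvPolynomial (Fin 2 ⊕ Fin 2) ℂ) l :=
    h1.add (h2.C_mul _)
  have h4 : WOrd (wt2 wt) (l + 1) (fun p : Fin 2 ⊕ Fin 2 → ℂ =>
      (h (p ∘ Sum.inl) - k (p ∘ Sum.inr)) - eval p (rename Sum.inl A + C (-1) * rename Sum.inr B)) := by
    refine ((hA'.comp_proj (wt' := wt2 wt) Sum.inl (fun _ => rfl)).sub
      (hB'.comp_proj (wt' := wt2 wt) Sum.inr (fun _ => rfl))).congr' ?_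
    intro p
    simp only [map_add, map_mul, eval_C, eval_rename]
    ring
  have h5 := lead_vanish (wt2_pos hwt) (isWH_dbl hQ) hΦ h3 h4
    (by filter_upwards [hrel] with p hp hp0 hΦp; rw [hp hp0 hΦp, sub_self])
    (q := Sum.elim z w) (by rw [eval_dbl]; exact hQ0) hzw (hiso.dbl hzw)
  simp only [map_add, map_mul, eval_C, eval_rename] at h5
  have e1 : (Sum.elim z w : Fin 2 ⊕ Fin 2 → ℂ) ∘ Sum.inl = z := rfl
  have e2 : (Sum.elim z w : Fin 2 ⊕ Fin 2 → ℂ) ∘ Sum.inr = w := rfl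
  rw [e1, e2] at h5
  linear_combination h5

theorem eval_zero_of_pos (hwt : ∀ i, 0 < wt i) {l : ℕ} (hl : 0 < l) {A : MvPolynomial (Fin 2) ℂ}
    (hA : IsWeightedHomogeneous wt A l) : eval 0 A = 0 := by
  have := eval_sc hA 0 0
  rwa [sc_zero_left hwt, zero_pow hl.ne', zero_mul] at this

theorem elim_ne_zero {z w : Fin 2 → ℂ} (h : z ≠ 0 ∨ w ≠ 0) :
    (Sum.elim z w : Fin 2 ⊕ Fin 2 → ℂ) ≠ 0 := by
  intro h0
  rcases h with h | h
  · exact h (funext fun i => congrFun h0 (Sum.inl i))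
  · exact h (funext fun i => congrFun h0 (Sum.inr i))

/-- A relation `h(z) = k(w)` on the zero set of `Φ` forces the terms of weight at most `d` of `h` and
`k` to be `a + c Q` and `a - c conj Q`. -/
theorem leads (hwt : ∀ i, 0 < wt i) (hd : 0 < d) (hQ : IsWeightedHomogeneous wt Q d)
    (hiso : Iso Q) {Φ : (Fin 2 ⊕ Fin 2 → ℂ) → ℂ}
    (hΦ : WOrd (wt2 wt) (d + 1) (fun p => Φ p - eval p (dbl Q)))
    {h k : (Fin 2 → ℂ) → ℂ} (hh : AnalyticAt ℂ h 0) (hk : AnalyticAt ℂ k 0)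
    (hrel : ∀ᶠ p in 𝓝 (0 : Fin 2 ⊕ Fin 2 → ℂ), p ≠ 0 → Φ p = 0 →
      h (p ∘ Sum.inl) = k (p ∘ Sum.inr)) :
    ∃ a c : ℂ, WOrd wt (d + 1) (fun z => h z - a - c * eval z Q) ∧
      WOrd wt (d + 1) (fun w => k w - a + c * eval w (Qb Q)) := by
  obtain ⟨z1, hz1⟩ := exists_eval_one hd hQ hiso.ne_zero
  have hQb := isWH_Qb hQ
  have hw1 : eval (cj z1) (Qb Q) = 1 := by rw [eval_Qb, cj_cj, hz1, map_one]
  obtain ⟨z00, hz00, hQz⟩ := exists_zero hwt hd hQ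
  -- common constant term
  obtain ⟨a, ha1, ha2⟩ : ∃ a, WOrd wt 1 (fun z => h z - a) ∧ WOrd wt 1 (fun z => k z - a) := by
    obtain ⟨A, B, hA, hB, hA', hB', hAB⟩ := lead_rel hwt hQ hiso hΦ (WOrd.of_analytic hh)
      (WOrd.of_analytic hk) hrel
    have e1 : ∀ z, eval z A = eval 0 A := fun z => by
      have := eval_sc hA 0 z
      rw [sc_zero_left hwt] at this
      rw [this]; simp
    have e2 : ∀ z, eval z B = eval 0 B := fun z => by
      have := eval_sc hB 0 z
      rw [sc_zero_left hwt] at this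
      rw [this]; simp
    have e3 := hAB z00 0 (elim_ne_zero (Or.inl hz00))
      (by rw [hQz, eval_zero_of_pos hwt hd hQb, add_zero])
    refine ⟨eval 0 A, hA'.congr' fun z => by rw [e1], hB'.congr' fun z => by
      rw [e2, ← e3, e1]⟩
  have hrel' : ∀ᶠ p in 𝓝 (0 : Fin 2 ⊕ Fin 2 → ℂ), p ≠ 0 → Φ p = 0 →
      h (p ∘ Sum.inl) - a = k (p ∘ Sum.inr) - a := by
    filter_upwards [hrel] with p hp hp0 hΦp
    rw [hp hp0 hΦp]
  -- the leading parts in weight `l ≥ 1`, compared along the orbits of `z1` and its conjugate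
  have step : ∀ l, 0 < l → WOrd wt l (fun z => h z - a) → WOrd wt l (fun z => k z - a) →
      ∃ A B : MvPolynomial (Fin 2) ℂ,
      WOrd wt (l + 1) (fun z => h z - a - eval z A) ∧ WOrd wt (l + 1) (fun z => k z - a - eval z B) ∧
      (∀ z μ, μ ^ d = - eval z Q → eval z A = μ ^ l * eval (cj z1) B) ∧
      (∀ w μ, μ ^ d = - eval w (Qb Q) → eval w B = μ ^ l * eval z1 A) := by
    intro l hl h1 h2
    obtain ⟨A, B, hA, hB, hA', hB', hAB⟩ := lead_rel hwt hQ hiso hΦ h1 h2 hrel'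
    have hAB' : ∀ z w, eval z Q + eval w (Qb Q) = 0 → eval z A = eval w B := by
      intro z w hzw
      by_cases h0 : (Sum.elim z w : Fin 2 ⊕ Fin 2 → ℂ) = 0
      · have hz : z = 0 := funext fun i => congrFun h0 (Sum.inl i)
        have hw : w = 0 := funext fun i => congrFun h0 (Sum.inr i)
        rw [hz, hw, eval_zero_of_pos hwt hl hA, eval_zero_of_pos hwt hl hB]
      · exact hAB z w h0 hzw
    refine ⟨A, B, hA', hB', ?_, ?_⟩
    · intro z μ hμ
      rw [← eval_sc hB]
      exact hAB' _ _ (by rw [eval_sc hQb, hμ, hw1]; ring)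
    · intro w μ hμ
      rw [← eval_sc hA]
      exact (hAB' _ _ (by rw [eval_sc hQ, hμ, hz1]; ring)).symm
  have ind : ∀ l, 0 < l → l ≤ d → WOrd wt l (fun z => h z - a) ∧ WOrd wt l (fun z => k z - a) := by
    intro l hl
    induction l, hl using Nat.le_induction with
    | base => exact fun _ => ⟨ha1, ha2⟩
    | succ l hl ih =>
      intro hld
      obtain ⟨i1, i2⟩ := ih (by omega)
      obtain ⟨A, B, hA, hB, hAB, hBA⟩ := step l hl i1 i2
      -- for `l < d`, two `d`-th roots with different `l`-th powers force the leading part to vanish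
      have hω := Complex.isPrimitiveRoot_exp d hd.ne'
      set ω := Complex.exp (2 * Real.pi * Complex.I / d)
      have hωl : ω ^ l ≠ 1 := fun h => by
        have := Nat.le_of_dvd hl ((hω.pow_eq_one_iff_dvd l).1 h)
        omega
      obtain ⟨μ, hμ⟩ := IsAlgClosed.exists_pow_nat_eq (-1 : ℂ) hd
      have hμ0 : μ ≠ 0 := by
        rintro rfl
        rw [zero_pow hd.ne'] at hμ
        simp at hμ
      have s1 := hAB z1 μ (by rw [hμ, hz1])
      have s2 := hAB z1 (ω * μ) (by rw [mul_pow, hω.pow_eq_one, hμ, hz1, one_mul])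
      have hB1 : eval (cj z1) B = 0 := by
        have : (ω ^ l - 1) * (μ ^ l * eval (cj z1) B) = 0 := by
          rw [mul_pow] at s2
          linear_combination s1 - s2
        rcases mul_eq_zero.1 this with h | h
        · exact absurd (sub_eq_zero.1 h) hωl
        · exact (mul_eq_zero.1 h).resolve_left (pow_ne_zero _ hμ0)
      have hA0 : ∀ z, eval z A = 0 := fun z => by
        obtain ⟨μ, hμ⟩ := IsAlgClosed.exists_pow_nat_eq (- eval z Q) hd
        rw [hAB z μ hμ, hB1, mul_zero]
      have hB0 : ∀ z, eval z B = 0 := fun z => by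
        obtain ⟨μ, hμ⟩ := IsAlgClosed.exists_pow_nat_eq (- eval z (Qb Q)) hd
        rw [hBA z μ hμ, hA0, mul_zero]
      exact ⟨hA.congr' fun z => by rw [hA0, sub_zero], hB.congr' fun z => by rw [hB0, sub_zero]⟩
  obtain ⟨i1, i2⟩ := ind d hd le_rfl
  obtain ⟨A, B, hA, hB, hAB, hBA⟩ := step d hd i1 i2
  have hA0 : ∀ z, eval z A = - eval z Q * eval (cj z1) B := fun z => by
    obtain ⟨μ, hμ⟩ := IsAlgClosed.exists_pow_nat_eq (- eval z Q) hd
    rw [hAB z μ hμ, hμ]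
  have hB0 : ∀ z, eval z B = eval z (Qb Q) * eval (cj z1) B := fun z => by
    obtain ⟨μ, hμ⟩ := IsAlgClosed.exists_pow_nat_eq (- eval z (Qb Q)) hd
    rw [hBA z μ hμ, hμ, hA0, hz1]; ring
  exact ⟨a, - eval (cj z1) B, hA.congr' fun z => by rw [hA0]; ring,
    hB.congr' fun z => by rw [hB0 z]; ring⟩
end

/-! ### Passage to the real locus -/

section
variable {Q : MvPolynomial (Fin 2) ℂ} {wt : Fin 2 → ℕ} {d : ℕ}

theorem sw_sc_real (t : ℝ) (p : Fin 2 ⊕ Fin 2 → ℂ) :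
    sw (sc (wt2 wt) (t : ℂ) p) = sc (wt2 wt) (t : ℂ) (sw p) := by
  ext k
  rcases k with i | i <;> simp [sw, cj, sc, wt2]

theorem tendsto_sw : Tendsto (sw : (Fin 2 ⊕ Fin 2 → ℂ) → _) (𝓝 0) (𝓝 0) := by
  have h : Continuous (sw : (Fin 2 ⊕ Fin 2 → ℂ) → _) := by
    unfold sw
    exact continuous_cj.comp (by fun_prop)
  refine h.tendsto' _ _ ?_
  ext k
  simp [sw, cj]

/-- If the zero set of `Φ` (which is symmetric under conjugation) lies in
`{A(z) + B(w) = 0}` with `A ~ Q`, `B ~ Q̄`, then its trace on the real points is `{Re f = 0}`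
with `f ~ 2 Q`. -/
theorem symmetrise (hwt : ∀ i, 0 < wt i) (hd : 0 < d) (hQ : IsWeightedHomogeneous wt Q d)
    (hiso : Iso Q) {Φ : (Fin 2 ⊕ Fin 2 → ℂ) → ℂ}
    (hΦ : WOrd (wt2 wt) (d + 1) (fun p => Φ p - eval p (dbl Q)))
    (hsw : ∀ p, Φ (sw p) = (starRingEnd ℂ) (Φ p))
    {A B : (Fin 2 → ℂ) → ℂ} (hA : WOrd wt (d + 1) (fun z => A z - eval z Q))
    (hB : WOrd wt (d + 1) (fun z => B z - eval z (Qb Q)))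
    (hrel : ∀ᶠ p in 𝓝 (0 : Fin 2 ⊕ Fin 2 → ℂ), p ≠ 0 → Φ p = 0 →
      A (p ∘ Sum.inl) + B (p ∘ Sum.inr) = 0) :
    ∃ f : (Fin 2 → ℂ) → ℂ, WOrd wt (d + 1) (fun z => f z - 2 * eval z Q) ∧
      ∀ᶠ z in 𝓝 (0 : Fin 2 → ℂ), Φ (rp z) = 0 ↔ (f z).re = 0 := by
  have hQb := isWH_Qb hQ
  have hA0 : A 0 = 0 := by
    have := hA.apply_zero hwt
    rwa [eval_zero_of_pos hwt hd hQ, sub_zero] at this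
  have hB0 : B 0 = 0 := by
    have := hB.apply_zero hwt
    rwa [eval_zero_of_pos hwt hd hQb, sub_zero] at this
  have hΦ0 : Φ 0 = 0 := by
    have := hΦ.apply_zero (wt2_pos hwt)
    have e1 : (0 : Fin 2 ⊕ Fin 2 → ℂ) ∘ Sum.inl = 0 := rfl
    have e2 : (0 : Fin 2 ⊕ Fin 2 → ℂ) ∘ Sum.inr = 0 := rfl
    rwa [eval_dbl, e1, e2, eval_zero_of_pos hwt hd hQ, eval_zero_of_pos hwt hd hQb, add_zero,
      sub_zero] at this
  have hrel' : ∀ᶠ p in 𝓝 (0 : Fin 2 ⊕ Fin 2 → ℂ), Φ p = 0 →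
      A (p ∘ Sum.inl) + B (p ∘ Sum.inr) = 0 := by
    filter_upwards [hrel] with p hp h
    by_cases h0 : p = 0
    · subst h0
      have e1 : (0 : Fin 2 ⊕ Fin 2 → ℂ) ∘ Sum.inl = 0 := rfl
      have e2 : (0 : Fin 2 ⊕ Fin 2 → ℂ) ∘ Sum.inr = 0 := rfl
      rw [e1, e2, hA0, hB0, add_zero]
    · exact hp h0 h
  let f : (Fin 2 → ℂ) → ℂ := fun z => A z + (starRingEnd ℂ) (B (cj z))
  have hf : WOrd wt (d + 1) (fun z => f z - 2 * eval z Q) := by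
    refine (WOrd.add _ _ hA hB.conj).congr' fun z => ?_
    simp only [f, map_sub]
    rw [eval_Qb, cj_cj, Complex.conj_conj]
    ring
  let Ψ : (Fin 2 ⊕ Fin 2 → ℂ) → ℂ := fun p =>
    f (p ∘ Sum.inl) + (starRingEnd ℂ) (f (cj (p ∘ Sum.inr)))
  have hΨ : WOrd (wt2 wt) (d + 1) (fun p => Ψ p - eval p (C 2 * dbl Q)) := by
    refine (WOrd.add _ _ (hf.comp_proj (wt' := wt2 wt) Sum.inl (fun _ => rfl))
      (hf.conj.comp_proj (wt' := wt2 wt) Sum.inr (fun _ => rfl))).congr' fun p => ?_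
    simp only [Ψ, map_sub, map_mul, eval_dbl, eval_Qb, map_ofNat]
    ring
  have hFΨ : ∀ᶠ p in 𝓝 (0 : Fin 2 ⊕ Fin 2 → ℂ), Φ p = 0 → Ψ p = 0 := by
    filter_upwards [hrel', tendsto_sw.eventually hrel'] with p h1 h2 h
    have h3 := h1 h
    have h4 := congrArg (starRingEnd ℂ) (h2 (by rw [hsw, h, map_zero]))
    rw [sw_inl, sw_inr, map_add, map_zero] at h4
    simp only [Ψ, f, map_add, cj_cj, Complex.conj_conj]
    linear_combination h3 + h4
  have hz := zero_sets_eq (wt2_pos hwt) (isWH_dbl hQ) hΦ ((isWH_dbl hQ).C_mul 2) hΨ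
    (two_ne_zero) rfl (fun q hq _ => hiso.dbl hq) hFΨ
  refine ⟨f, hf, ?_⟩
  have hre : ∀ z, Ψ (rp z) = ((2 * (f z).re : ℝ) : ℂ) := by
    intro z
    have e1 : rp z ∘ Sum.inl = z := rfl
    have e2 : rp z ∘ Sum.inr = cj z := rfl
    simp only [Ψ]
    rw [e1, e2, cj_cj, Complex.add_conj]
  filter_upwards [tendsto_rp.eventually hz] with z hz
  have : Φ (rp z) = 0 ↔ Ψ (rp z) = 0 := by
    by_cases h0 : rp z = 0
    · rw [h0]
      have : Ψ 0 = 0 := by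
        have e1 : (0 : Fin 2 ⊕ Fin 2 → ℂ) ∘ Sum.inl = 0 := rfl
        have e2 : (0 : Fin 2 ⊕ Fin 2 → ℂ) ∘ Sum.inr = 0 := rfl
        simp only [Ψ, f]
        rw [e1, e2]
        simp [hA0, hB0]
      simp [this, hΦ0]
    · exact hz h0
  rw [this, hre]
  simp

/-- A Levi-flat germ `{F = 0}` with `F = Re Q + higher order` is the zero set of the real part of a
holomorphic germ `f` with leading part `Q`. -/
theorem exists_holo (hwt : ∀ i, 0 < wt i) (hd : 0 < d) (hQ : IsWeightedHomogeneous wt Q d)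
    (hiso : Iso Q) {F : (Fin 2 → ℂ) → ℝ} {Φ : (Fin 2 ⊕ Fin 2 → ℂ) → ℂ}
    (hΦ : WOrd (wt2 wt) (d + 1) (fun p => Φ p - eval p (dbl Q)))
    (hFΦ : ∀ᶠ z in 𝓝 0, ((2 * F z : ℝ) : ℂ) = Φ (rp z))
    (hsw : ∀ p, Φ (sw p) = (starRingEnd ℂ) (Φ p)) (hC : ∀ N, Decomp wt d Q Φ N) :
    ∃ f : (Fin 2 → ℂ) → ℂ, WOrd wt (d + 1) (fun z => f z - eval z Q) ∧
      ∀ᶠ z in 𝓝 (0 : Fin 2 → ℂ), F z = 0 ↔ (f z).re = 0 := by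
  obtain ⟨f1, k1, hf1, hk1, hf1Q, hrel⟩ := exists_family hwt hd hQ hiso hΦ hC
  have hl : Tendsto (fun t : ℝ => (t : ℂ)) (𝓝[>] 0) (𝓝 0) :=
    (Continuous.tendsto' (by fun_prop) _ _ (by simp)).mono_left nhdsWithin_le_nhds
  have hl2 : Tendsto (fun t : ℂ => (t, (0 : Fin 2 → ℂ))) (𝓝 0) (𝓝 (0, 0)) :=
    Continuous.tendsto' (by fun_prop) _ _ rfl
  obtain ⟨t, ⟨h1, h2, h3, h4⟩, ht⟩ := ((((hl2.comp hl).eventually hf1.eventually_analyticAt).and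
    (((hl2.comp hl).eventually hk1.eventually_analyticAt).and ((hl.eventually hrel).and
      (hl.eventually (lead_ne_zero hwt hd hQ hiso.ne_zero hf1 hf1Q))))).and
        self_mem_nhdsWithin).exists
  have ht : (0 : ℝ) < t := ht
  have ht0 : (t : ℂ) ≠ 0 := by exact_mod_cast ht.ne'
  have htd : (t : ℂ) ^ d ≠ 0 := pow_ne_zero _ ht0
  specialize h3 ht0
  let Φ' : (Fin 2 ⊕ Fin 2 → ℂ) → ℂ := fun p => ((t : ℂ) ^ d)⁻¹ * Φ (sc (wt2 wt) t p)
  have hΦ' : WOrd (wt2 wt) (d + 1) (fun p => Φ' p - eval p (dbl Q)) := by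
    refine ((hΦ.comp_sc (t : ℂ)).const_mul ((t : ℂ) ^ d)⁻¹).congr' fun p => ?_
    rw [eval_sc (isWH_dbl hQ)]
    simp only [Φ']
    field_simp
  have hz : ∀ p, Φ' p = 0 ↔ Φ (sc (wt2 wt) t p) = 0 := fun p => by
    simp [Φ', ht0]
  have hh : AnalyticAt ℂ (fun z => f1 (t, z)) 0 :=
    AnalyticAt.comp (g := f1) (f := fun z : Fin 2 → ℂ => ((t : ℂ), z)) h1
      (analyticAt_const.prod analyticAt_id)
  have hk : AnalyticAt ℂ (fun z => k1 (t, z)) 0 :=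
    AnalyticAt.comp (g := k1) (f := fun z : Fin 2 → ℂ => ((t : ℂ), z)) h2
      (analyticAt_const.prod analyticAt_id)
  have h3' : ∀ᶠ p in 𝓝 (0 : Fin 2 ⊕ Fin 2 → ℂ), p ≠ 0 → Φ' p = 0 →
      f1 (t, p ∘ Sum.inl) = k1 (t, p ∘ Sum.inr) := by
    filter_upwards [h3] with p hp hp0 hp'
    exact hp hp0 ((hz p).1 hp')
  obtain ⟨a, c, ha, hb⟩ := leads hwt hd hQ hiso hΦ' hh hk h3'
  have hc : c ≠ 0 := by
    rintro rfl
    exact h4 a (ha.congr' fun z => by ring)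
  obtain ⟨f, hf, hff⟩ := symmetrise hwt hd hQ hiso hΦ'
    (fun p => by
      simp only [Φ', map_mul, map_inv₀, map_pow, Complex.conj_ofReal]
      rw [← sw_sc_real, hsw])
    (A := fun z => c⁻¹ * (f1 (t, z) - a)) (B := fun z => - c⁻¹ * (k1 (t, z) - a))
    ((ha.const_mul c⁻¹).congr' fun z => by field_simp)
    ((hb.const_mul (-c⁻¹)).congr' fun z => by field_simp; ring)
    (by
      filter_upwards [h3'] with p hp hp0 hp'
      rw [hp hp0 hp']; ring)
  refine ⟨fun z => (t : ℂ) ^ d / 2 * f (sc wt (t : ℂ)⁻¹ z), ?_, ?_⟩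
  · refine ((hf.comp_sc (t : ℂ)⁻¹).const_mul ((t : ℂ) ^ d / 2)).congr' fun z => ?_
    rw [eval_sc hQ, inv_pow]
    have e := mul_inv_cancel₀ htd
    linear_combination (-eval z Q) * e
  · have hs : Tendsto (fun z : Fin 2 → ℂ => sc wt (t : ℂ)⁻¹ z) (𝓝 0) (𝓝 0) :=
      (analyticAt_sc_right (t : ℂ)⁻¹ (0 : Fin 2 → ℂ)).continuousAt.tendsto.trans_eq
        (by rw [sc_zero_right])
    filter_upwards [hs.eventually hff, hFΦ] with z h5 h6
    have e1 : sc (wt2 wt) t (rp (sc wt (t : ℂ)⁻¹ z)) = rp z := by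
      rw [sc_rp, sc_sc, mul_inv_cancel₀ ht0, sc_one]
    rw [hz, e1, ← h6] at h5
    have e2 : F z = 0 ↔ ((2 * F z : ℝ) : ℂ) = 0 := by simp
    rw [e2, h5]
    have e3 : ((t : ℂ) ^ d / 2 * f (sc wt (t : ℂ)⁻¹ z)).re = t ^ d / 2 * (f (sc wt (t : ℂ)⁻¹ z)).re := by
      have : ((t : ℂ) ^ d / 2) = ((t ^ d / 2 : ℝ) : ℂ) := by push_cast; rfl
      rw [this, Complex.re_ofReal_mul]
    rw [e3]
    simp [ht.ne']
end

/-! ### Monomial bases of the local algebra -/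

section
variable {Q : MvPolynomial (Fin 2) ℂ} {wt : Fin 2 → ℕ} {d : ℕ}

theorem Iso.wt_lt (hwt : ∀ i, 0 < wt i) (hQ : IsWeightedHomogeneous wt Q d) (hiso : Iso Q)
    (i : Fin 2) : wt i < d := by
  by_contra hlt
  push Not at hlt
  have h0 : ∀ j, eval (0 : Fin 2 → ℂ) (pderiv j Q) = 0 := (hiso 0).2 rfl
  have hz : pderiv i Q = 0 := by
    apply MvPolynomial.funext
    intro p
    have hR : ∀ (c : ℂ) (p : Fin 2 → ℂ), c ^ 0 * eval (sc wt c p) Q = c ^ d * eval p Q := by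
      intro c p; rw [pow_zero, one_mul, eval_sc hQ]
    have h1 : (fun c : ℂ => c ^ (wt i - d) * eval (sc wt c p) (pderiv i Q)) =
        fun _ => eval p (pderiv i Q) := by
      refine Continuous.ext_on (dense_compl_singleton (0 : ℂ)) ?_ continuous_const ?_
      · have h2 : Continuous (fun c : ℂ => sc wt c p) :=
          continuous_sc.comp (Continuous.prodMk continuous_id continuous_const)
        exact (continuous_pow _).mul ((MvPolynomial.continuous_eval _).comp h2)
      · intro c hc
        have hc' : c ≠ 0 := hc
        have h2 := eval_sc_pderiv hR i c p
        apply mul_left_cancel₀ (pow_ne_zero d hc')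
        rw [← mul_assoc, ← pow_add, ← h2]
        congr 2
        omega
    have h3 := congrFun h1 0
    simp only [sc_zero_left hwt, h0, mul_zero] at h3
    rw [← h3, map_zero]
  have hrp := hiso.isRelPrime
  have hu : ∃ j, IsUnit (pderiv j Q) := by
    fin_cases i
    · exact ⟨1, hrp (by rw [show pderiv 0 Q = 0 from hz]; exact dvd_zero _) dvd_rfl⟩
    · exact ⟨0, hrp dvd_rfl (by rw [show pderiv 1 Q = 0 from hz]; exact dvd_zero _)⟩
  obtain ⟨j, hj⟩ := hu
  have := hj.map (eval (0 : Fin 2 → ℂ))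
  rw [h0 j] at this
  exact not_isUnit_zero this

/-- The ideal `⟨∂Q/∂z₁, ∂Q/∂z₂⟩` defining the local algebra. -/
noncomputable abbrev jac (Q : MvPolynomial (Fin 2) ℂ) : Ideal (MvPolynomial (Fin 2) ℂ) :=
  Ideal.span {pderiv 0 Q, pderiv 1 Q}

theorem pderiv_mem_jac (i : Fin 2) : pderiv i Q ∈ jac Q := by
  apply Ideal.subset_span
  fin_cases i <;> simp

/-- Any element of the Jacobian ideal has its weight-`k` component in the Jacobian ideal, with
weighted homogeneous coefficients. -/
theorem jac_component (hwt : ∀ i, 0 < wt i) (hQ : IsWeightedHomogeneous wt Q d) (hiso : Iso Q)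
    {k : ℕ} (hk : d ≤ k) {P : MvPolynomial (Fin 2) ℂ} (hP : P ∈ jac Q) :
    ∃ a : Fin 2 → MvPolynomial (Fin 2) ℂ,
      (∀ i, IsWeightedHomogeneous wt (a i) (k + wt i - d)) ∧
      weightedHomogeneousComponent wt k P = ∑ i, a i * pderiv i Q := by
  obtain ⟨a, b, hab⟩ := Ideal.mem_span_pair.1 hP
  have hm : ∀ (i : Fin 2) (p : MvPolynomial (Fin 2) ℂ), ∃ p',
      IsWeightedHomogeneous wt p' (k + wt i - d) ∧
      weightedHomogeneousComponent wt k (p * pderiv i Q) = p' * pderiv i Q := by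
    intro i p
    have hlt := hiso.wt_lt hwt hQ i
    have hq : IsWeightedHomogeneous wt (pderiv i Q) (d - wt i) := hQ.pderiv (by omega)
    obtain ⟨p', h1, h2⟩ := component_map (w := wt) (w' := wt) (d := d - wt i)
      (LinearMap.mulRight ℂ (pderiv i Q)) (fun k p hp => hp.mul hq) (k + wt i - d) p
    refine ⟨p', h1, ?_⟩
    rw [show k + wt i - d + (d - wt i) = k by omega] at h2
    exact h2
  obtain ⟨a', ha1, ha2⟩ := hm 0 a
  obtain ⟨b', hb1, hb2⟩ := hm 1 b
  refine ⟨![a', b'], ?_, ?_⟩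
  · intro i; fin_cases i
    · exact ha1
    · exact hb1
  · rw [← hab, map_add, ha2, hb2]; simp

/-- Weighted homogeneous polynomials of large weight lie in the Jacobian ideal. -/
theorem mem_jac_of_large (hwt : ∀ i, 0 < wt i) (d : ℕ)
    (hiso : Iso Q) : ∃ M, d ≤ M ∧ ∀ k, M ≤ k → ∀ P, IsWeightedHomogeneous wt P k → P ∈ jac Q := by
  obtain ⟨N0, hN0⟩ := hiso.exists_pow_mem (I := jac Q) pderiv_mem_jac 0
  obtain ⟨N1, hN1⟩ := hiso.exists_pow_mem (I := jac Q) pderiv_mem_jac 1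
  refine ⟨d + N0 * wt 0 + N1 * wt 1, by omega, fun k hk P hP => ?_⟩
  rw [P.as_sum]
  refine Ideal.sum_mem _ fun m hm => ?_
  have hw : Finsupp.weight wt m = k := hP (mem_support_iff.1 hm)
  rw [Finsupp.weight_eq_sum, Fin.sum_univ_two] at hw
  simp only [smul_eq_mul] at hw
  have key : N0 ≤ m 0 ∨ N1 ≤ m 1 := by
    by_contra hcon
    push Not at hcon
    have h0 := Nat.mul_lt_mul_of_pos_right hcon.1 (hwt 0)
    have h1 := Nat.mul_lt_mul_of_pos_right hcon.2 (hwt 1)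
    omega
  have hdvd : ∀ (i : Fin 2) N, N ≤ m i →
      (X i : MvPolynomial (Fin 2) ℂ) ^ N ∣ monomial m (coeff m P) := by
    intro i N hN
    rw [X_pow_eq_monomial, monomial_dvd_monomial]
    refine ⟨Or.inr ?_, one_dvd _⟩
    simpa using hN
  rcases key with h | h
  · exact Ideal.mem_of_dvd _ (hdvd 0 N0 h) hN0
  · exact Ideal.mem_of_dvd _ (hdvd 1 N1 h) hN1

/-- Finitely many monomials of weight `> d`, linearly independent in the local algebra, that
span modulo the Jacobian ideal every weighted homogeneous polynomial of weight `> d`. -/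
theorem exists_basis (hwt : ∀ i, 0 < wt i) (hQ : IsWeightedHomogeneous wt Q d)
    (hiso : Iso Q) : ∃ (s : ℕ) (e : Fin s → (Fin 2 →₀ ℕ)),
      (∀ j, d < Finsupp.weight wt (e j)) ∧
      LinearIndependent ℂ (fun j => Ideal.Quotient.mk (jac Q) (monomial (e j) (1:ℂ))) ∧
      ∀ k, d < k → ∀ P, IsWeightedHomogeneous wt P k →
        ∃ (c : Fin s → ℂ) (a : Fin 2 → MvPolynomial (Fin 2) ℂ),
          (∀ i, IsWeightedHomogeneous wt (a i) (k + wt i - d)) ∧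
          P = ∑ j, C (c j) * monomial (e j) 1 + ∑ i, a i * pderiv i Q := by
  obtain ⟨M, hdM, hM⟩ := mem_jac_of_large hwt d hiso
  let T := {m : Fin 2 →₀ ℕ // d < Finsupp.weight wt m ∧ Finsupp.weight wt m < M}
  have : Finite T := by
    refine Set.Finite.subset (Finsupp.finite_of_nat_weight_lt wt (fun i => (hwt i).ne') M) ?_
    intro m hm
    exact hm.2
  let v : T → MvPolynomial (Fin 2) ℂ ⧸ jac Q := fun m =>
    Ideal.Quotient.mk (jac Q) (monomial m.1 (1:ℂ))
  obtain ⟨κ, a, ha, hspan, hli⟩ := exists_linearIndependent' ℂ v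
  have : Finite κ := Finite.of_injective a ha
  obtain ⟨s, ⟨eq⟩⟩ := Finite.exists_equiv_fin κ
  refine ⟨s, fun j => (a (eq.symm j)).1, fun j => (a (eq.symm j)).2.1,
    hli.comp eq.symm eq.symm.injective, ?_⟩
  intro k hk P hP
  have hspan2 : Submodule.span ℂ (Set.range (fun j => v (a (eq.symm j)))) =
      Submodule.span ℂ (Set.range v) := by
    rw [← hspan]
    congr 1
    exact eq.symm.surjective.range_comp (v ∘ a)
  have h1 : ∃ c : Fin s → ℂ,
      P - ∑ j, C (c j) * monomial (a (eq.symm j)).1 1 ∈ jac Q := by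
    by_cases hkM : M ≤ k
    · refine ⟨0, ?_⟩
      simpa using hM k hkM P hP
    · have h2 : Ideal.Quotient.mk (jac Q) P ∈ Submodule.span ℂ (Set.range v) := by
        have h4 : Ideal.Quotient.mk (jac Q) P =
            ∑ m ∈ P.support, Ideal.Quotient.mk (jac Q) (monomial m (coeff m P)) := by
          conv_lhs => rw [P.as_sum, map_sum]
        rw [h4]
        refine Submodule.sum_mem _ fun m hm => ?_
        have hw : Finsupp.weight wt m = k := hP (mem_support_iff.1 hm)
        have h3 : Ideal.Quotient.mk (jac Q) (monomial m (coeff m P)) =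
            coeff m P • v ⟨m, by omega, by omega⟩ := by
          rw [show monomial m (coeff m P) = coeff m P • monomial m (1:ℂ) by
            rw [smul_monomial, smul_eq_mul, mul_one]]
          rfl
        rw [h3]
        exact Submodule.smul_mem _ _ (Submodule.subset_span ⟨_, rfl⟩)
      rw [← hspan2, Submodule.mem_span_range_iff_exists_fun] at h2
      obtain ⟨c, hc⟩ := h2
      refine ⟨c, ?_⟩
      rw [← Ideal.Quotient.eq, ← hc, map_sum]
      refine Finset.sum_congr rfl fun j _ => ?_
      rw [← smul_eq_C_mul]
      rfl
  obtain ⟨c, hc⟩ := h1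
  obtain ⟨b, hb1, hb2⟩ := jac_component hwt hQ hiso hk.le hc
  refine ⟨fun j => if Finsupp.weight wt (a (eq.symm j)).1 = k then c j else 0, b, hb1, ?_⟩
  rw [← hb2, map_sub, hP.weightedHomogeneousComponent_same, map_sum, ← sub_eq_iff_eq_add']
  congr 1
  refine Finset.sum_congr rfl fun j _ => ?_
  have hmon : IsWeightedHomogeneous wt (monomial (a (eq.symm j)).1 (1:ℂ))
    (Finsupp.weight wt (a (eq.symm j)).1) := isWeightedHomogeneous_monomial wt _ _ rfl
  rw [weightedHomogeneousComponent_C_mul]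
  beta_reduce
  by_cases h : Finsupp.weight wt (a (eq.symm j)).1 = k
  · rw [if_pos h, ← h, hmon.weightedHomogeneousComponent_same]
  · rw [if_neg h, hmon.weightedHomogeneousComponent_ne _ (Ne.symm h)]; simp
end

/-! ### Weighted changes of coordinates -/

section
variable {Q : MvPolynomial (Fin 2) ℂ} {wt : Fin 2 → ℕ} {d : ℕ}

/-- Linear induction on weighted homogeneous polynomials: it suffices to treat monomials. -/
theorem WH_induction {p : MvPolynomial (Fin 2) ℂ → Prop} {k : ℕ} (h0 : p 0)
    (hadd : ∀ P R, p P → p R → p (P + R)) (hC : ∀ c P, p P → p (C c * P))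
    (hm : ∀ m, Finsupp.weight wt m = k → p (monomial m 1)) {P : MvPolynomial (Fin 2) ℂ}
    (hP : IsWeightedHomogeneous wt P k) : p P := by
  rw [P.as_sum]
  refine Finset.sum_induction _ p hadd h0 fun m hm' => ?_
  have := hC (coeff m P) _ (hm m (hP (mem_support_iff.1 hm')))
  rwa [C_mul_monomial, mul_one] at this

/-- Induction on monomials, one variable at a time, keeping track of the weight. -/
theorem monomial_ind {p : ℕ → MvPolynomial (Fin 2) ℂ → Prop} (h1 : p 0 1)
    (hX : ∀ i k P, p k P → p (k + wt i) (P * X i)) (m : Fin 2 →₀ ℕ) :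
    p (Finsupp.weight wt m) (monomial m 1) := by
  have key : ∀ k P, p k P → p (k + Finsupp.weight wt m) (P * monomial m 1) := by
    induction m using Finsupp.induction_linear with
    | zero => intro k P h; simpa using h
    | add f g hf hg =>
      intro k P h
      have := hg _ _ (hf _ _ h)
      rwa [mul_assoc, monomial_mul, one_mul, add_assoc, ← map_add] at this
    | single i n =>
      induction n with
      | zero => intro k P h; simpa using h
      | succ n ih =>
        intro k P h
        have := hX i _ _ (ih _ _ h)
        rw [mul_assoc, X, monomial_mul, one_mul, ← Finsupp.single_add] at this
        convert this using 1
        simp only [Finsupp.weight_single, smul_eq_mul]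
        ring
  simpa using key 0 1 h1

theorem WOrd.comp_poly {ψ : (Fin 2 → ℂ) → Fin 2 → ℂ}
    (hψ : ∀ i, WOrd wt (wt i) (fun z => ψ z i)) {k : ℕ} {P : MvPolynomial (Fin 2) ℂ}
    (hP : IsWeightedHomogeneous wt P k) : WOrd wt k (fun z => eval (ψ z) P) := by
  refine WH_induction (p := fun P => WOrd wt k (fun z => eval (ψ z) P)) ?_ ?_ ?_ ?_ hP
  · simpa using WOrd.zero
  · intro P R h1 h2; simpa using WOrd.add _ _ h1 h2
  · intro c P h; simpa using h.const_mul c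
  · rintro m rfl
    refine monomial_ind (wt := wt) (p := fun k P => WOrd wt k (fun z => eval (ψ z) P)) ?_ ?_ m
    · exact WOrd.of_analytic (by simpa using analyticAt_const)
    · intro i k P h; simpa using h.mul (hψ i)

/-- Substitution of germs of order at least the weights preserves the weighted order. -/
theorem WOrd.comp_map (hwt : ∀ i, 0 < wt i) {ψ : (Fin 2 → ℂ) → Fin 2 → ℂ}
    (hψ : ∀ i, WOrd wt (wt i) (fun z => ψ z i)) {n : ℕ} {Φ : (Fin 2 → ℂ) → ℂ}
    (h : WOrd wt n Φ) : WOrd wt n (fun z => Φ (ψ z)) := by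
  have han : AnalyticAt ℂ ψ 0 := by
    rw [analyticAt_pi_iff]; exact fun i => (hψ i).analyticAt
  have h0 : ψ 0 = 0 := funext fun i => WOrd.apply_zero (n := 0) hwt ((hψ i).mono (hwt i))
  have ht : Tendsto ψ (𝓝 0) (𝓝 0) := by
    have := han.continuousAt.tendsto; rwa [h0] at this
  induction h with
  | term k P Ψ hP hk hΨ =>
    refine ((WOrd.comp_poly hψ hP).mono hk).mul_analytic ?_
    exact AnalyticAt.comp (g := Ψ) (f := ψ) (by rwa [h0]) han
  | add Φ Ψ h1 h2 ih1 ih2 => exact WOrd.add _ _ ih1 ih2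
  | congr Φ Ψ h1 h ih => exact WOrd.congr _ _ ih (ht.eventually h)

/-- First- and second-order Taylor estimates for a weighted homogeneous polynomial under a
displacement `u` that raises weights by `m`. -/
theorem taylor_order {u : (Fin 2 → ℂ) → Fin 2 → ℂ} {m : ℕ} (hm : 1 ≤ m)
    (hu : ∀ i, WOrd wt (wt i + m) (fun z => u z i)) {k : ℕ} {P : MvPolynomial (Fin 2) ℂ}
    (hP : IsWeightedHomogeneous wt P k) :
    WOrd wt (k + m) (fun z => eval (z + u z) P - eval z P) ∧
    WOrd wt (k + m + 1)
      (fun z => eval (z + u z) P - eval z P - ∑ i, eval z (pderiv i P) * u z i) := by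
  have hX : ∀ i, WOrd wt (wt i) (fun z => z i) := by
    intro i
    simpa using WOrd.poly (n := wt i) (isWeightedHomogeneous_X ℂ wt i) le_rfl
  refine WH_induction (p := fun P => WOrd wt (k + m) (fun z => eval (z + u z) P - eval z P) ∧
    WOrd wt (k + m + 1)
      (fun z => eval (z + u z) P - eval z P - ∑ i, eval z (pderiv i P) * u z i)) ?_ ?_ ?_ ?_ hP
  · simpa using ⟨WOrd.zero, WOrd.zero⟩
  · intro P R h1 h2
    refine ⟨(WOrd.add _ _ h1.1 h2.1).congr' fun z => ?_,
      (WOrd.add _ _ h1.2 h2.2).congr' fun z => ?_⟩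
    · simp only [map_add]; ring
    · simp only [map_add, Fin.sum_univ_two]; ring
  · intro c P h
    refine ⟨(h.1.const_mul c).congr' fun z => ?_, (h.2.const_mul c).congr' fun z => ?_⟩
    · simp only [map_mul, eval_C]; ring
    · simp only [map_mul, eval_C, Fin.sum_univ_two, pderiv_C_mul]; ring
  · rintro m' rfl
    have := monomial_ind (wt := wt) (p := fun k P => IsWeightedHomogeneous wt P k ∧
      WOrd wt (k + m) (fun z => eval (z + u z) P - eval z P) ∧
      WOrd wt (k + m + 1)
        (fun z => eval (z + u z) P - eval z P - ∑ i, eval z (pderiv i P) * u z i)) ?_ ?_ m'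
    · exact this.2
    · refine ⟨isWeightedHomogeneous_one ℂ wt, ?_⟩
      simpa using ⟨WOrd.zero, WOrd.zero⟩
    · rintro i k P ⟨hP, h1, h2⟩
      refine ⟨hP.mul (isWeightedHomogeneous_X ℂ wt i), ?_, ?_⟩
      · have a1 := (h1.mul (hX i))
        have a2 := h1.mul (hu i)
        have a3 := (WOrd.poly (n := k) hP le_rfl).mul (hu i)
        refine (WOrd.add _ _ (WOrd.add _ _ (a1.mono (m := k + wt i + m) (by omega))
          (a2.mono (by omega))) (a3.mono (by omega))).congr' fun z => ?_
        simp only [map_mul, eval_X, Pi.add_apply]; ring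
      · have a1 := (h2.mul (hX i))
        have a2 := h1.mul (hu i)
        refine (WOrd.add _ _ (a1.mono (m := k + wt i + m + 1) (by omega))
          (a2.mono (by omega))).congr' fun z => ?_
        fin_cases i <;>
        · simp [pderiv_X]; ring

/-- Inverse function theorem in the form needed here. -/
theorem biholo_of_det {ψ : (Fin 2 → ℂ) → Fin 2 → ℂ} (hψ : AnalyticAt ℂ ψ 0) (h0 : ψ 0 = 0)
    (hinj : ∀ x, fderiv ℂ ψ 0 x = 0 → x = 0) : ∃ ι, IsGermBiholo ψ ι := by
  have hinj' : Function.Injective (fderiv ℂ ψ 0).toLinearMap := by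
    rw [← LinearMap.ker_eq_bot, LinearMap.ker_eq_bot']
    exact hinj
  let e : (Fin 2 → ℂ) ≃L[ℂ] (Fin 2 → ℂ) :=
    (LinearEquiv.ofInjectiveEndo _ hinj').toContinuousLinearEquiv
  have he : HasFDerivAt ψ (e : (Fin 2 → ℂ) →L[ℂ] (Fin 2 → ℂ)) 0 := by
    have h2 : (e : (Fin 2 → ℂ) →L[ℂ] (Fin 2 → ℂ)) = fderiv ℂ ψ 0 :=
      ContinuousLinearMap.ext fun x => rfl
    rw [h2]
    exact hψ.differentiableAt.hasFDerivAt
  have hc : ContDiffAt ℂ ⊤ ψ 0 := hψ.contDiffAt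
  have h1 : (⊤ : WithTop ℕ∞) ≠ 0 := by simp
  have hs : HasStrictFDerivAt ψ (e : (Fin 2 → ℂ) →L[ℂ] (Fin 2 → ℂ)) 0 :=
    hc.hasStrictFDerivAt' he h1
  refine ⟨hc.localInverse he h1, hψ, ?_, h0, ?_, ?_, ?_⟩
  · have := hc.to_localInverse he h1
    rw [h0] at this
    exact this.analyticAt
  · have := hc.localInverse_apply_image he h1
    rwa [h0] at this
  · exact hs.eventually_left_inverse
  · have := hs.eventually_right_inverse
    rwa [h0] at this

theorem IsGermBiholo.comp {φ ι φ' ι' : (Fin 2 → ℂ) → Fin 2 → ℂ} (h : IsGermBiholo φ ι)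
    (h' : IsGermBiholo φ' ι') : IsGermBiholo (fun z => φ (φ' z)) (fun z => ι' (ι z)) := by
  obtain ⟨a1, a2, a3, a4, a5, a6⟩ := h
  obtain ⟨b1, b2, b3, b4, b5, b6⟩ := h'
  have t1 : Tendsto φ' (𝓝 0) (𝓝 0) := by simpa [b3] using b1.continuousAt.tendsto
  have t2 : Tendsto ι (𝓝 0) (𝓝 0) := by simpa [a4] using a2.continuousAt.tendsto
  refine ⟨AnalyticAt.comp (g := φ) (f := φ') (by rwa [b3]) b1,
    AnalyticAt.comp (g := ι') (f := ι) (by rwa [a4]) a2, by simp only [b3, a3], by simp only [a4, b4], ?_, ?_⟩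
  · filter_upwards [t1.eventually a5, b5] with z h1 h2
    rw [h1, h2]
  · filter_upwards [t2.eventually b6, a6] with z h1 h2
    rw [h1, h2]

theorem IsGermBiholo.symm {φ ι : (Fin 2 → ℂ) → Fin 2 → ℂ} (h : IsGermBiholo φ ι) :
    IsGermBiholo ι φ :=
  ⟨h.2.1, h.1, h.2.2.2.1, h.2.2.1, h.2.2.2.2.2, h.2.2.2.2.1⟩

/-- `z ↦ z + u(z)` is a local biholomorphism when `u` strictly raises weights: its linear part
is unipotent. -/
theorem biholo_of_order (hwt : ∀ i, 0 < wt i) {u : (Fin 2 → ℂ) → Fin 2 → ℂ}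
    (hu : ∀ i, WOrd wt (wt i + 1) (fun z => u z i)) :
    ∃ ι, IsGermBiholo (fun z => z + u z) ι := by
  have hua : AnalyticAt ℂ u 0 := by
    rw [analyticAt_pi_iff]; exact fun i => (hu i).analyticAt
  have hu0 : u 0 = 0 := funext fun i => WOrd.apply_zero hwt (hu i)
  have hpd : ∀ i j, wt j ≤ wt i → fderiv ℂ u 0 (Pi.single j 1) i = 0 := by
    intro i j hij
    have h1 := WOrd.apply_zero (n := 0) hwt (((hu i).pd j).mono (by omega))
    rw [_root_.pd] at h1
    rw [fderiv_apply hua.differentiableAt i] at h1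
    exact h1
  refine biholo_of_det (analyticAt_id.add hua) (by simp [hu0]) fun x hx => ?_
  have hx' : x + fderiv ℂ u 0 x = 0 := by
    have := (hasFDerivAt_id (𝕜 := ℂ) (0 : Fin 2 → ℂ)).add hua.differentiableAt.hasFDerivAt
    have h2 := this.fderiv
    have h3 : fderiv ℂ (fun z => z + u z) 0 = ContinuousLinearMap.id ℂ _ + fderiv ℂ u 0 := h2
    rw [h3] at hx
    simpa using hx
  have hdec : ∀ i, fderiv ℂ u 0 x i =
      x 0 * fderiv ℂ u 0 (Pi.single 0 1) i + x 1 * fderiv ℂ u 0 (Pi.single 1 1) i := by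
    intro i
    have : x = x 0 • (Pi.single 0 1 : Fin 2 → ℂ) + x 1 • (Pi.single 1 1 : Fin 2 → ℂ) := by
      ext j; fin_cases j <;> simp
    conv_lhs => rw [this]
    simp
  have e0 := congrFun hx' 0
  have e1 := congrFun hx' 1
  simp only [Pi.add_apply, Pi.zero_apply, hdec, hpd 0 0 le_rfl, hpd 1 1 le_rfl, mul_zero,
    zero_add, add_zero] at e0 e1
  ext i
  rcases le_total (wt 0) (wt 1) with h | h
  · rw [hpd 1 0 h, mul_zero, add_zero] at e1
    rw [e1, zero_mul, add_zero] at e0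
    fin_cases i
    · exact e0
    · exact e1
  · rw [hpd 0 1 h, mul_zero, add_zero] at e0
    rw [e0, zero_mul, add_zero] at e1
    fin_cases i
    · exact e0
    · exact e1
end

/-! ### Normal form modulo high order -/

section
variable {Q : MvPolynomial (Fin 2) ℂ} {wt : Fin 2 → ℕ} {d : ℕ}

/-- The candidate normal form `Q + Σ c_j e_j`. -/
noncomputable def nf (Q : MvPolynomial (Fin 2) ℂ) {s : ℕ} (e : Fin s → (Fin 2 →₀ ℕ))
    (c : Fin s → ℂ) : MvPolynomial (Fin 2) ℂ :=
  Q + ∑ j, C (c j) * monomial (e j) 1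

theorem eval_nf {s : ℕ} (e : Fin s → (Fin 2 →₀ ℕ)) (c : Fin s → ℂ) (z : Fin 2 → ℂ) :
    eval z (nf Q e c) = eval z Q + ∑ j, c j * eval z (monomial (e j) (1:ℂ)) := by
  unfold nf
  rw [map_add, map_sum]
  simp only [map_mul, eval_C]

/-- Removal of the terms of finite order: up to a change of coordinates, `f` agrees with a
normal form up to any prescribed order. -/
theorem prenormal (hwt : ∀ i, 0 < wt i) (hQ : IsWeightedHomogeneous wt Q d) {s : ℕ}
    {e : Fin s → (Fin 2 →₀ ℕ)} (he : ∀ j, d < Finsupp.weight wt (e j))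
    (hb : ∀ k, d < k → ∀ P, IsWeightedHomogeneous wt P k →
        ∃ (c : Fin s → ℂ) (a : Fin 2 → MvPolynomial (Fin 2) ℂ),
          (∀ i, IsWeightedHomogeneous wt (a i) (k + wt i - d)) ∧
          P = ∑ j, C (c j) * monomial (e j) 1 + ∑ i, a i * pderiv i Q)
    {f : (Fin 2 → ℂ) → ℂ} (hf : WOrd wt (d + 1) (fun z => f z - eval z Q)) (N : ℕ) :
    ∃ φ ι c, IsGermBiholo φ ι ∧
      WOrd wt (d + 1 + N) (fun z => f (φ z) - eval z (nf Q e c)) := by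
  induction N with
  | zero =>
    refine ⟨fun z => z, fun z => z, 0, ⟨analyticAt_id, analyticAt_id, rfl, rfl,
      by simp, by simp⟩, ?_⟩
    simpa [nf] using hf
  | succ N ih =>
    obtain ⟨φ, ι, c, hφ, hO⟩ := ih
    obtain ⟨P, hP, hO1⟩ := hO.lead hwt
    obtain ⟨c', a, ha, hPa⟩ := hb _ (by omega) P hP
    set u : (Fin 2 → ℂ) → Fin 2 → ℂ := fun z i => - eval z (a i) with hudef
    have hu : ∀ i, WOrd wt (wt i + (N + 1)) (fun z => u z i) := fun i =>
      (WOrd.poly (ha i) (by omega)).neg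
    have hX : ∀ i, WOrd wt (wt i) (fun z => z i) := by
      intro i
      simpa using WOrd.poly (n := wt i) (isWeightedHomogeneous_X ℂ wt i) le_rfl
    have hψ : ∀ i, WOrd wt (wt i) (fun z => (z + u z) i) := fun i =>
      WOrd.add _ _ (hX i) ((hu i).mono (by omega))
    obtain ⟨ι', hι'⟩ := biholo_of_order hwt (u := u) (fun i => (hu i).mono (by omega))
    refine ⟨_, _, fun j => c j + c' j, hφ.comp hι', ?_⟩
    have t1 := WOrd.comp_map hwt hψ hO1
    have t2 := (taylor_order (by omega) hu hQ).2
    have t3 : WOrd wt (d + 1 + N + 1) (fun z => ∑ j, c j *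
        (eval (z + u z) (monomial (e j) (1:ℂ)) - eval z (monomial (e j) (1:ℂ)))) := by
      refine WOrd.sum _ fun j _ => WOrd.const_mul ?_ _
      exact (taylor_order (by omega) hu
        (isWeightedHomogeneous_monomial wt (e j) (1:ℂ) rfl)).1.mono (by have := he j; omega)
    have t4 := (taylor_order (by omega) hu hP).1
    refine (WOrd.add _ _ (WOrd.add _ _ t1 (t2.mono (by omega)))
      (WOrd.add _ _ t3 (t4.mono (by omega)))).congr' fun z => ?_
    simp only [eval_nf]
    have hPz : eval z P = ∑ j, c' j * eval z (monomial (e j) (1:ℂ)) +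
        ∑ i, eval z (a i) * eval z (pderiv i Q) := by
      conv_lhs => rw [hPa]
      simp only [map_add, map_sum, map_mul, eval_C]
    rw [hPz]
    simp only [hudef, Fin.sum_univ_two, add_mul, mul_sub, Finset.sum_add_distrib,
      Finset.sum_sub_distrib]
    ring

/-- Polynomial Taylor formula with remainder of order two. -/
theorem taylor_poly (P : MvPolynomial (Fin 2) ℂ) :
    ∃ K : Fin 2 → Fin 2 → MvPolynomial (Fin 2 ⊕ Fin 2) ℂ, ∀ z u : Fin 2 → ℂ,
      eval (z + u) P = eval z P + ∑ i, eval z (pderiv i P) * u i +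
        ∑ i, ∑ j, u i * u j * eval (Sum.elim z u) (K i j) := by
  induction P using MvPolynomial.induction_on with
  | C c => exact ⟨0, fun z u => by simp⟩
  | add P R h1 h2 =>
    obtain ⟨K, hK⟩ := h1
    obtain ⟨L, hL⟩ := h2
    refine ⟨fun i j => K i j + L i j, fun z u => ?_⟩
    simp only [map_add, hK, hL, Fin.sum_univ_two]
    ring
  | mul_X P k h =>
    obtain ⟨K, hK⟩ := h
    refine ⟨fun i j => K i j * (X (Sum.inl k) + X (Sum.inr k)) +
      if j = k then rename Sum.inl (pderiv i P) else 0, fun z u => ?_⟩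
    have hr : ∀ R : MvPolynomial (Fin 2) ℂ, eval (Sum.elim z u) (rename Sum.inl R) = eval z R := by
      intro R; rw [eval_rename]; rfl
    rw [map_mul, hK]
    fin_cases k <;>
    · simp [pderiv_X, hr, Fin.sum_univ_two]
      ring

/-- Elements of `𝔪·(g₁,g₂)²`, for germs `g₁, g₂`. -/
def InSq (g : Fin 2 → (Fin 2 → ℂ) → ℂ) (R : (Fin 2 → ℂ) → ℂ) : Prop :=
  ∃ r : Fin 2 → Fin 2 → (Fin 2 → ℂ) → ℂ, (∀ k l, AnalyticAt ℂ (r k l) 0) ∧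
    (∀ k l, r k l 0 = 0) ∧ ∀ᶠ z in 𝓝 0, R z = ∑ k, ∑ l, r k l z * g k z * g l z

theorem InSq.add {g R S} (h1 : InSq g R) (h2 : InSq g S) : InSq g (fun z => R z + S z) := by
  obtain ⟨r, hr, hr0, hr1⟩ := h1
  obtain ⟨s, hs, hs0, hs1⟩ := h2
  refine ⟨fun k l z => r k l z + s k l z, fun k l => (hr k l).add (hs k l), fun k l => ?_, ?_⟩
  · simp only [hr0, hs0, add_zero]
  · filter_upwards [hr1, hs1] with z h1 h2
    rw [h1, h2]; simp only [Fin.sum_univ_two]; ring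

theorem InSq.mul {g R S} (h1 : InSq g R) (h2 : AnalyticAt ℂ S 0) :
    InSq g (fun z => S z * R z) := by
  obtain ⟨r, hr, hr0, hr1⟩ := h1
  refine ⟨fun k l z => S z * r k l z, fun k l => h2.mul (hr k l), fun k l => ?_, ?_⟩
  · simp only [hr0, mul_zero]
  · filter_upwards [hr1] with z h1
    rw [h1]; simp only [Fin.sum_univ_two]; ring

theorem InSq.congr {g R S} (h1 : InSq g R) (h : ∀ᶠ z in 𝓝 0, R z = S z) : InSq g S := by
  obtain ⟨r, hr, hr0, hr1⟩ := h1
  refine ⟨r, hr, hr0, ?_⟩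
  filter_upwards [hr1, h] with z h1 h2
  rw [← h2, h1]

end

/-! ### Germs of high order lie in the square of the Jacobian ideal -/

section
variable {Q : MvPolynomial (Fin 2) ℂ} {wt : Fin 2 → ℕ} {d : ℕ}

/-- Weighted homogeneous polynomials of large weight lie in the square of the Jacobian ideal,
with weighted homogeneous coefficients of positive weight. -/
theorem jac_sq (hwt : ∀ i, 0 < wt i) (hQ : IsWeightedHomogeneous wt Q d) (hiso : Iso Q) :
    ∃ M, ∀ n, M ≤ n → ∀ P, IsWeightedHomogeneous wt P n →
      ∃ a : Fin 2 → Fin 2 → MvPolynomial (Fin 2) ℂ,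
        (∀ k l, ∃ w, w + 2 * d = n + wt k + wt l ∧ 0 < w ∧ IsWeightedHomogeneous wt (a k l) w) ∧
        P = ∑ k, ∑ l, a k l * pderiv k Q * pderiv l Q := by
  obtain ⟨M, hdM, hM⟩ := mem_jac_of_large hwt d hiso
  have one : ∀ n, M ≤ n → ∀ P, IsWeightedHomogeneous wt P n →
      ∃ a : Fin 2 → MvPolynomial (Fin 2) ℂ,
        (∀ i, IsWeightedHomogeneous wt (a i) (n + wt i - d)) ∧ P = ∑ i, a i * pderiv i Q := by
    intro n hn P hP
    obtain ⟨a, h1, h2⟩ := jac_component hwt hQ hiso (hdM.trans hn) (hM n hn P hP)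
    rw [hP.weightedHomogeneousComponent_same] at h2
    exact ⟨a, h1, h2⟩
  refine ⟨M + 2 * d + 1, fun n hn P hP => ?_⟩
  obtain ⟨a, ha, hPa⟩ := one n (by omega) P hP
  have h2 := fun i => one _ (by omega) (a i) (ha i)
  choose b hb hab using h2
  refine ⟨fun k l => b k l, fun k l => ⟨_, ?_, ?_, hb k l⟩, ?_⟩
  · omega
  · omega
  · rw [hPa, Fin.sum_univ_two]
    conv_lhs => rw [hab 0, hab 1]
    simp only [Fin.sum_univ_two]
    ring

/-- Modulo `𝔪·(g₁,g₂)²` the weighted order of `R` can be raised by one. -/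
theorem inSq_step (hwt : ∀ i, 0 < wt i) (hQ : IsWeightedHomogeneous wt Q d) (hiso : Iso Q)
    {g : Fin 2 → (Fin 2 → ℂ) → ℂ}
    (hg : ∀ k, WOrd wt (d + 1 - wt k) (fun z => g k z - eval z (pderiv k Q))) {n : ℕ}
    (hM : ∀ P, IsWeightedHomogeneous wt P n →
      ∃ a : Fin 2 → Fin 2 → MvPolynomial (Fin 2) ℂ,
        (∀ k l, ∃ w, w + 2 * d = n + wt k + wt l ∧ 0 < w ∧ IsWeightedHomogeneous wt (a k l) w) ∧
        P = ∑ k, ∑ l, a k l * pderiv k Q * pderiv l Q)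
    {R : (Fin 2 → ℂ) → ℂ} (hR : WOrd wt n R) :
    ∃ S, WOrd wt (n + 1) S ∧ InSq g (fun z => R z - S z) := by
  obtain ⟨P, hP, hO⟩ := hR.lead hwt
  obtain ⟨a, ha, hPa⟩ := hM P hP
  have hlt := hiso.wt_lt hwt hQ
  have hQo : ∀ k, WOrd wt (d - wt k) (fun z => eval z (pderiv k Q)) := fun k =>
    WOrd.poly (hQ.pderiv (by have := hlt k; omega)) le_rfl
  have hgo : ∀ k, WOrd wt (d - wt k) (g k) := fun k =>
    (WOrd.add _ _ ((hg k).mono (by omega)) (hQo k)).congr' fun z => by ring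
  have hterm : ∀ k l, WOrd wt (n + 1) (fun z => eval z (a k l) *
      (eval z (pderiv k Q) * eval z (pderiv l Q) - g k z * g l z)) := by
    intro k l
    obtain ⟨w, hw, -, hwa⟩ := ha k l
    have hk := hlt k
    have hl := hlt l
    have ha' := WOrd.poly hwa le_rfl
    have h1 := ha'.mul ((hg k).mul (hgo l))
    have h2 := ha'.mul ((hQo k).mul (hg l))
    refine (WOrd.add _ _ (h1.mono (by omega)) (h2.mono (by omega))).neg.congr' fun z => ?_
    ring
  refine ⟨fun z => (R z - eval z P) + ∑ k, ∑ l, eval z (a k l) *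
      (eval z (pderiv k Q) * eval z (pderiv l Q) - g k z * g l z),
    WOrd.add _ _ hO (WOrd.sum _ fun k _ => WOrd.sum _ fun l _ => hterm k l),
    fun k l z => eval z (a k l), fun k l => analyticAt_eval _ _, fun k l => ?_, ?_⟩
  · obtain ⟨w, hw, hw0, hwa⟩ := ha k l
    exact eval_zero_of_pos hwt hw0 hwa
  · refine Eventually.of_forall fun z => ?_
    have hPz : eval z P = ∑ k, ∑ l, eval z (a k l) * eval z (pderiv k Q) * eval z (pderiv l Q) := by
      conv_lhs => rw [hPa]
      simp only [map_sum, map_mul]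
    beta_reduce
    rw [hPz]
    simp only [Fin.sum_univ_two]
    ring

/-- Modulo `𝔪·(g₁,g₂)²` the weighted order of `R` can be raised arbitrarily. -/
theorem inSq_iterate (hwt : ∀ i, 0 < wt i) (hQ : IsWeightedHomogeneous wt Q d) (hiso : Iso Q)
    {g : Fin 2 → (Fin 2 → ℂ) → ℂ}
    (hg : ∀ k, WOrd wt (d + 1 - wt k) (fun z => g k z - eval z (pderiv k Q))) {M : ℕ}
    (hM : ∀ n, M ≤ n → ∀ P, IsWeightedHomogeneous wt P n →
      ∃ a : Fin 2 → Fin 2 → MvPolynomial (Fin 2) ℂ,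
        (∀ k l, ∃ w, w + 2 * d = n + wt k + wt l ∧ 0 < w ∧ IsWeightedHomogeneous wt (a k l) w) ∧
        P = ∑ k, ∑ l, a k l * pderiv k Q * pderiv l Q)
    {R : (Fin 2 → ℂ) → ℂ} (hR : WOrd wt M R) (C : ℕ) :
    ∃ S, WOrd wt (M + C) S ∧ InSq g (fun z => R z - S z) := by
  induction C with
  | zero =>
    refine ⟨R, hR, fun _ _ _ => 0, fun _ _ => analyticAt_const, fun _ _ => rfl, ?_⟩
    simp
  | succ C ih =>
    obtain ⟨S, hS, h1⟩ := ih
    obtain ⟨S', hS', h2⟩ := inSq_step hwt hQ hiso hg (hM _ (by omega)) hS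
    exact ⟨S', hS', (h1.add h2).congr (Eventually.of_forall fun z => by ring)⟩

/-- Germs of order larger than `L(wt₁+wt₂)` lie in `𝔪·(z₁^L, z₂^L)`. -/
theorem split_powers {L : ℕ} {S : (Fin 2 → ℂ) → ℂ}
    (hS : WOrd wt (L * wt 0 + L * wt 1 + 1) S) :
    ∃ ε : Fin 2 → (Fin 2 → ℂ) → ℂ, (∀ i, AnalyticAt ℂ (ε i) 0) ∧ (∀ i, ε i 0 = 0) ∧
      ∀ᶠ z in 𝓝 0, S z = ∑ i, ε i z * z i ^ L := by
  induction hS with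
  | term k P Ψ hP hk hΨ =>
    have hpol : ∃ A : Fin 2 → MvPolynomial (Fin 2) ℂ, (∀ i, eval 0 (A i) = 0) ∧
        P = ∑ i, A i * X i ^ L := by
      refine WH_induction (p := fun P => ∃ A : Fin 2 → MvPolynomial (Fin 2) ℂ,
        (∀ i, eval 0 (A i) = 0) ∧ P = ∑ i, A i * X i ^ L) ?_ ?_ ?_ ?_ hP
      · exact ⟨0, by simp, by simp⟩
      · rintro P R ⟨A, hA, rfl⟩ ⟨B, hB, rfl⟩
        refine ⟨fun i => A i + B i, fun i => by rw [map_add, hA, hB, add_zero], ?_⟩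
        simp only [Fin.sum_univ_two]; ring
      · rintro c P ⟨A, hA, rfl⟩
        refine ⟨fun i => C c * A i, fun i => by rw [map_mul, hA, mul_zero], ?_⟩
        simp only [Fin.sum_univ_two]; ring
      · intro m hm
        have hw := hm
        rw [Finsupp.weight_eq_sum, Fin.sum_univ_two] at hw
        simp only [smul_eq_mul] at hw
        have key : ∃ i, L ≤ m i ∧ m ≠ Finsupp.single i L := by
          by_contra hcon
          push Not at hcon
          by_cases h0 : L ≤ m 0
          · rw [hcon 0 h0, Finsupp.weight_single, smul_eq_mul] at hm
            omega
          · by_cases h1 : L ≤ m 1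
            · rw [hcon 1 h1, Finsupp.weight_single, smul_eq_mul] at hm
              omega
            · push Not at h0 h1
              have := Nat.mul_le_mul_right (wt 0) h0.le
              have := Nat.mul_le_mul_right (wt 1) h1.le
              omega
        obtain ⟨i, hi, hne⟩ := key
        have hle : Finsupp.single i L ≤ m := by simpa using hi
        refine ⟨Pi.single i (monomial (m - Finsupp.single i L) 1), fun j => ?_, ?_⟩
        · by_cases hj : j = i
          · subst hj
            rw [Pi.single_eq_same]
            have hne' : m - Finsupp.single j L ≠ 0 := fun h =>
              hne (le_antisymm (tsub_eq_zero_iff_le.1 h) hle)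
            rw [MvPolynomial.eval_zero, MvPolynomial.constantCoeff_monomial, if_neg hne']
          · rw [Pi.single_eq_of_ne hj, map_zero]
        · rw [Finset.sum_eq_single i, Pi.single_eq_same, X_pow_eq_monomial, monomial_mul,
            one_mul, tsub_add_cancel_of_le hle]
          · intro j _ hj
            rw [Pi.single_eq_of_ne hj, zero_mul]
          · simp
    obtain ⟨A, hA, hPA⟩ := hpol
    refine ⟨fun i z => eval z (A i) * Ψ z, fun i => (analyticAt_eval _ _).mul hΨ, fun i => ?_, ?_⟩
    · simp only [hA, zero_mul]
    · refine Eventually.of_forall fun z => ?_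
      rw [hPA]
      simp only [Fin.sum_univ_two, map_add, map_mul, map_pow, eval_X]
      ring
  | add Φ Ψ h1 h2 ih1 ih2 =>
    obtain ⟨ε, a1, a2, a3⟩ := ih1
    obtain ⟨δ, b1, b2, b3⟩ := ih2
    refine ⟨fun i z => ε i z + δ i z, fun i => (a1 i).add (b1 i), fun i => ?_, ?_⟩
    · simp only [a2, b2, add_zero]
    · filter_upwards [a3, b3] with z h1 h2
      rw [h1, h2]; simp only [Fin.sum_univ_two]; ring
  | congr Φ Ψ h1 h ih =>
    obtain ⟨ε, a1, a2, a3⟩ := ih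
    refine ⟨ε, a1, a2, ?_⟩
    filter_upwards [a3, h] with z h1 h2
    rw [← h2, h1]

/-- Finite determinacy, ideal form: germs of large order lie in `𝔪·(g₁,g₂)²` whenever `g` has
the same leading part as the gradient of `Q`. The monomials `z₁^L, z₂^L` satisfy a linear system
`(1 - ε) z^L ∈ 𝔪·(g₁,g₂)²` with `ε(0) = 0`, which is solved explicitly. -/
theorem inSq_of_order (hwt : ∀ i, 0 < wt i) (hQ : IsWeightedHomogeneous wt Q d) (hiso : Iso Q) :
    ∃ M, ∀ g : Fin 2 → (Fin 2 → ℂ) → ℂ,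
    (∀ k, WOrd wt (d + 1 - wt k) (fun z => g k z - eval z (pderiv k Q))) →
    ∀ R : (Fin 2 → ℂ) → ℂ, WOrd wt M R → InSq g R := by
  obtain ⟨L, hM⟩ := jac_sq hwt hQ hiso
  refine ⟨L * wt 0 + L * wt 1 + 1, fun g hg R hR => ?_⟩
  have hpow : ∀ i : Fin 2, ∃ ε : Fin 2 → (Fin 2 → ℂ) → ℂ, (∀ i, AnalyticAt ℂ (ε i) 0) ∧
      (∀ i, ε i 0 = 0) ∧ InSq g (fun z => z i ^ L - ∑ j, ε j z * z j ^ L) := by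
    intro i
    have hX : WOrd wt L (fun z => z i ^ L) := by
      have h1 := (isWeightedHomogeneous_X ℂ wt i).pow L
      have h2 := WOrd.poly (n := L) h1 (by
        rw [smul_eq_mul]; exact Nat.le_mul_of_pos_right L (hwt i))
      simpa using h2
    obtain ⟨S, hS, hin⟩ := inSq_iterate hwt hQ hiso hg hM hX (L * wt 0 + L * wt 1 + 1)
    obtain ⟨ε, h1, h2, h3⟩ := split_powers (L := L) (hS.mono (by omega))
    refine ⟨ε, h1, h2, hin.congr ?_⟩
    filter_upwards [h3] with z hz
    rw [hz]
  choose ε hε hε0 hin using hpow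
  set D : (Fin 2 → ℂ) → ℂ := fun z => (1 - ε 0 0 z) * (1 - ε 1 1 z) - ε 0 1 z * ε 1 0 z with hD
  have hDan : AnalyticAt ℂ D 0 :=
    ((analyticAt_const.sub (hε 0 0)).mul (analyticAt_const.sub (hε 1 1))).sub
      ((hε 0 1).mul (hε 1 0))
  have hD0 : D 0 = 1 := by simp [hD, hε0]
  have hDne : ∀ᶠ z in 𝓝 0, D z ≠ 0 :=
    hDan.continuousAt.eventually_ne (by rw [hD0]; exact one_ne_zero)
  have hDinv : AnalyticAt ℂ (fun z => (D z)⁻¹) 0 := hDan.inv (by rw [hD0]; exact one_ne_zero)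
  have hone : ∀ i, AnalyticAt ℂ (fun z => 1 - ε i i z) 0 := fun i =>
    analyticAt_const.sub (hε i i)
  have hx : ∀ i : Fin 2, InSq g (fun z => z i ^ L) := by
    have h0 := (((hin 0).mul (hone 1)).add
      ((hin 1).mul (hε 0 1))).mul hDinv
    have h1 := (((hin 1).mul (hone 0)).add
      ((hin 0).mul (hε 1 0))).mul hDinv
    intro i
    fin_cases i
    · refine h0.congr ?_
      filter_upwards [hDne] with z hz
      rw [inv_mul_eq_iff_eq_mul₀ hz]
      simp only [Fin.sum_univ_two, hD, Fin.zero_eta]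
      ring
    · refine h1.congr ?_
      filter_upwards [hDne] with z hz
      rw [inv_mul_eq_iff_eq_mul₀ hz]
      simp only [Fin.sum_univ_two, hD, Fin.mk_one]
      ring
  obtain ⟨δ, h1, -, h3⟩ := split_powers hR
  refine (((hx 0).mul (h1 0)).add ((hx 1).mul (h1 1))).congr ?_
  filter_upwards [h3] with z hz
  rw [hz, Fin.sum_univ_two]
end

/-! ### Finite determinacy and the normal form -/

section
variable {Q : MvPolynomial (Fin 2) ℂ} {wt : Fin 2 → ℕ} {d : ℕ}

/-- Holomorphic implicit function theorem, with identity partial derivative. -/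
theorem ift_vector {E V : Type*} [NormedAddCommGroup E] [NormedSpace ℂ E] [CompleteSpace E]
    [NormedAddCommGroup V] [NormedSpace ℂ V] [CompleteSpace V]
    {G : E × V → V} {e : E} {x : V} (hG : AnalyticAt ℂ G (e, x)) (h0 : G (e, x) = 0)
    (hD : HasFDerivAt (fun t => G (e, t)) (ContinuousLinearMap.id ℂ V) x) :
    ∃ ψ : E → V, AnalyticAt ℂ ψ e ∧ ψ e = x ∧ ∀ᶠ y in 𝓝 e, G (y, ψ y) = 0 := by
  have cdf : ContDiffAt ℂ ⊤ G (e, x) := hG.contDiffAt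
  have pn : (⊤ : WithTop ℕ∞) ≠ 0 := by simp
  have hinr : HasFDerivAt (fun t : V => ((e, t) : E × V)) (.inr ℂ E V) x :=
    hasFDerivAt_prodMk_right e x
  have h1 := (hG.differentiableAt.hasFDerivAt.comp x hinr).unique hD
  have if₂ : (fderiv ℂ G (e, x) ∘L .inr ℂ E V).IsInvertible := by
    rw [h1]
    exact ⟨ContinuousLinearEquiv.refl ℂ V, rfl⟩
  have hself := cdf.implicitFunction_apply_self pn if₂
  have han : AnalyticAt ℂ (cdf.implicitFunction pn if₂) e :=
    (cdf.contDiffAt_implicitFunction pn if₂).analyticAt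
  refine ⟨cdf.implicitFunction pn if₂, han, hself, ?_⟩
  have hev := cdf.eventually_apply_eq_iff_implicitFunction pn if₂
  rw [h0] at hev
  have ht : Tendsto (fun y => (y, cdf.implicitFunction pn if₂ y)) (𝓝 e) (𝓝 (e, x)) := by
    refine tendsto_id.prodMk_nhds ?_
    have := han.continuousAt.tendsto
    rwa [hself] at this
  filter_upwards [ht.eventually hev] with y hy
  exact hy.2 rfl

theorem hasFDerivAt_mul_zero {E : Type*} [NormedAddCommGroup E] [NormedSpace ℂ E]
    {f g : E → ℂ} {x : E} (hf : DifferentiableAt ℂ f x) (hg : DifferentiableAt ℂ g x)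
    (hf0 : f x = 0) (hg0 : g x = 0) :
    HasFDerivAt (fun y => f y * g y) (0 : E →L[ℂ] ℂ) x := by
  have := hf.hasFDerivAt.mul hg.hasFDerivAt
  exact this.congr_fderiv (by ext; simp [hf0, hg0])

set_option maxHeartbeats 1000000 in
/-- Solvability of the matrix equation `t + Σ t_{ik} t_{jl} K_{ij}(z, g·t) = r`. -/
theorem solve_matrix (K : Fin 2 → Fin 2 → MvPolynomial (Fin 2 ⊕ Fin 2) ℂ)
    {g : Fin 2 → (Fin 2 → ℂ) → ℂ} (hg : ∀ k, AnalyticAt ℂ (g k) 0) (hg0 : ∀ k, g k 0 = 0)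
    {r : Fin 2 → Fin 2 → (Fin 2 → ℂ) → ℂ} (hr : ∀ k l, AnalyticAt ℂ (r k l) 0)
    (hr0 : ∀ k l, r k l 0 = 0) :
    ∃ t : Fin 2 → Fin 2 → (Fin 2 → ℂ) → ℂ, (∀ k l, AnalyticAt ℂ (t k l) 0) ∧
      (∀ k l, t k l 0 = 0) ∧ ∀ᶠ z in 𝓝 0, ∀ k l, t k l z + ∑ i, ∑ j, t i k z * t j l z *
        eval (Sum.elim z (fun m => ∑ n, g n z * t m n z)) (K i j) = r k l z := by
  let U : (Fin 2 → ℂ) × (Fin 2 × Fin 2 → ℂ) → Fin 2 ⊕ Fin 2 → ℂ := fun x =>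
    Sum.elim x.1 (fun m => ∑ n, g n x.1 * x.2 (m, n))
  let G : (Fin 2 → ℂ) × (Fin 2 × Fin 2 → ℂ) → (Fin 2 × Fin 2 → ℂ) := fun x a =>
    x.2 (a.1, a.2) + ∑ i, ∑ j, x.2 (i, a.1) * x.2 (j, a.2) * eval (U x) (K i j) - r a.1 a.2 x.1
  have hcoord : ∀ (a : Fin 2 × Fin 2) (p : (Fin 2 → ℂ) × (Fin 2 × Fin 2 → ℂ)),
      AnalyticAt ℂ (fun x : (Fin 2 → ℂ) × (Fin 2 × Fin 2 → ℂ) => x.2 a) p := fun a p =>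
    ((ContinuousLinearMap.proj a : (Fin 2 × Fin 2 → ℂ) →L[ℂ] ℂ).comp
      (ContinuousLinearMap.snd ℂ (Fin 2 → ℂ) (Fin 2 × Fin 2 → ℂ))).analyticAt p
  have hfst : ∀ {h : (Fin 2 → ℂ) → ℂ}, AnalyticAt ℂ h 0 →
      AnalyticAt ℂ (fun x : (Fin 2 → ℂ) × (Fin 2 × Fin 2 → ℂ) => h x.1) (0, 0) := fun {h} hh =>
    AnalyticAt.comp (g := h) (f := Prod.fst) hh analyticAt_fst
  have hU : AnalyticAt ℂ U (0, 0) := by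
    rw [analyticAt_pi_iff]
    rintro (i | m)
    · exact hfst (analyticAt_coord i 0)
    · exact Finset.analyticAt_fun_sum _ fun n _ => (hfst (hg n)).mul (hcoord (m, n) _)
  have hG : AnalyticAt ℂ G (0, 0) := by
    rw [analyticAt_pi_iff]
    rintro ⟨k, l⟩
    refine ((hcoord (k, l) _).add (Finset.analyticAt_fun_sum _ fun i _ =>
      Finset.analyticAt_fun_sum _ fun j _ =>
        ((hcoord (i, k) _).mul (hcoord (j, l) _)).mul ?_)).sub (hfst (hr k l))
    exact AnalyticAt.comp (g := fun y => eval y (K i j)) (f := U) (analyticAt_eval _ _) hU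
  have hG0 : G (0, 0) = 0 := by
    funext a
    simp [G, hr0]
  have hU0 : ∀ t : (Fin 2 × Fin 2 → ℂ), U (0, t) = 0 := by
    intro t; funext a
    rcases a with i | m
    · rfl
    · simp [U, hg0]
  have hD : HasFDerivAt (fun t => G (0, t)) (ContinuousLinearMap.id ℂ (Fin 2 × Fin 2 → ℂ)) 0 := by
    rw [hasFDerivAt_pi']
    rintro ⟨k, l⟩
    have hq : HasFDerivAt (fun t : (Fin 2 × Fin 2 → ℂ) => ∑ i, ∑ j, t (i, k) * t (j, l) * eval 0 (K i j))
        (∑ i : Fin 2, ∑ j : Fin 2, (0 : (Fin 2 × Fin 2 → ℂ) →L[ℂ] ℂ)) 0 := by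
      refine HasFDerivAt.fun_sum fun i _ => HasFDerivAt.fun_sum fun j _ => ?_
      have h1 : HasFDerivAt (fun t : (Fin 2 × Fin 2 → ℂ) => t (i, k) * t (j, l)) (0 : (Fin 2 × Fin 2 → ℂ) →L[ℂ] ℂ) 0 :=
        hasFDerivAt_mul_zero (f := fun t : (Fin 2 × Fin 2 → ℂ) => t (i, k)) (g := fun t : (Fin 2 × Fin 2 → ℂ) => t (j, l))
          (by fun_prop) (by fun_prop) rfl rfl
      have h2 := h1.mul_const (eval 0 (K i j))
      exact h2.congr_fderiv (by ext; simp)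
    have h3 := ((hasFDerivAt_apply (𝕜 := ℂ) (F' := fun _ : Fin 2 × Fin 2 => ℂ)
      (k, l) (0 : (Fin 2 × Fin 2 → ℂ))).add hq)
    simp only [Finset.sum_const_zero, add_zero] at h3
    have h4 : (fun t : (Fin 2 × Fin 2 → ℂ) => G (0, t) (k, l)) =
        fun t => t (k, l) + ∑ i, ∑ j, t (i, k) * t (j, l) * eval 0 (K i j) := by
      funext t
      simp only [G, hU0, hr0, sub_zero]
    rw [h4]
    exact h3
  obtain ⟨ψ, h1, h2, h3⟩ := ift_vector hG hG0 hD
  refine ⟨fun k l z => ψ z (k, l), fun k l => (analyticAt_pi_iff.1 h1) (k, l),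
    fun k l => by simp [h2], ?_⟩
  filter_upwards [h3] with z hz k l
  have := congrFun hz (k, l)
  exact sub_eq_zero.1 this

/-- Finite determinacy: adding to `p` an element of `𝔪·(∂₁p,∂₂p)²` amounts to a change of
coordinates. -/
theorem tougeron (p : MvPolynomial (Fin 2) ℂ) (hp0 : ∀ k, eval 0 (pderiv k p) = 0)
    {R : (Fin 2 → ℂ) → ℂ} (hR : InSq (fun k z => eval z (pderiv k p)) R) :
    ∃ φ ι, IsGermBiholo φ ι ∧ ∀ᶠ z in 𝓝 0, eval (φ z) p = eval z p + R z := by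
  obtain ⟨r, hr, hr0, hrR⟩ := hR
  obtain ⟨K, hK⟩ := taylor_poly p
  obtain ⟨t, ht, ht0, hte⟩ := solve_matrix K (g := fun k z => eval z (pderiv k p))
    (fun k => analyticAt_eval _ _) hp0 hr hr0
  set u : (Fin 2 → ℂ) → Fin 2 → ℂ := fun z m => ∑ n, eval z (pderiv n p) * t m n z with hu
  have hua : AnalyticAt ℂ u 0 := by
    rw [analyticAt_pi_iff]
    intro m
    exact Finset.analyticAt_fun_sum _ fun n _ => (analyticAt_eval _ _).mul (ht m n)
  have hu0 : u 0 = 0 := by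
    funext m; simp [hu, ht0]
  have hud : HasFDerivAt u (0 : (Fin 2 → ℂ) →L[ℂ] (Fin 2 → ℂ)) 0 := by
    rw [hasFDerivAt_pi']
    intro m
    have h1 : HasFDerivAt (fun z => ∑ n, eval z (pderiv n p) * t m n z)
        (∑ n : Fin 2, (0 : (Fin 2 → ℂ) →L[ℂ] ℂ)) 0 :=
      HasFDerivAt.fun_sum fun n _ => hasFDerivAt_mul_zero
        (analyticAt_eval _ _).differentiableAt (ht m n).differentiableAt (hp0 n) (ht0 m n)
    simp only [Finset.sum_const_zero] at h1
    rw [ContinuousLinearMap.comp_zero]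
    exact h1
  have hfd : fderiv ℂ (fun z => z + u z) 0 = ContinuousLinearMap.id ℂ (Fin 2 → ℂ) := by
    have h1 := (hasFDerivAt_id (𝕜 := ℂ) (0 : Fin 2 → ℂ)).add hud
    rw [add_zero] at h1
    exact h1.fderiv
  obtain ⟨ι, hι⟩ := biholo_of_det (ψ := fun z => z + u z) (analyticAt_id.add hua)
    (by simp [hu0]) (fun x hx => by rw [hfd] at hx; exact hx)
  refine ⟨_, ι, hι, ?_⟩
  filter_upwards [hrR, hte] with z h1 h2
  rw [hK, h1]
  simp only [← h2]
  simp only [hu, Fin.sum_univ_two]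
  ring

/-- Every germ with weighted homogeneous leading part `Q` is, in suitable coordinates, a
normal form `Q + Σ c_j e_j`. -/
theorem normal_form (hwt : ∀ i, 0 < wt i) (hQ : IsWeightedHomogeneous wt Q d) (hiso : Iso Q)
    {f : (Fin 2 → ℂ) → ℂ} (hf : WOrd wt (d + 1) (fun z => f z - eval z Q)) :
    ∃ φ ι, IsGermBiholo φ ι ∧ ∃ (s : ℕ) (e : Fin s → (Fin 2 →₀ ℕ)) (c : Fin s → ℂ),
      (∀ j, d < Finsupp.weight wt (e j)) ∧
      LinearIndependent ℂ (fun j => Ideal.Quotient.mk (jac Q) (monomial (e j) (1:ℂ))) ∧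
      ∀ᶠ z in 𝓝 0, f z = eval (φ z) (nf Q e c) := by
  obtain ⟨s, e, he, hli, hb⟩ := exists_basis hwt hQ hiso
  obtain ⟨M, hM⟩ := inSq_of_order hwt hQ hiso
  obtain ⟨φ, ι, c, hφ, hO⟩ := prenormal hwt hQ he hb hf M
  have hgrad : ∀ k, WOrd wt (d + 1 - wt k)
      (fun z => eval z (pderiv k (nf Q e c)) - eval z (pderiv k Q)) := by
    intro k
    have h1 : WOrd wt (d + 1) (fun z => eval z (∑ j, C (c j) * monomial (e j) (1:ℂ))) := by
      simp only [map_sum]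
      refine WOrd.sum _ fun j _ => WOrd.poly (k := Finsupp.weight wt (e j)) ?_ (he j)
      exact (isWeightedHomogeneous_monomial wt (e j) (1:ℂ) rfl).C_mul _
    refine (h1.pd k).congr' fun z => ?_
    rw [pd_eval]
    simp only [nf, map_add]
    ring
  have hlt := hiso.wt_lt hwt hQ
  have hp0 : ∀ k, eval (0 : Fin 2 → ℂ) (pderiv k (nf Q e c)) = 0 := by
    intro k
    have h1 := WOrd.apply_zero (n := 0) hwt ((hgrad k).mono (by have := hlt k; omega))
    rw [(hiso 0).2 rfl k, sub_zero] at h1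
    exact h1
  obtain ⟨φ', ι', hφ', heq⟩ := tougeron (nf Q e c) hp0 (hM _ hgrad _ (hO.mono (by omega)))
  refine ⟨_, _, hφ'.comp hφ.symm, s, e, c, he, hli, ?_⟩
  have ht : Tendsto ι (𝓝 0) (𝓝 0) := by
    have := hφ.2.1.continuousAt.tendsto
    rwa [hφ.2.2.2.1] at this
  filter_upwards [ht.eventually heq, hφ.2.2.2.2.2] with z h1 h2
  rw [h1, h2]
  ring
end

end

open MvPolynomial in
/-- **Theorem 1.** Normal form for singular Levi-flat hypersurfaces defined by the
vanishing of the real part of a quasihomogeneous polynomial with isolated singularity,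
up to monomials of higher quasihomogeneous degree from the local algebra of `Q`. -/
theorem stmt_0 (a b d : ℕ) (ha : 0 < a) (hb : 0 < b) (hd : 0 < d) (hab : Nat.gcd a b = 1)
    (Q : MvPolynomial (Fin 2) ℂ)
    -- `Q` is quasihomogeneous of type `(a,b)` and quasihomogeneous degree `d`
    (hQqh : ∀ m ∈ Q.support, a * m 0 + b * m 1 = d)
    -- `Q` has an isolated singularity at `0 ∈ ℂ²`
    (hQcrit : ∀ i, eval (0 : Fin 2 → ℂ) (pderiv i Q) = 0)
    (hQsing : ∀ᶠ z in 𝓝 (0 : Fin 2 → ℂ), (∀ i, eval z (pderiv i Q) = 0) → z = 0)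
    (F H : (Fin 2 → ℂ) → ℝ)
    (hF : AnalyticAt ℝ F 0) (hH : AnalyticAt ℝ H 0)
    -- `F(z) = Re(Q(z)) + H(z, z̄)`
    (hFeq : ∀ᶠ z in 𝓝 (0 : Fin 2 → ℂ), F z = (eval z Q).re + H z)
    -- every monomial `z^μ z̄^ν` of the Taylor series of `H` has weighted degree
    -- `a(μ₁+ν₁) + b(μ₂+ν₂) > d`
    (hHord : ∃ r > (0:ℝ), ∀ z : Fin 2 → ℂ, ‖z‖ < r →
      Tendsto (fun lam : ℝ => H (fun i => (lam : ℂ) ^ (if i = 0 then a else b) * z i) / lam ^ d)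
        (𝓝[>] 0) (𝓝 0))
    -- `M = {F = 0}` is a singular hypersurface at `0`
    (hF0 : F 0 = 0) (hsing : fderiv ℝ F 0 = 0)
    (hirr : IrreducibleRGerm F)
    (hLF : LeviFlatGerm F) :
    ∃ φ ι : (Fin 2 → ℂ) → (Fin 2 → ℂ), IsGermBiholo φ ι ∧
    ∃ (s : ℕ) (e : Fin s → (Fin 2 →₀ ℕ)) (c : Fin s → ℂ),
      -- the monomials `e j` have quasihomogeneous degree strictly greater than `d`
      (∀ j, d < a * (e j) 0 + b * (e j) 1) ∧
      -- their residue classes in the local algebra `A_Q` are `ℂ`-linearly independent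
      LinearIndependent ℂ (fun j => Ideal.Quotient.mk
        (Ideal.span {pderiv 0 Q, pderiv 1 Q}) (monomial (e j) (1:ℂ))) ∧
      -- `φ(M) = {Re(Q + Σ c_j e_j) = 0}` as germs of sets at `0`
      (∀ᶠ z in 𝓝 (0 : Fin 2 → ℂ),
        (F z = 0 ↔ (eval (φ z) Q + ∑ j, c j * eval (φ z) (monomial (e j) (1:ℂ))).re = 0)) := by
  set wt : Fin 2 → ℕ := fun i => if i = 0 then a else b with hwtdef
  have hwt : ∀ i, 0 < wt i := by
    intro i
    simp only [hwtdef]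
    split_ifs <;> assumption
  have hweight : ∀ m : Fin 2 →₀ ℕ, Finsupp.weight wt m = a * m 0 + b * m 1 := by
    intro m
    rw [Finsupp.weight_apply, Finsupp.sum_fintype _ _ (by simp)]
    simp [Fin.sum_univ_two, hwtdef, mul_comm]
  have hQ : IsWeightedHomogeneous wt Q d := fun m hm => by
    rw [hweight]
    exact hQqh m (mem_support_iff.2 hm)
  have hiso : Iso Q := iso_of_germ hwt hQ hQcrit hQsing
  obtain ⟨Φ, hΦ, hFΦ, hsw⟩ := exists_FC (wt := wt) hwt hH hFeq hHord
  obtain ⟨f, hf, hFf⟩ := exists_holo hwt hd hQ hiso hΦ hFΦ hsw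
    (claim hwt hd hQ hiso hF hLF hΦ hFΦ)
  obtain ⟨φ, ι, hφ, s, e, c, hdeg, hli, hnf⟩ := normal_form hwt hQ hiso hf
  refine ⟨φ, ι, hφ, s, e, c, fun j => by simpa [hweight] using hdeg j, hli, ?_⟩
  filter_upwards [hFf, hnf] with z h1 h2
  rw [h1, h2, eval_nf]
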